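/- arXiv:2012.10864 — 2 statements merged into one kernel-verified Lean document; each statement's English description precedes it below -/
import Mathlib

section
/- Existence of the scale kernel: under (H0) there exists a nonnegative function k₋₁ on [−1,∞), continuous on (−1,∞), locally integrable on [−1,∞), and of sub-exponential growth (for every ε > 0, e^{−εx} k₋₁(x) → 0 as x → ∞), such that ∫_0^∞ e^{−ξy} k₋₁(y−1) dy = ξ/ψ(ξ) for every complex ξ with Re ξ > 0. Moreover, denoting by k₋₁⁺ the extension of k₋₁ by zero to (−∞,−1), and setting kₙ⁺ := I₊^{n+1} k₋₁⁺ for integers n ≥ 0 where I₊f(x) = ∫_{−∞}^x f(y) dy, one has for every integer n ≥ −1 and every x ∈ ℝ: (Φ ⋆ kₙ⁺)(x) = ((1+x)^{n+1}/(n+1)!) · 1_{{x > −1}}, where ⋆ denotes convolution on ℝ and 0! = 1. -/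
open MeasureTheory Set Filter Topology

noncomputable section

/-- The tail `φ((y, ∞))` of the Lévy measure `φ`. -/
def levyTail (φ : Measure ℝ) (y : ℝ) : ℝ := (φ (Ioi y)).toReal

/-- The function `Φ(x) = ∫_x^∞ φ((y,∞)) dy` for `x > 0`, and `0` for `x ≤ 0`. -/
def PhiFn (φ : Measure ℝ) (x : ℝ) : ℝ :=
  if 0 < x then ∫ y in Ioi x, levyTail φ y else 0

/-- The Laplace exponent `ψ(ξ) = ξ² ∫_0^∞ e^{-ξ x} Φ(x) dx`. -/
def psiFn (φ : Measure ℝ) (ξ : ℂ) : ℂ :=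
  ξ ^ 2 * ∫ x in Ioi (0 : ℝ), Complex.exp (-ξ * (x : ℂ)) * (PhiFn φ x : ℂ)

/-- Assumption (H0): `φ` is a nonnegative Borel measure on `(0,∞)` with
`∫ (z² ∧ z) φ(dz) < ∞` and `∫_{(0,1)} z φ(dz) = ∞`. -/
def H0 (φ : Measure ℝ) : Prop :=
  φ (Iic 0) = 0 ∧
  (∫⁻ z in Ioi (0 : ℝ), ENNReal.ofReal (min (z ^ 2) z) ∂φ) < ⊤ ∧
  (∫⁻ z in Ioo (0 : ℝ) 1, ENNReal.ofReal z ∂φ) = ⊤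

/-- Iterated antiderivatives: `kIter k 0 = k₋₁⁺` and `kIter k (n+1) = I₊ (kIter k n)`,
so that `kₙ⁺ = kIter k (n+1)` for `n ≥ -1`. -/
def kIter (k : ℝ → ℝ) : ℕ → ℝ → ℝ
  | 0 => k
  | m + 1 => fun x => ∫ y in Iic x, kIter k m y

/-- The solution `u` of the discrete convolution equation `∑ k ≤ n, a (n - k) * u k = 1`. -/
def renewalSeq (a : ℕ → ℝ) (n : ℕ) : ℝ :=
  (1 - ∑ k : Fin n, a (n - k) * renewalSeq a k) / a 0
termination_by n
decreasing_by exact k.2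

theorem sum_mul_renewalSeq {a : ℕ → ℝ} (ha : 0 < a 0) (n : ℕ) :
    ∑ k ∈ Finset.range (n + 1), a (n - k) * renewalSeq a k = 1 := by
  rw [Finset.sum_range_succ, Nat.sub_self, renewalSeq, Finset.sum_range]
  field_simp
  ring

/-- The partial sums `∑ k ≤ n, u k`. -/
def cumSum (u : ℕ → ℝ) (n : ℕ) : ℝ := ∑ k ∈ Finset.range (n + 1), u k

theorem cumSum_succ (u : ℕ → ℝ) (n : ℕ) : cumSum u (n + 1) = cumSum u n + u (n + 1) :=
  Finset.sum_range_succ _ _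

/-- A nonnegative, nonincreasing, convex sequence with positive first term, together with a
solution `u` of the associated discrete convolution equation. -/
structure DiscreteSonine (a u : ℕ → ℝ) : Prop where
  pos : 0 < a 0
  nonneg : ∀ n, 0 ≤ a n
  anti : Antitone a
  convex : Antitone fun n => a n - a (n + 1)
  sum_eq : ∀ n, ∑ k ∈ Finset.range (n + 1), a (n - k) * u k = 1

namespace DiscreteSonine

variable {a u : ℕ → ℝ} (H : DiscreteSonine a u)
include H

theorem mul_succ_eq (n : ℕ) :
    a 0 * u (n + 1) = ∑ k ∈ Finset.range (n + 1), (a (n - k) - a (n - k + 1)) * u k := by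
  have h1 := H.sum_eq n
  have h2 := H.sum_eq (n + 1)
  rw [Finset.sum_range_succ, Nat.sub_self] at h2
  have h3 : ∑ k ∈ Finset.range (n + 1), a (n + 1 - k) * u k
      = ∑ k ∈ Finset.range (n + 1), a (n - k + 1) * u k := by
    refine Finset.sum_congr rfl fun k hk => ?_
    have := Finset.mem_range.1 hk
    rw [show n + 1 - k = n - k + 1 by omega]
  simp only [sub_mul, Finset.sum_sub_distrib]
  linarith

theorem zero_pos : 0 < u 0 := by
  have h := H.sum_eq 0
  simp only [zero_add, Finset.sum_range_one, Nat.sub_zero] at h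
  have := H.pos
  by_contra hu
  nlinarith

theorem u_nonneg (n : ℕ) : 0 ≤ u n := by
  induction n using Nat.strong_induction_on with
  | _ n ih =>
    cases n with
    | zero => exact H.zero_pos.le
    | succ n =>
      have h : 0 ≤ a 0 * u (n + 1) := by
        rw [H.mul_succ_eq n]
        refine Finset.sum_nonneg fun k hk => mul_nonneg ?_ (ih k (Finset.mem_range.1 hk))
        exact sub_nonneg.2 (H.anti (Nat.le_succ _))
      exact (mul_nonneg_iff_of_pos_left H.pos).1 h

theorem cumSum_mono : Monotone (cumSum u) :=
  monotone_nat_of_le_succ fun n => by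
    rw [cumSum_succ]; exact le_add_of_nonneg_right (H.u_nonneg _)

theorem cumSum_pos (n : ℕ) : 0 < cumSum u n :=
  lt_of_lt_of_le (by simpa [cumSum] using H.zero_pos) (H.cumSum_mono (Nat.zero_le n))

omit H in
theorem sum_mul_eq_abel (f u : ℕ → ℝ) (n : ℕ) :
    ∑ k ∈ Finset.range (n + 1), f (n - k) * u k
      = f 0 * cumSum u n
        - ∑ j ∈ Finset.range n, (f j - f (j + 1)) * cumSum u (n - 1 - j) := by
  induction n generalizing f with
  | zero => simp [cumSum]
  | succ n ih =>
    have h1 : ∑ k ∈ Finset.range (n + 1 + 1), f (n + 1 - k) * u k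
        = (∑ k ∈ Finset.range (n + 1), f (n - k + 1) * u k) + f 0 * u (n + 1) := by
      rw [Finset.sum_range_succ, Nat.sub_self]
      congr 1
      refine Finset.sum_congr rfl fun k hk => ?_
      have := Finset.mem_range.1 hk
      rw [show n + 1 - k = n - k + 1 by omega]
    rw [h1, ih fun j => f (j + 1), Finset.sum_range_succ', cumSum_succ]
    have h2 : ∑ j ∈ Finset.range n, (f (j + 1) - f (j + 1 + 1)) * cumSum u (n + 1 - 1 - (j + 1))
        = ∑ j ∈ Finset.range n, (f (j + 1) - f (j + 1 + 1)) * cumSum u (n - 1 - j) := by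
      refine Finset.sum_congr rfl fun k hk => ?_
      rw [show n + 1 - 1 - (k + 1) = n - 1 - k by omega]
    rw [h2]
    simp only [Nat.add_sub_cancel, Nat.sub_zero, zero_add]
    ring

theorem ratio_eq (n : ℕ) :
    a 0 * (u (n + 1) / cumSum u n) = (a 0 - a 1) - ∑ j ∈ Finset.range n,
      ((a j - a (j + 1)) - (a (j + 1) - a (j + 1 + 1))) *
        (cumSum u (n - 1 - j) / cumSum u n) := by
  have h := H.mul_succ_eq n
  rw [sum_mul_eq_abel (fun j => a j - a (j + 1)) u n] at h
  rw [← mul_div_assoc, h, sub_div, Finset.sum_div]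
  have := (H.cumSum_pos n).ne'
  simp only [zero_add, mul_div_assoc, div_self this, mul_one]

/-- Log-concavity of the partial sums. -/
theorem ratio_antitone : Antitone fun n => u (n + 1) / cumSum u n := by
  refine antitone_nat_of_succ_le fun n => ?_
  induction n using Nat.strong_induction_on with
  | _ n ih =>
    have hle : ∀ i ≤ n, u (n + 1) / cumSum u n ≤ u (i + 1) / cumSum u i := by
      intro i hi
      obtain ⟨d, rfl⟩ := Nat.exists_eq_add_of_le hi
      clear hi
      induction d with
      | zero => exact le_rfl
      | succ d ihd =>
        exact (ih (i + d) (by omega)).trans (ihd fun m hm => ih m (by omega))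
    have key : a 0 * (u (n + 1 + 1) / cumSum u (n + 1)) ≤ a 0 * (u (n + 1) / cumSum u n) := by
      rw [H.ratio_eq, H.ratio_eq, Finset.sum_range_succ]
      have hd : ∀ j, 0 ≤ (a j - a (j + 1)) - (a (j + 1) - a (j + 1 + 1)) :=
        fun j => sub_nonneg.2 (H.convex (Nat.le_succ j))
      have hlast := mul_nonneg (hd n)
        (div_nonneg (H.cumSum_pos (n + 1 - 1 - n)).le (H.cumSum_pos (n + 1)).le)
      have hsum : ∑ j ∈ Finset.range n, ((a j - a (j + 1)) - (a (j + 1) - a (j + 1 + 1))) *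
            (cumSum u (n - 1 - j) / cumSum u n)
          ≤ ∑ j ∈ Finset.range n, ((a j - a (j + 1)) - (a (j + 1) - a (j + 1 + 1))) *
            (cumSum u (n + 1 - 1 - j) / cumSum u (n + 1)) := by
        refine Finset.sum_le_sum fun j hj => mul_le_mul_of_nonneg_left ?_ (hd j)
        have hj := Finset.mem_range.1 hj
        obtain ⟨i, rfl⟩ : ∃ i, n = i + j + 1 := ⟨n - 1 - j, by omega⟩
        rw [show i + j + 1 - 1 - j = i by omega, show i + j + 1 + 1 - 1 - j = i + 1 by omega]
        have h := hle i (by omega)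
        rw [div_le_div_iff₀ (H.cumSum_pos _) (H.cumSum_pos _)] at h ⊢
        rw [cumSum_succ u (i + j + 1), cumSum_succ u i]
        linarith
      linarith
    exact le_of_mul_le_mul_left key H.pos

theorem succ_eq (n : ℕ) : u (n + 1) = u (n + 1) / cumSum u n * cumSum u n :=
  (div_mul_cancel₀ _ (H.cumSum_pos n).ne').symm

theorem ratio_nonneg (n : ℕ) : 0 ≤ u (n + 1) / cumSum u n :=
  div_nonneg (H.u_nonneg _) (H.cumSum_pos n).le

theorem cumSum_le (n : ℕ) : a n * cumSum u n ≤ 1 := by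
  rw [← H.sum_eq n, cumSum, Finset.mul_sum]
  exact Finset.sum_le_sum fun k _ =>
    mul_le_mul_of_nonneg_right (H.anti (Nat.sub_le _ _)) (H.u_nonneg k)

theorem cumSum_block (n m : ℕ) : a m * (cumSum u (n + m + 1) - cumSum u n) ≤ 1 := by
  have h : cumSum u (n + m + 1) - cumSum u n = ∑ k ∈ Finset.Ico (n + 1) (n + m + 1 + 1), u k := by
    rw [Finset.sum_Ico_eq_sub _ (by omega)]; rfl
  rw [h, ← H.sum_eq (n + m + 1), Finset.mul_sum]
  calc ∑ k ∈ Finset.Ico (n + 1) (n + m + 1 + 1), a m * u k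
      ≤ ∑ k ∈ Finset.Ico (n + 1) (n + m + 1 + 1), a (n + m + 1 - k) * u k := by
        refine Finset.sum_le_sum fun k hk => ?_
        have := Finset.mem_Ico.1 hk
        exact mul_le_mul_of_nonneg_right (H.anti (by omega)) (H.u_nonneg k)
    _ ≤ _ := by
        refine Finset.sum_le_sum_of_subset_of_nonneg ?_
          fun k _ _ => mul_nonneg (H.nonneg _) (H.u_nonneg k)
        intro k hk
        have := Finset.mem_Ico.1 hk
        exact Finset.mem_range.2 (by omega)

theorem cumSum_le_linear (n m : ℕ) :
    a m * cumSum u n ≤ ((n : ℝ) + 1) / ((m : ℝ) + 1) + 1 := by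
  induction n using Nat.strong_induction_on with
  | _ n ih =>
    rcases le_or_gt n m with h | h
    · have h1 := H.cumSum_le m
      have h2 := mul_le_mul_of_nonneg_left (H.cumSum_mono h) (H.nonneg m)
      have : 0 ≤ ((n : ℝ) + 1) / ((m : ℝ) + 1) := by positivity
      linarith
    · obtain ⟨i, rfl⟩ : ∃ i, n = i + m + 1 := ⟨n - m - 1, by omega⟩
      have h1 := ih i (by omega)
      have h2 := H.cumSum_block i m
      have h3 : (((i + m + 1 : ℕ) : ℝ) + 1) / ((m : ℝ) + 1)
          = ((i : ℝ) + 1) / ((m : ℝ) + 1) + 1 := by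
        push_cast; field_simp; ring
      rw [h3]
      linarith

theorem le_sum_mul_cumSum (n : ℕ) :
    (n : ℝ) + 1 ≤ (∑ j ∈ Finset.range (n + 1), a j) * cumSum u n := by
  have h : ((n : ℝ) + 1) = ∑ i ∈ Finset.range (n + 1),
      ∑ k ∈ Finset.range (i + 1), a (i - k) * u k := by
    simp only [H.sum_eq]; simp
  rw [h, Finset.sum_comm' (t' := Finset.range (n + 1)) (s' := fun k => Finset.Ico k (n + 1))
    (by intro i k; simp only [Finset.mem_range, Finset.mem_Ico]; omega), cumSum, Finset.mul_sum]
  refine Finset.sum_le_sum fun k _ => ?_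
  rw [← Finset.sum_mul, Finset.sum_Ico_eq_sum_range]
  refine mul_le_mul_of_nonneg_right ?_ (H.u_nonneg k)
  simp only [Nat.add_sub_cancel_left]
  exact Finset.sum_le_sum_of_subset_of_nonneg (Finset.range_mono (Nat.sub_le _ _))
    fun j _ _ => H.nonneg j

theorem ratio_le (n m : ℕ) :
    ((m : ℝ) + 1) * (u (n + m + 1) / cumSum u (n + m)) * cumSum u n ≤ cumSum u (n + m + 1) := by
  set r := u (n + m + 1) / cumSum u (n + m) with hr
  have h : ∀ j ≤ m, ((j : ℝ) + 1) * r * cumSum u n ≤ cumSum u (n + j + 1) := by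
    intro j
    induction j with
    | zero =>
      intro hj
      have h1 : r ≤ u (n + 1) / cumSum u n := H.ratio_antitone (Nat.le_add_right n m)
      have h2 := mul_le_mul_of_nonneg_right h1 (H.cumSum_pos n).le
      rw [← H.succ_eq] at h2
      have := H.cumSum_pos n
      rw [add_zero, cumSum_succ]
      push_cast
      linarith
    | succ j ih =>
      intro hj
      have h0 := ih (by omega)
      have h1 : r ≤ u (n + j + 1 + 1) / cumSum u (n + j + 1) :=
        H.ratio_antitone (show n + j + 1 ≤ n + m by omega)
      have h2 := mul_le_mul_of_nonneg_right h1 (H.cumSum_pos (n + j + 1)).le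
      rw [← H.succ_eq] at h2
      have h3 : r * cumSum u n ≤ r * cumSum u (n + j + 1) :=
        mul_le_mul_of_nonneg_left (H.cumSum_mono (by omega)) (H.ratio_nonneg _)
      rw [show n + (j + 1) + 1 = n + j + 1 + 1 by omega, cumSum_succ]
      push_cast
      linarith
  exact h m le_rfl

theorem succ_sub_le (n : ℕ) : u (n + 2) - u (n + 1) ≤ u (n + 1) / cumSum u n * u (n + 1) := by
  have h1 := mul_le_mul_of_nonneg_right (H.ratio_antitone (Nat.le_succ n))
    (H.cumSum_pos (n + 1)).le
  simp only at h1
  rw [← H.succ_eq, cumSum_succ, mul_add, ← H.succ_eq] at h1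
  linarith

theorem modulus {p i l : ℕ} {U L : ℝ} (hp : p + l ≤ i + 1) (hl : 0 < l) (hL : 0 ≤ L)
    (hU : ∀ k, p ≤ k → k < p + 2 * l → u k ≤ U)
    (hstep : ∀ k, p ≤ k → k < i + 2 * l → u (k + 1) - u k ≤ L) :
    (u i - u (i + l)) * a l ≤
      2 * (L * (∑ j ∈ Finset.range (i + 1), a j) + a (i - p) * U) := by
  have hup : ∀ d k, p ≤ k → k + d ≤ i + 2 * l → u (k + d) - u k ≤ d * L := by
    intro d k hk
    induction d with
    | zero => intro _; simp
    | succ d ih =>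
      intro hd
      have h1 := ih (by omega)
      have h2 := hstep (k + d) (by omega) (by omega)
      rw [← add_assoc k d 1]
      push_cast
      linarith
  have e1 := H.sum_eq (i + 2 * l)
  have e2 := H.sum_eq i
  rw [← Finset.sum_range_add_sum_Ico _ (show p ≤ i + 1 by omega)] at e2
  rw [← Finset.sum_range_add_sum_Ico _ (show p + 2 * l ≤ i + 2 * l + 1 by omega),
    ← Finset.sum_range_add_sum_Ico _ (show p ≤ p + 2 * l by omega)] at e1
  have e3 : ∑ k ∈ Finset.Ico (p + 2 * l) (i + 2 * l + 1), a (i + 2 * l - k) * u k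
      = ∑ k ∈ Finset.Ico p (i + 1), a (i - k) * u (k + 2 * l) := by
    rw [show i + 2 * l + 1 = i + 1 + 2 * l by omega, ← Finset.sum_Ico_add']
    refine Finset.sum_congr rfl fun k _ => ?_
    rw [Nat.add_sub_add_right]
  have i1 : ∑ k ∈ Finset.range p, a (i + 2 * l - k) * u k
      ≤ ∑ k ∈ Finset.range p, a (i - k) * u k :=
    Finset.sum_le_sum fun k _ => mul_le_mul_of_nonneg_right (H.anti (by omega)) (H.u_nonneg k)
  have i2 : ∑ k ∈ Finset.Ico p (p + 2 * l), a (i + 2 * l - k) * u k ≤ 2 * l * (a (i - p) * U) := by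
    have h := Finset.sum_le_card_nsmul (Finset.Ico p (p + 2 * l))
      (fun k => a (i + 2 * l - k) * u k) (a (i - p) * U) fun k hk => by
        have hk := Finset.mem_Ico.1 hk
        exact mul_le_mul (H.anti (by omega)) (hU k hk.1 hk.2) (H.u_nonneg k) (H.nonneg _)
    simpa [Nat.card_Ico] using h
  set A := ∑ j ∈ Finset.range (i + 1), a j with hA
  have i3 : ∑ k ∈ Finset.Ico p (i + 1), a (i - k) * (-(2 * l * L))
      + ∑ k ∈ Finset.Ico (i + 1 - l) (i + 1), a (i - k) * (u i - u (i + l))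
      ≤ ∑ k ∈ Finset.Ico p (i + 1), a (i - k) * (u k - u (k + 2 * l)) := by
    rw [← Finset.sum_Ico_consecutive _ (show p ≤ i + 1 - l by omega)
        (show i + 1 - l ≤ i + 1 by omega),
      ← Finset.sum_Ico_consecutive _ (show p ≤ i + 1 - l by omega)
        (show i + 1 - l ≤ i + 1 by omega), add_assoc, ← Finset.sum_add_distrib]
    refine add_le_add (Finset.sum_le_sum fun k hk => ?_) (Finset.sum_le_sum fun k hk => ?_)
    · have hk := Finset.mem_Ico.1 hk
      refine mul_le_mul_of_nonneg_left ?_ (H.nonneg _)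
      have := hup (2 * l) k hk.1 (by omega)
      push_cast at this
      linarith
    · have hk := Finset.mem_Ico.1 hk
      rw [← mul_add]
      refine mul_le_mul_of_nonneg_left ?_ (H.nonneg _)
      obtain ⟨d, rfl⟩ := Nat.exists_eq_add_of_le (show k ≤ i by omega)
      obtain ⟨c, rfl⟩ := Nat.exists_eq_add_of_le (show d ≤ l by omega)
      have h1 := hup d k (by omega) (by omega)
      have h2 := hup c (k + d + (d + c)) (by omega) (by omega)
      rw [show k + d + (d + c) + c = k + 2 * (d + c) by ring] at h2
      have : 0 ≤ ((d : ℝ) + c) * L := by positivity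
      push_cast at *
      linarith
  have i4 : ∑ k ∈ Finset.Ico p (i + 1), a (i - k) ≤ A := by
    rw [hA, ← Finset.sum_range_reflect]
    refine (Finset.sum_le_sum_of_subset_of_nonneg (t := Finset.range (i + 1)) ?_
      fun k _ _ => H.nonneg _).trans_eq ?_
    · intro k hk
      exact Finset.mem_range.2 (Finset.mem_Ico.1 hk).2
    · refine Finset.sum_congr rfl fun k _ => ?_
      rw [Nat.add_sub_cancel]
  rw [← Finset.sum_mul, ← Finset.sum_mul] at i3
  simp only [mul_sub, Finset.sum_sub_distrib] at i3
  have i5 : (∑ k ∈ Finset.Ico p (i + 1), a (i - k)) * (2 * l * L) ≤ A * (2 * l * L) :=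
    mul_le_mul_of_nonneg_right i4 (by positivity)
  have hA0 : 0 ≤ A := Finset.sum_nonneg fun j _ => H.nonneg j
  have hU0 : 0 ≤ U := (H.u_nonneg p).trans (hU p le_rfl (by omega))
  have hR : 0 ≤ 2 * (L * A + a (i - p) * U) := by
    have := H.nonneg (i - p)
    positivity
  rcases le_or_gt (u i - u (i + l)) 0 with hD | hD
  · exact (mul_nonpos_of_nonpos_of_nonneg hD (H.nonneg l)).trans hR
  have i6 : l * a l ≤ ∑ k ∈ Finset.Ico (i + 1 - l) (i + 1), a (i - k) := by
    have h := Finset.card_nsmul_le_sum (Finset.Ico (i + 1 - l) (i + 1))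
      (fun k => a (i - k)) (a l) fun k hk => by
        have hk := Finset.mem_Ico.1 hk
        exact H.anti (by omega)
    rwa [Nat.card_Ico, show i + 1 - (i + 1 - l) = l by omega, nsmul_eq_mul] at h
  have i7 := mul_le_mul_of_nonneg_right i6 hD.le
  have hl' : (0 : ℝ) < l := by exact_mod_cast hl
  refine le_of_mul_le_mul_left ?_ hl'
  linarith

end DiscreteSonine

/-- A kernel supported on `(0, ∞)` that is nonnegative, nonincreasing, convex, continuous and
locally integrable there, and unbounded near `0`. -/
structure SonineKernel (F : ℝ → ℝ) : Prop where
  nonneg : ∀ x, 0 ≤ F x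
  eq_zero : ∀ x ≤ 0, F x = 0
  anti : AntitoneOn F (Ioi 0)
  cont : ContinuousOn F (Ioi 0)
  integrable : ∀ M, IntegrableOn F (Ioc 0 M)
  convex : ∀ x h, 0 < x → 0 < h → F (x + h) - F (x + 2 * h) ≤ F x - F (x + h)
  tendsto : Tendsto F (𝓝[>] 0) atTop

/-- The samples of `F` at the positive multiples of `h`. -/
def gridKernel (F : ℝ → ℝ) (h : ℝ) (j : ℕ) : ℝ := F ((j + 1) * h)

/-- The solution of the discrete convolution equation for the samples of `F`. -/
def gridSol (F : ℝ → ℝ) (h : ℝ) : ℕ → ℝ := renewalSeq (gridKernel F h)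

/-- The step function with density `gridSol F h / h`. -/
def gridDensity (F : ℝ → ℝ) (h x : ℝ) : ℝ := gridSol F h ⌊x / h⌋₊ / h

theorem eventually_pos_lt {c : ℝ} (hc : 0 < c) : ∀ᶠ h in 𝓝[>] (0 : ℝ), 0 < h ∧ h < c :=
  Ioo_mem_nhdsGT hc

theorem floor_div_mul_le {x h : ℝ} (hx : 0 ≤ x) (hh : 0 < h) : (⌊x / h⌋₊ : ℝ) * h ≤ x := by
  have := Nat.floor_le (div_nonneg hx hh.le)
  rwa [le_div_iff₀ hh] at this

theorem lt_floor_div_mul (x : ℝ) {h : ℝ} (hh : 0 < h) : x < ((⌊x / h⌋₊ : ℝ) + 1) * h := by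
  have := Nat.lt_floor_add_one (x / h)
  rwa [div_lt_iff₀ hh] at this

namespace SonineKernel

variable {F : ℝ → ℝ} (K : SonineKernel F)
include K

theorem gridKernel_le_integral {h : ℝ} (hh : 0 < h) (n : ℕ) :
    h * ∑ j ∈ Finset.range n, gridKernel F h j ≤ ∫ x in (0 : ℝ)..(n * h), F x := by
  have hint : ∀ a b : ℝ, 0 ≤ a → a ≤ b → IntervalIntegrable F volume a b := fun a b ha hab =>
    (intervalIntegrable_iff_integrableOn_Ioc_of_le hab).2
      ((K.integrable b).mono_set (Ioc_subset_Ioc_left ha))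
  induction n with
  | zero => simp
  | succ n ih =>
    rw [Finset.sum_range_succ, mul_add]
    have hn : (0 : ℝ) ≤ n * h := by positivity
    have hle : (n : ℝ) * h ≤ (n + 1 : ℕ) * h := by push_cast; nlinarith
    rw [← intervalIntegral.integral_add_adjacent_intervals (hint 0 (n * h) le_rfl hn)
      (hint (n * h) _ hn hle)]
    refine add_le_add ih ?_
    have h1 : ∫ _ in (n * h : ℝ)..((n + 1 : ℕ) * h), gridKernel F h n = h * gridKernel F h n := by
      rw [intervalIntegral.integral_const, smul_eq_mul]; push_cast; ring
    rw [← h1]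
    refine intervalIntegral.integral_mono_on_of_le_Ioo hle (by simp) (hint _ _ hn hle) ?_
    intro x hx
    have hx0 : 0 < x := lt_of_le_of_lt hn hx.1
    have := hx.2.le
    push_cast at this
    exact K.anti hx0 (lt_of_lt_of_le hx0 this) this

theorem integral_mono {a b : ℝ} (ha : 0 ≤ a) (hab : a ≤ b) :
    ∫ x in (0 : ℝ)..a, F x ≤ ∫ x in (0 : ℝ)..b, F x := by
  refine intervalIntegral.integral_mono_interval le_rfl ha hab
    (Eventually.of_forall fun x => K.nonneg x) ?_
  exact (intervalIntegrable_iff_integrableOn_Ioc_of_le (ha.trans hab)).2 (K.integrable b)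

theorem eventually_discrete :
    ∀ᶠ h in 𝓝[>] (0 : ℝ), DiscreteSonine (gridKernel F h) (gridSol F h) := by
  filter_upwards [K.tendsto.eventually_gt_atTop 0, self_mem_nhdsWithin] with h hF hh
  have hh : 0 < h := hh
  have h0 : 0 < gridKernel F h 0 := by simpa [gridKernel] using hF
  refine ⟨h0, fun n => K.nonneg _, ?_, ?_, sum_mul_renewalSeq h0⟩
  · refine antitone_nat_of_succ_le fun n => ?_
    refine K.anti (mem_Ioi.2 (by positivity)) (mem_Ioi.2 (by positivity)) ?_
    push_cast; nlinarith
  · refine antitone_nat_of_succ_le fun n => ?_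
    have := K.convex ((n + 1) * h) h (by positivity) hh
    simp only [gridKernel]
    push_cast
    ring_nf at this ⊢
    linarith

theorem eventually_cumSum_le : ∃ C, 0 < C ∧ ∀ᶠ h in 𝓝[>] (0 : ℝ), ∀ n : ℕ,
    cumSum (gridSol F h) n ≤ C * (1 + n * h) := by
  obtain ⟨η, hFη, hη⟩ := ((K.tendsto.eventually_gt_atTop 0).and self_mem_nhdsWithin).exists
  have hη : 0 < η := hη
  refine ⟨(2 / η + 2) / F η, by positivity, ?_⟩
  filter_upwards [K.eventually_discrete, eventually_pos_lt (half_pos hη)] with h H hh n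
  obtain ⟨hh, hlt⟩ := hh
  have hfl : 1 ≤ ⌊η / h⌋₊ := Nat.le_floor (by rw [Nat.cast_one, le_div_iff₀ hh]; linarith)
  obtain ⟨m, hm⟩ := Nat.exists_eq_add_of_le' hfl
  have h1 := floor_div_mul_le hη.le hh
  have h2 := lt_floor_div_mul η hh
  rw [hm] at h1 h2
  push_cast at h1 h2
  have h3 := H.cumSum_le_linear n m
  have h4 : F η ≤ gridKernel F h m := K.anti (mem_Ioi.2 (by positivity)) hη h1
  have h5 := mul_le_mul_of_nonneg_right h4 (H.cumSum_pos n).le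
  have h6 : ((n : ℝ) + 1) / (m + 1) ≤ (n * h + h) * (2 / η) := by
    rw [mul_div_assoc', le_div_iff₀ hη, div_mul_eq_mul_div, div_le_iff₀ (by positivity)]
    have h7 : η ≤ 2 * ((m + 1) * h) := by linarith
    have := mul_le_mul_of_nonneg_left h7 (show (0 : ℝ) ≤ n + 1 by positivity)
    linarith
  have h8 : h * (2 / η) ≤ 1 := by rw [mul_div_assoc', div_le_one hη]; linarith
  rw [div_mul_eq_mul_div, le_div_iff₀ hFη]
  have : 0 ≤ (n : ℝ) * h := by positivity
  have : 0 ≤ 2 / η := by positivity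
  linarith

theorem le_integral_mul_cumSum {h δ M : ℝ} (hh : 0 < h)
    (H : DiscreteSonine (gridKernel F h) (gridSol F h)) {n : ℕ} (h1 : δ ≤ (n + 1) * h)
    (h2 : (n + 1) * h ≤ M) : δ ≤ (∫ x in (0 : ℝ)..M, F x) * cumSum (gridSol F h) n := by
  have h3 := mul_le_mul_of_nonneg_left (H.le_sum_mul_cumSum n) hh.le
  have h4 := K.gridKernel_le_integral hh (n + 1)
  push_cast at h4
  have h5 := h4.trans (K.integral_mono (by positivity) h2)
  have h6 := mul_le_mul_of_nonneg_right h5 (H.cumSum_pos n).le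
  linarith

theorem eventually_ratio_le {δ : ℝ} (hδ : 0 < δ) : ∃ R, 0 < R ∧ ∀ᶠ h in 𝓝[>] (0 : ℝ), ∀ n : ℕ,
    δ ≤ n * h → gridSol F h (n + 1) / cumSum (gridSol F h) n ≤ R * h := by
  obtain ⟨C, hC, hC'⟩ := K.eventually_cumSum_le
  set J := ∫ x in (0 : ℝ)..(δ / 2 + 1), F x with hJ
  have hJ0 : 0 ≤ J := intervalIntegral.integral_nonneg (by positivity) fun x _ => K.nonneg x
  refine ⟨C * (δ + 2) * (J + 1) * 4 / δ ^ 2, by positivity, ?_⟩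
  filter_upwards [hC', K.eventually_discrete, eventually_pos_lt one_pos] with h hW H hh n hn
  obtain ⟨hh, hlt⟩ := hh
  set m := ⌊δ / 2 / h⌋₊
  have h1 : m * h ≤ δ / 2 := floor_div_mul_le (half_pos hδ).le hh
  have h2 : δ / 2 < (m + 1) * h := lt_floor_div_mul (δ / 2) hh
  have h3 := K.le_integral_mul_cumSum hh H h2.le (show (m + 1) * h ≤ δ / 2 + 1 by linarith)
  have hmn : m + m ≤ n := by
    have : ((m + m : ℕ) : ℝ) * h ≤ n * h := by push_cast; linarith
    exact_mod_cast le_of_mul_le_mul_right this hh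
  refine (H.ratio_antitone hmn).trans ?_
  have h4 := H.ratio_le m m
  have h5 := hW (m + m + 1)
  have hr := H.ratio_nonneg (m + m)
  simp only
  set r := gridSol F h (m + m + 1) / cumSum (gridSol F h) (m + m)
  have hWp := H.cumSum_pos m
  set W := cumSum (gridSol F h) m
  rw [← hJ] at h3
  have h6 : δ / 2 ≤ (J + 1) * W := by linarith
  have h7 : ((m : ℝ) + 1) * r * W ≤ C * (δ + 2) := by
    refine (h4.trans h5).trans (mul_le_mul_of_nonneg_left ?_ hC.le)
    push_cast
    linarith
  rw [div_mul_eq_mul_div, le_div_iff₀ (by positivity)]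
  have h8 : δ / 2 * (δ / 2) ≤ ((m + 1) * h) * ((J + 1) * W) :=
    mul_le_mul h2.le h6 (by positivity) (by positivity)
  have h9 := mul_le_mul_of_nonneg_left h8 hr
  have h10 := mul_le_mul_of_nonneg_left h7 (show 0 ≤ h * (J + 1) by positivity)
  linarith

theorem eventually_gridSol_le {δ : ℝ} (hδ : 0 < δ) : ∃ C, 0 < C ∧ ∀ᶠ h in 𝓝[>] (0 : ℝ), ∀ n : ℕ,
    δ ≤ n * h → gridSol F h n ≤ C * h * (1 + n * h) := by
  obtain ⟨R, hR, hR'⟩ := K.eventually_ratio_le (half_pos hδ)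
  obtain ⟨C, hC, hC'⟩ := K.eventually_cumSum_le
  refine ⟨R * C, by positivity, ?_⟩
  filter_upwards [hR', hC', K.eventually_discrete, eventually_pos_lt (half_pos hδ)]
    with h hr hW H hh n hn
  obtain ⟨hh, hlt⟩ := hh
  cases n with
  | zero => simp at hn; linarith
  | succ n =>
    push_cast at hn ⊢
    rw [H.succ_eq]
    have := mul_le_mul (hr n (by linarith)) (hW n) (H.cumSum_pos n).le (by positivity)
    have h2 : 0 ≤ R * C * h * h := by positivity
    linarith

theorem eventually_gridSol_step {δ : ℝ} (hδ : 0 < δ) :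
    ∃ R, 0 < R ∧ ∀ᶠ h in 𝓝[>] (0 : ℝ), ∀ n : ℕ,
    δ ≤ n * h → gridSol F h (n + 1) - gridSol F h n ≤ R * h * gridSol F h n := by
  obtain ⟨R, hR, hR'⟩ := K.eventually_ratio_le (half_pos hδ)
  refine ⟨R, hR, ?_⟩
  filter_upwards [hR', K.eventually_discrete, eventually_pos_lt (half_pos hδ)] with h hr H hh n hn
  obtain ⟨hh, hlt⟩ := hh
  cases n with
  | zero => simp at hn; linarith
  | succ n =>
    push_cast at hn
    exact (H.succ_sub_le n).trans
      (mul_le_mul_of_nonneg_right (hr n (by linarith)) (H.u_nonneg _))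

theorem eventually_gridDensity_le {δ : ℝ} (hδ : 0 < δ) :
    ∃ C, 0 < C ∧ ∀ᶠ h in 𝓝[>] (0 : ℝ), ∀ x,
    δ ≤ x → gridDensity F h x ≤ C * (1 + x) := by
  obtain ⟨C, hC, hC'⟩ := K.eventually_gridSol_le (half_pos hδ)
  refine ⟨C, hC, ?_⟩
  filter_upwards [hC', eventually_pos_lt (half_pos hδ)] with h hu hh x hx
  obtain ⟨hh, hlt⟩ := hh
  have h1 := floor_div_mul_le (hδ.le.trans hx) hh
  have h2 := lt_floor_div_mul x hh
  rw [gridDensity, div_le_iff₀ hh]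
  have := hu ⌊x / h⌋₊ (by linarith)
  have h3 : C * h * (1 + ⌊x / h⌋₊ * h) ≤ C * h * (1 + x) :=
    mul_le_mul_of_nonneg_left (by linarith) (by positivity)
  linarith

theorem eventually_gridDensity_nonneg : ∀ᶠ h in 𝓝[>] (0 : ℝ), ∀ x, 0 ≤ gridDensity F h x := by
  filter_upwards [K.eventually_discrete, self_mem_nhdsWithin] with h H hh x
  exact div_nonneg (H.u_nonneg _) (le_of_lt hh)

/-- The step densities are asymptotically equicontinuous on compact subsets of `(0, ∞)`. -/
theorem eventually_equicontinuous {δ M ε : ℝ} (hδ : 0 < δ) (hM : 0 < M) (hε : 0 < ε) :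
    ∃ η, 0 < η ∧ ∀ᶠ h in 𝓝[>] (0 : ℝ), ∀ x y, δ ≤ x → x ≤ y → y ≤ M → y - x < η →
      |gridDensity F h y - gridDensity F h x| ≤ ε := by
  have hδ4 : 0 < δ / 4 := by positivity
  obtain ⟨R, hR, hR'⟩ := K.eventually_gridSol_step hδ4
  obtain ⟨C, hC, hC'⟩ := K.eventually_gridSol_le hδ4
  set J := ∫ x in (0 : ℝ)..(M + 1), F x with hJ
  have hJ0 : 0 ≤ J := intervalIntegral.integral_nonneg (by positivity) fun x _ => K.nonneg x
  set V := C * (M + 5) with hV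
  have hV0 : 0 < V := by positivity
  set Q := 2 * (R * V * J + F (δ / 4) * V) with hQ
  obtain ⟨η₁, ⟨hη₁, hη₁0⟩⟩ := ((K.tendsto.eventually_gt_atTop
    (|Q| / ε)).and self_mem_nhdsWithin).exists
  have hη₁0 : 0 < η₁ := hη₁0
  obtain ⟨η, hη, hη1, hη2, hη3, hη4⟩ : ∃ η, 0 < η ∧ η ≤ 1 ∧ η ≤ δ / 8 ∧ 3 * η ≤ η₁ ∧
      2 * η * (R * V) ≤ ε := by
    refine ⟨min (min 1 (δ / 8)) (min (η₁ / 3) (ε / (2 * (R * V)))), by positivity,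
      (min_le_left _ _).trans (min_le_left _ _), (min_le_left _ _).trans (min_le_right _ _), ?_, ?_⟩
    · have := (min_le_right (min 1 (δ / 8)) _).trans (min_le_left (η₁ / 3) (ε / (2 * (R * V))))
      linarith
    · have := (min_le_right (min 1 (δ / 8)) _).trans (min_le_right (η₁ / 3) (ε / (2 * (R * V))))
      rw [le_div_iff₀ (by positivity)] at this
      linarith
  refine ⟨η, hη, ?_⟩
  filter_upwards [hR', hC', K.eventually_discrete, eventually_pos_lt hη]
    with h hstep hu H hh x y hx hxy hy hyx
  obtain ⟨hh, hlt⟩ := hh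
  have hx0 : 0 ≤ x := hδ.le.trans hx
  have i1 := floor_div_mul_le hx0 hh
  have i2 := lt_floor_div_mul x hh
  have j1 := floor_div_mul_le (hx0.trans hxy) hh
  have j2 := lt_floor_div_mul y hh
  have hij : ⌊x / h⌋₊ ≤ ⌊y / h⌋₊ := Nat.floor_mono (by gcongr)
  unfold gridDensity
  obtain ⟨l, hl⟩ := Nat.exists_eq_add_of_le hij
  rw [hl] at j1 j2 ⊢
  set i := ⌊x / h⌋₊
  push_cast at j1 j2
  rw [← sub_div, abs_div, abs_of_pos hh, div_le_iff₀ hh]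
  rcases Nat.eq_zero_or_pos l with hl0 | hl0
  · subst hl0; simp; positivity
  have hlh : l * h < 2 * η := by linarith
  have hbd : ∀ k : ℕ, δ / 4 ≤ k * h → k * h ≤ M + 4 → gridSol F h k ≤ V * h := by
    intro k hk1 hk2
    refine (hu k hk1).trans ?_
    have := mul_le_mul_of_nonneg_left (show 1 + k * h ≤ M + 5 by linarith)
      (show 0 ≤ C * h by positivity)
    linarith
  have hst : ∀ k : ℕ, δ / 4 ≤ k * h → k * h ≤ M + 4 →
      gridSol F h (k + 1) - gridSol F h k ≤ R * V * h ^ 2 := by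
    intro k hk1 hk2
    have := mul_le_mul_of_nonneg_left (hbd k hk1 hk2) (show 0 ≤ R * h by positivity)
    linarith [hstep k hk1]
  rw [abs_le]
  constructor
  · set p := ⌊δ / 4 / h⌋₊ + 1 with hp
    have p1 := floor_div_mul_le hδ4.le hh
    have p2 := lt_floor_div_mul (δ / 4) hh
    have p3 : (p : ℝ) * h ≤ δ / 4 + h := by rw [hp]; push_cast; linarith
    have p4 : δ / 4 < (p : ℝ) * h := by rw [hp]; push_cast; linarith
    have hpl : p + l ≤ i + 1 := by
      have : ((p + l : ℕ) : ℝ) * h ≤ ((i + 1 : ℕ) : ℝ) * h := by push_cast; linarith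
      exact_mod_cast le_of_mul_le_mul_right this hh
    have hkp : ∀ k : ℕ, p ≤ k → δ / 4 ≤ k * h := by
      intro k hk
      have : (p : ℝ) * h ≤ k * h := by gcongr
      linarith
    have hki : ∀ k : ℕ, k ≤ i + 2 * l → k * h ≤ M + 4 := by
      intro k hk
      have : (k : ℝ) * h ≤ ((i + 2 * l : ℕ) : ℝ) * h := by gcongr
      push_cast at this
      linarith
    have hmod := H.modulus (U := V * h) (L := R * V * h ^ 2) hpl hl0 (by positivity)
      (fun k hk1 hk2 => hbd k (hkp k hk1) (hki k (by omega)))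
      (fun k hk1 hk2 => hst k (hkp k hk1) (hki k hk2.le))
    have hA := (K.gridKernel_le_integral hh (i + 1)).trans
      (K.integral_mono (by positivity) (show ((i + 1 : ℕ) : ℝ) * h ≤ M + 1 by push_cast; linarith))
    rw [← hJ] at hA
    have hpi : p ≤ i := by omega
    have ha : gridKernel F h (i - p) ≤ F (δ / 4) := by
      refine K.anti hδ4 (mem_Ioi.2 (by positivity)) ?_
      rw [Nat.cast_sub hpi]
      linarith
    have hal : F η₁ ≤ gridKernel F h l :=
      K.anti (mem_Ioi.2 (by positivity)) hη₁0 (by linarith)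
    have hQ' : 2 * (R * V * h ^ 2 * (∑ j ∈ Finset.range (i + 1), gridKernel F h j)
        + gridKernel F h (i - p) * (V * h)) ≤ Q * h := by
      have b1 := mul_le_mul_of_nonneg_left hA (show 0 ≤ R * V * h by positivity)
      have b2 := mul_le_mul_of_nonneg_right ha (show 0 ≤ V * h by positivity)
      rw [hQ]
      linarith
    have hQF : Q ≤ ε * gridKernel F h l := by
      rw [div_lt_iff₀ hε] at hη₁
      have := mul_le_mul_of_nonneg_left hal hε.le
      linarith [le_abs_self Q]
    have halp : 0 < gridKernel F h l := lt_of_lt_of_le (lt_of_le_of_lt (by positivity) hη₁) hal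
    have := (hmod.trans hQ').trans (mul_le_mul_of_nonneg_right hQF hh.le)
    have : (gridSol F h i - gridSol F h (i + l)) ≤ ε * h := by
      refine le_of_mul_le_mul_right ?_ halp
      linarith
    linarith
  · have hup : ∀ d ≤ l, gridSol F h (i + d) - gridSol F h i ≤ d * (R * V * h ^ 2) := by
      intro d
      induction d with
      | zero => intro _; simp
      | succ d ih =>
        intro hd
        have hdl : (d : ℝ) * h ≤ l * h := by
          have : (d : ℝ) ≤ l := by exact_mod_cast (show d ≤ l by omega)
          gcongr
        have hd0 : 0 ≤ (d : ℝ) * h := by positivity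
        have h1 := ih (by omega)
        have h2 := hst (i + d) (by push_cast; linarith) (by push_cast; linarith)
        rw [← add_assoc i d 1]
        push_cast
        linarith
    have h1 := hup l le_rfl
    have h2 := mul_le_mul_of_nonneg_right hlh.le (show 0 ≤ R * V * h by positivity)
    have h3 := mul_le_mul_of_nonneg_right hη4 hh.le
    linarith

end SonineKernel

theorem integral_floor_div {h : ℝ} (hh : 0 < h) (G : ℕ → ℝ) {p q : ℕ} (hpq : p ≤ q) :
    ∫ y in (p * h : ℝ)..(q * h), G ⌊y / h⌋₊ = h * ∑ k ∈ Finset.Ico p q, G k := by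
  have heq : ∀ k : ℕ, EqOn (fun _ => G k) (fun y => G ⌊y / h⌋₊)
      (uIoo (k * h : ℝ) ((k + 1 : ℕ) * h)) := by
    intro k y hy
    have hle : (k : ℝ) * h ≤ (k + 1 : ℕ) * h := by push_cast; nlinarith
    rw [uIoo_of_le hle] at hy
    have hk : ⌊y / h⌋₊ = k := by
      rw [Nat.floor_eq_iff (div_nonneg ((by positivity : (0 : ℝ) ≤ k * h).trans hy.1.le) hh.le),
        le_div_iff₀ hh, div_lt_iff₀ hh]
      have := hy.2
      push_cast at this
      exact ⟨hy.1.le, this⟩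
    simp only [hk]
  have hint : ∀ k ∈ Set.Ico p q, IntervalIntegrable (fun y => G ⌊y / h⌋₊) volume
      ((fun k : ℕ => (k : ℝ) * h) k) ((fun k : ℕ => (k : ℝ) * h) (k + 1)) := fun k _ =>
    (intervalIntegrable_const (c := G k)).congr_uIoo (heq k)
  rw [← intervalIntegral.sum_integral_adjacent_intervals_Ico (a := fun k : ℕ => (k : ℝ) * h) hpq
    hint, Finset.mul_sum]
  refine Finset.sum_congr rfl fun k _ => ?_
  rw [← intervalIntegral.integral_congr_uIoo (heq k), intervalIntegral.integral_const, smul_eq_mul]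
  push_cast
  ring

theorem measurable_floor_div (G : ℕ → ℝ) (h : ℝ) : Measurable fun y : ℝ => G ⌊y / h⌋₊ :=
  (measurable_from_nat (f := G)).comp (Nat.measurable_floor.comp (measurable_id.div_const h))

namespace SonineKernel

variable {F : ℝ → ℝ} (K : SonineKernel F)
include K

theorem measurable : Measurable F := by
  classical
  have : F = (Ioi (0 : ℝ)).piecewise F 0 := by
    ext x
    by_cases hx : 0 < x
    · rw [piecewise_eq_of_mem _ _ _ (mem_Ioi.2 hx)]
    · rw [piecewise_eq_of_notMem _ _ _ (by simpa using hx), K.eq_zero x (not_lt.1 hx)]; rfl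
  rw [this]
  exact K.cont.measurable_piecewise continuousOn_const measurableSet_Ioi

theorem integrableOn_comp_sub_left {δ x : ℝ} (hx : δ ≤ x) :
    IntegrableOn (fun y => F (x - y)) (Ioo δ x) := by
  have h1 := ((intervalIntegrable_iff_integrableOn_Ioc_of_le
    (show (0 : ℝ) ≤ x - δ by linarith)).2 (K.integrable (x - δ))).comp_sub_left x
  simp only [sub_zero, sub_sub_cancel] at h1
  exact ((intervalIntegrable_iff_integrableOn_Ioc_of_le hx).1 h1.symm).mono_set
    Ioo_subset_Ioc_self

theorem tendsto_mul_self : Tendsto (fun h => h * F h) (𝓝[>] 0) (𝓝 0) := by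
  have hI : IntegrableOn F (Icc 0 1) := (integrableOn_Icc_iff_integrableOn_Ioc).2 (K.integrable 1)
  have h0 : Tendsto (fun x => ∫ t in Ioc 0 x, F t) (𝓝[>] 0) (𝓝 0) := by
    have h1 := intervalIntegral.continuousOn_primitive hI 0 (by simp)
    have h2 : Tendsto (fun x => ∫ t in Ioc 0 x, F t) (𝓝[Icc 0 1] 0) (𝓝 0) := by
      simpa [ContinuousWithinAt] using h1
    refine h2.mono_left ?_
    rw [nhdsWithin_le_iff]
    filter_upwards [Ioo_mem_nhdsGT (one_pos (α := ℝ))] with x hx using ⟨hx.1.le, hx.2.le⟩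
  refine squeeze_zero' ?_ ?_ h0
  · filter_upwards [self_mem_nhdsWithin] with h hh using mul_nonneg (le_of_lt hh) (K.nonneg h)
  · filter_upwards [self_mem_nhdsWithin] with h hh
    have := K.gridKernel_le_integral hh 1
    have hh' : (0 : ℝ) ≤ h := le_of_lt hh
    simpa [gridKernel, intervalIntegral.integral_of_le hh'] using this

theorem exists_tendsto_gridDensity : ∃ (h : ℕ → ℝ) (w : ℝ → ℝ), Tendsto h atTop (𝓝[>] 0) ∧
    ∀ x, 0 < x → Tendsto (fun N => gridDensity F (h N) x) atTop (𝓝 (w x)) := by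
  have hh0 : Tendsto (fun N : ℕ => 1 / ((N : ℝ) + 1)) atTop (𝓝[>] 0) :=
    tendsto_nhdsWithin_iff.2 ⟨tendsto_one_div_add_atTop_nhds_zero_nat,
      Eventually.of_forall fun N => mem_Ioi.2 (by positivity)⟩
  have hB : ∀ q : {q : ℚ // 0 < q}, ∃ B, ∀ N : ℕ,
      gridDensity F (1 / ((N : ℝ) + 1)) ((q : ℚ) : ℝ) ∈ Icc (-B) B := by
    intro q
    have hq : (0 : ℝ) < ((q : ℚ) : ℝ) := by exact_mod_cast q.2
    obtain ⟨C, hC, hC'⟩ := K.eventually_gridDensity_le hq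
    have hb : IsBoundedUnder (· ≤ ·) atTop
        fun N : ℕ => |gridDensity F (1 / ((N : ℝ) + 1)) ((q : ℚ) : ℝ)| := by
      refine ⟨C * (1 + ((q : ℚ) : ℝ)), ?_⟩
      rw [eventually_map]
      filter_upwards [hh0.eventually hC', hh0.eventually K.eventually_gridDensity_nonneg]
        with N h1 h2
      rw [abs_of_nonneg (h2 _)]
      exact h1 _ le_rfl
    obtain ⟨B, hB⟩ := hb.bddAbove_range
    exact ⟨B, fun N => abs_le.1 (hB ⟨N, rfl⟩)⟩
  choose B hB using hB
  obtain ⟨v, -, ψ, hψ, hv⟩ := (isCompact_univ_pi fun q => isCompact_Icc (a := -B q)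
    (b := B q)).tendsto_subseq (x := fun (N : ℕ) (q : {q : ℚ // 0 < q}) =>
      gridDensity F (1 / ((N : ℝ) + 1)) ((q : ℚ) : ℝ)) fun N q _ => hB q N
  rw [tendsto_pi_nhds] at hv
  have hh := hh0.comp hψ.tendsto_atTop
  have hlim : ∀ x, 0 < x → ∃ y, Tendsto
      (fun N => gridDensity F (1 / ((ψ N : ℝ) + 1)) x) atTop (𝓝 y) := by
    intro x hx
    refine cauchySeq_tendsto_of_complete (Metric.cauchySeq_iff.2 fun ε hε => ?_)
    obtain ⟨η, hη, hη'⟩ := K.eventually_equicontinuous (δ := x) (M := x + 1) (ε := ε / 4) hx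
      (by positivity) (by positivity)
    obtain ⟨q, hq1, hq2⟩ := exists_rat_btwn (show x < x + min η 1 by
      have : 0 < min η 1 := by positivity
      linarith)
    have hq0 : 0 < q := by exact_mod_cast hx.trans hq1
    obtain ⟨N₁, hN₁⟩ := Metric.cauchySeq_iff.1 (hv ⟨q, hq0⟩).cauchySeq (ε / 4) (by positivity)
    obtain ⟨N₂, hN₂⟩ := eventually_atTop.1 (hh.eventually hη')
    refine ⟨max N₁ N₂, fun m hm n hn => ?_⟩
    have e1 := hN₁ m (le_of_max_le_left hm) n (le_of_max_le_left hn)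
    have e2 := hN₂ m (le_of_max_le_right hm) x q le_rfl hq1.le
      (by linarith [min_le_right η 1]) (by linarith [min_le_left η 1])
    have e3 := hN₂ n (le_of_max_le_right hn) x q le_rfl hq1.le
      (by linarith [min_le_right η 1]) (by linarith [min_le_left η 1])
    simp only [Function.comp_apply, Real.dist_eq] at e1 e2 e3 ⊢
    rw [abs_lt] at e1 ⊢
    rw [abs_le] at e2 e3
    constructor <;> linarith
  choose! w hw using hlim
  exact ⟨_, w, hh, hw⟩

omit K in
theorem sum_gridKernel_mul {h : ℝ} (H : DiscreteSonine (gridKernel F h) (gridSol F h))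
    {k n : ℕ} (hkn : k + 1 ≤ n) :
    ∑ j ∈ Finset.Ico (k + 1) n, gridKernel F h (n - j) * gridSol F h j ≤ 1 ∧
    1 ≤ ∑ j ∈ Finset.Ico (k + 1) n, gridKernel F h (n - j) * gridSol F h j
      + gridKernel F h (n - k) * cumSum (gridSol F h) k + gridKernel F h 0 * gridSol F h n := by
  have h1 := H.sum_eq n
  rw [Finset.sum_range_succ, Nat.sub_self, ← Finset.sum_range_add_sum_Ico _ hkn] at h1
  have h2 : ∑ j ∈ Finset.range (k + 1), gridKernel F h (n - j) * gridSol F h j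
      ≤ gridKernel F h (n - k) * cumSum (gridSol F h) k := by
    rw [cumSum, Finset.mul_sum]
    refine Finset.sum_le_sum fun j hj => ?_
    have := Finset.mem_range.1 hj
    exact mul_le_mul_of_nonneg_right (H.anti (by omega)) (H.u_nonneg j)
  have h3 : 0 ≤ ∑ j ∈ Finset.range (k + 1), gridKernel F h (n - j) * gridSol F h j :=
    Finset.sum_nonneg fun j _ => mul_nonneg (H.nonneg _) (H.u_nonneg j)
  have h4 := mul_nonneg (H.nonneg 0) (H.u_nonneg n)
  constructor <;> linarith

section Limit

variable {h : ℕ → ℝ} {w : ℝ → ℝ} (hh : Tendsto h atTop (𝓝[>] 0))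
  (hw : ∀ x, 0 < x → Tendsto (fun N => gridDensity F (h N) x) atTop (𝓝 (w x)))
include hh hw

theorem limit_nonneg {x : ℝ} (hx : 0 < x) : 0 ≤ w x :=
  ge_of_tendsto (hw x hx) ((hh.eventually K.eventually_gridDensity_nonneg).mono fun _ h => h x)

theorem limit_le {δ : ℝ} (hδ : 0 < δ) : ∃ C, 0 < C ∧ ∀ x, δ ≤ x → w x ≤ C * (1 + x) := by
  obtain ⟨C, hC, hC'⟩ := K.eventually_gridDensity_le hδ
  exact ⟨C, hC, fun x hx => le_of_tendsto (hw x (hδ.trans_le hx))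
    ((hh.eventually hC').mono fun _ h => h x hx)⟩

theorem limit_continuousOn : ContinuousOn w (Ioi 0) := by
  intro x hx
  have hx : 0 < x := hx
  refine ContinuousAt.continuousWithinAt (Metric.continuousAt_iff.2 fun ε hε => ?_)
  obtain ⟨η, hη, hη'⟩ := K.eventually_equicontinuous (δ := x / 2) (M := 2 * x) (ε := ε / 2)
    (by positivity) (by positivity) (by positivity)
  have hη'' := hh.eventually hη'
  have key : ∀ a b, x / 2 ≤ a → a ≤ b → b ≤ 2 * x → b - a < η → |w b - w a| < ε := by
    intro a b h1 h2 h3 h4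
    have h5 := ((hw b (by linarith)).sub (hw a (by linarith))).abs
    have := le_of_tendsto h5 (hη''.mono fun N hN => hN a b h1 h2 h3 h4)
    linarith
  refine ⟨min η (x / 2), by positivity, fun {y} hy => ?_⟩
  rw [Real.dist_eq, abs_lt] at hy
  have h1 := min_le_left η (x / 2)
  have h2 := min_le_right η (x / 2)
  rw [Real.dist_eq]
  rcases le_total x y with hxy | hxy
  · exact key x y (by linarith) hxy (by linarith) (by linarith)
  · rw [abs_sub_comm]
    exact key y x (by linarith) hxy (by linarith) (by linarith)

theorem tendsto_middle {x δ : ℝ} (hδ : 0 < δ) (hx : δ < x) :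
    Tendsto (fun N => ∑ j ∈ Finset.Ico (⌊δ / h N⌋₊ + 1) ⌊x / h N⌋₊,
      gridKernel F (h N) (⌊x / h N⌋₊ - j) * gridSol F (h N) j) atTop
      (𝓝 (∫ y in Ioo δ x, F (x - y) * w y)) := by
  obtain ⟨C, hC, hC'⟩ := K.eventually_gridDensity_le hδ
  have hh' : Tendsto h atTop (𝓝 0) := hh.mono_right nhdsWithin_le_nhds
  have hsmall := hh.eventually (eventually_pos_lt (show 0 < (x - δ) / 2 by linarith))
  set G : ℕ → ℕ → ℝ := fun N j =>
    gridKernel F (h N) (⌊x / h N⌋₊ - j) * (gridSol F (h N) j / h N) with hG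
  set g : ℕ → ℝ → ℝ := fun N =>
    (Ioo (((⌊δ / h N⌋₊ + 1 : ℕ) : ℝ) * h N) (⌊x / h N⌋₊ * h N)).indicator
      fun y => G N ⌊y / h N⌋₊ with hg
  have hsum : ∀ᶠ N in atTop, ∫ y, g N y = ∑ j ∈ Finset.Ico (⌊δ / h N⌋₊ + 1) ⌊x / h N⌋₊,
      gridKernel F (h N) (⌊x / h N⌋₊ - j) * gridSol F (h N) j := by
    filter_upwards [hsmall] with N hN
    have d1 := floor_div_mul_le hδ.le hN.1
    have x2 := lt_floor_div_mul x hN.1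
    have hle : ⌊δ / h N⌋₊ + 1 ≤ ⌊x / h N⌋₊ := by
      have : ((⌊δ / h N⌋₊ + 1 : ℕ) : ℝ) * h N ≤ (⌊x / h N⌋₊ : ℝ) * h N := by
        push_cast; linarith
      exact_mod_cast le_of_mul_le_mul_right this hN.1
    have h1 := integral_floor_div hN.1 (G N) hle
    rw [intervalIntegral.integral_of_le (mul_le_mul_of_nonneg_right (by exact_mod_cast hle)
      hN.1.le), integral_Ioc_eq_integral_Ioo, ← integral_indicator measurableSet_Ioo] at h1
    rw [hg, h1, Finset.mul_sum]
    refine Finset.sum_congr rfl fun j _ => ?_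
    have := hN.1.ne'
    simp only [hG]
    field_simp
  refine Tendsto.congr' hsum ?_
  rw [← integral_indicator measurableSet_Ioo]
  have hInt := K.integrableOn_comp_sub_left hx.le
  have hargs : ∀ᶠ N in atTop, ∀ y, δ < y → y < x →
      x - y ≤ ((⌊x / h N⌋₊ - ⌊y / h N⌋₊ : ℕ) + 1) * h N ∧
      ((⌊x / h N⌋₊ - ⌊y / h N⌋₊ : ℕ) + 1) * h N ≤ x - y + 2 * h N := by
    filter_upwards [hsmall] with N hN y hy1 hy2
    have x1 := floor_div_mul_le (hδ.trans hx).le hN.1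
    have x2 := lt_floor_div_mul x hN.1
    have y1 := floor_div_mul_le (hδ.trans hy1).le hN.1
    have y2 := lt_floor_div_mul y hN.1
    have : ⌊y / h N⌋₊ ≤ ⌊x / h N⌋₊ :=
      Nat.floor_mono (div_le_div_of_nonneg_right hy2.le hN.1.le)
    rw [Nat.cast_sub this]
    constructor <;> linarith
  refine tendsto_integral_filter_of_dominated_convergence
    ((Ioo δ x).indicator fun y => F (x - y) * (C * (1 + x))) ?_ ?_ ?_ ?_
  · exact Eventually.of_forall fun N =>
      ((measurable_floor_div (G N) (h N)).indicator measurableSet_Ioo).aestronglyMeasurable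
  · filter_upwards [hsmall, hargs, hh.eventually hC',
      hh.eventually K.eventually_gridDensity_nonneg] with N hN ha hb hnn
    refine Eventually.of_forall fun y => ?_
    rw [hg]
    simp only
    by_cases hy : y ∈ Ioo (((⌊δ / h N⌋₊ + 1 : ℕ) : ℝ) * h N) (⌊x / h N⌋₊ * h N)
    · have x1 := floor_div_mul_le (hδ.trans hx).le hN.1
      have d2 := lt_floor_div_mul δ hN.1
      have hy1 := hy.1
      push_cast at hy1
      have hyδ : δ < y := d2.trans hy1
      have hyx : y < x := hy.2.trans_le x1
      rw [indicator_of_mem hy, indicator_of_mem (show y ∈ Ioo δ x from ⟨hyδ, hyx⟩)]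
      have e1 := ha y hyδ hyx
      have e2 : gridKernel F (h N) (⌊x / h N⌋₊ - ⌊y / h N⌋₊) ≤ F (x - y) :=
        K.anti (mem_Ioi.2 (by linarith)) (mem_Ioi.2 (by linarith [e1.1])) e1.1
      have e3 : gridSol F (h N) ⌊y / h N⌋₊ / h N ≤ C * (1 + x) :=
        (hb y hyδ.le).trans (mul_le_mul_of_nonneg_left (by linarith) hC.le)
      have e4 : 0 ≤ gridSol F (h N) ⌊y / h N⌋₊ / h N := hnn y
      have e5 : 0 ≤ G N ⌊y / h N⌋₊ := mul_nonneg (K.nonneg _) e4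
      rw [Real.norm_of_nonneg e5]
      exact mul_le_mul e2 e3 e4 (K.nonneg _)
    · rw [indicator_of_notMem hy, norm_zero]
      exact indicator_nonneg (fun z _ => mul_nonneg (K.nonneg _)
        (mul_nonneg hC.le (by linarith))) _
  · exact (integrable_indicator_iff measurableSet_Ioo).2 (hInt.mul_const _)
  · refine Eventually.of_forall fun y => ?_
    by_cases hy : y ∈ Ioo δ x
    · rw [indicator_of_mem hy]
      have hy0 : 0 < x - y := sub_pos.2 hy.2
      have t1 : Tendsto (fun N => ((⌊x / h N⌋₊ - ⌊y / h N⌋₊ : ℕ) + 1) * h N) atTop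
          (𝓝 (x - y)) := by
        refine tendsto_of_tendsto_of_tendsto_of_le_of_le' tendsto_const_nhds
          (h := fun N => x - y + 2 * h N) ?_ ?_ ?_
        · simpa using (hh'.const_mul 2).const_add (x - y)
        · exact hargs.mono fun N hN => (hN y hy.1 hy.2).1
        · exact hargs.mono fun N hN => (hN y hy.1 hy.2).2
      have t2 := ((K.cont.continuousAt (Ioi_mem_nhds hy0)).tendsto.comp t1).mul
        (hw y (hδ.trans hy.1))
      refine t2.congr' ?_
      filter_upwards [hsmall, hh.eventually (eventually_pos_lt (sub_pos.2 hy.1)),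
        hh.eventually (eventually_pos_lt hy0)] with N hN n1 n2
      have x2 := lt_floor_div_mul x hN.1
      have d1 := floor_div_mul_le hδ.le hN.1
      rw [hg]
      simp only
      rw [indicator_of_mem]
      · rfl
      · push_cast
        constructor <;> linarith
    · rw [indicator_of_notMem hy]
      refine tendsto_const_nhds.congr' ?_
      filter_upwards [hsmall] with N hN
      rw [hg]
      simp only
      rw [indicator_of_notMem]
      intro hy'
      have x1 := floor_div_mul_le (hδ.trans hx).le hN.1
      have d2 := lt_floor_div_mul δ hN.1
      have hy1 := hy'.1
      push_cast at hy1
      exact hy ⟨d2.trans hy1, hy'.2.trans_le x1⟩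

theorem middle_bounds {x δ : ℝ} (hδ : 0 < δ) (hx : δ < x) (hF : 0 < F (2 * δ)) :
    ∫ y in Ioo δ x, F (x - y) * w y ≤ 1 ∧
    1 - F (x - δ) / F (2 * δ) ≤ ∫ y in Ioo δ x, F (x - y) * w y := by
  have ht := K.tendsto_middle hh hw hδ hx
  have hev := (hh.eventually K.eventually_discrete).and
    (hh.eventually (eventually_pos_lt (show 0 < min δ ((x - δ) / 2) by
      have : 0 < (x - δ) / 2 := by linarith
      positivity)))
  have hle : ∀ᶠ N in atTop, ⌊δ / h N⌋₊ + 1 ≤ ⌊x / h N⌋₊ := by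
    filter_upwards [hev] with N hN
    have hN := hN.2
    have d1 := floor_div_mul_le hδ.le hN.1
    have x2 := lt_floor_div_mul x hN.1
    have := min_le_right δ ((x - δ) / 2)
    have : ((⌊δ / h N⌋₊ + 1 : ℕ) : ℝ) * h N ≤ (⌊x / h N⌋₊ : ℝ) * h N := by
      push_cast; linarith
    exact_mod_cast le_of_mul_le_mul_right this hN.1
  refine ⟨le_of_tendsto ht ?_, ?_⟩
  · filter_upwards [hev, hle] with N hN hl using (sum_gridKernel_mul hN.1 hl).1
  obtain ⟨C, hC, hC'⟩ := K.eventually_gridDensity_le (hδ.trans hx)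
  have t2 : Tendsto (fun N => h N * F (h N) * (C * (1 + x))) atTop (𝓝 0) := by
    simpa using (K.tendsto_mul_self.comp hh).mul_const (C * (1 + x))
  have t3 := (ht.add_const (F (x - δ) / F (2 * δ))).add t2
  rw [add_zero] at t3
  have : 1 ≤ (∫ y in Ioo δ x, F (x - y) * w y) + F (x - δ) / F (2 * δ) := by
    refine ge_of_tendsto t3 ?_
    filter_upwards [hev, hle, hh.eventually hC'] with N hN hl hb
    obtain ⟨H, hN0, hN1⟩ := hN
    have d1 := floor_div_mul_le hδ.le hN0
    have x2 := lt_floor_div_mul x hN0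
    have hmin := min_le_left δ ((x - δ) / 2)
    refine (sum_gridKernel_mul H hl).2.trans ?_
    have e1 : gridKernel F (h N) (⌊x / h N⌋₊ - ⌊δ / h N⌋₊) ≤ F (x - δ) := by
      refine K.anti (mem_Ioi.2 (by linarith)) (mem_Ioi.2 (by positivity)) ?_
      rw [Nat.cast_sub (by omega)]
      linarith
    have e2 : F (2 * δ) ≤ gridKernel F (h N) ⌊δ / h N⌋₊ :=
      K.anti (mem_Ioi.2 (by positivity)) (mem_Ioi.2 (by positivity)) (by linarith)
    have e3 : cumSum (gridSol F (h N)) ⌊δ / h N⌋₊ ≤ 1 / F (2 * δ) := by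
      rw [le_div_iff₀ hF]
      have := mul_le_mul_of_nonneg_right e2 (H.cumSum_pos ⌊δ / h N⌋₊).le
      have := H.cumSum_le ⌊δ / h N⌋₊
      linarith
    have e4 : gridKernel F (h N) (⌊x / h N⌋₊ - ⌊δ / h N⌋₊) * cumSum (gridSol F (h N)) ⌊δ / h N⌋₊
        ≤ F (x - δ) / F (2 * δ) := by
      rw [div_eq_mul_one_div (F (x - δ))]
      exact mul_le_mul e1 e3 (H.cumSum_pos _).le (K.nonneg _)
    have e5 := hb x le_rfl
    rw [gridDensity, div_le_iff₀ hN0] at e5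
    have e6 := mul_le_mul_of_nonneg_left e5 (K.nonneg (h N))
    have e7 : gridKernel F (h N) 0 = F (h N) := by simp [gridKernel]
    rw [e7]
    linarith
  linarith

theorem lintegral_eq_one {x : ℝ} (hx : 0 < x) :
    ∫⁻ y in Ioo 0 x, ENNReal.ofReal (F (x - y) * w y) = 1 := by
  have hcover : AECover (volume.restrict (Ioo 0 x)) (𝓝[>] (0 : ℝ)) fun δ => Ioo δ x :=
    aecover_Ioo_of_Ioo (tendsto_id.mono_right nhdsWithin_le_nhds) tendsto_const_nhds
  have hcw := K.limit_continuousOn hh hw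
  have hcF : ContinuousOn (fun y => F (x - y) * w y) (Ioo 0 x) :=
    (K.cont.comp (continuousOn_const.sub continuousOn_id) fun y hy => sub_pos.2 hy.2).mul
      (hcw.mono fun y hy => hy.1)
  have hmeas : AEMeasurable (fun y => ENNReal.ofReal (F (x - y) * w y))
      (volume.restrict (Ioo 0 x)) := (hcF.aemeasurable measurableSet_Ioo).ennreal_ofReal
  have hlim := hcover.lintegral_tendsto_of_countably_generated hmeas
  have heq : ∀ᶠ δ in 𝓝[>] (0 : ℝ),
      ∫⁻ y in Ioo δ x, ENNReal.ofReal (F (x - y) * w y) ∂(volume.restrict (Ioo 0 x))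
      = ENNReal.ofReal (∫ y in Ioo δ x, F (x - y) * w y) := by
    filter_upwards [eventually_pos_lt hx] with δ hδ
    have hsub : Ioo δ x ⊆ Ioo 0 x := Ioo_subset_Ioo_left hδ.1.le
    rw [Measure.restrict_restrict measurableSet_Ioo, inter_eq_left.2 hsub]
    obtain ⟨C, hC, hC'⟩ := K.limit_le hh hw hδ.1
    refine (ofReal_integral_eq_lintegral_ofReal ?_ ?_).symm
    · refine ((K.integrableOn_comp_sub_left hδ.2.le).mul_const (C * (1 + x))).mono'
        ((hcF.mono hsub).aestronglyMeasurable measurableSet_Ioo) ?_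
      filter_upwards [ae_restrict_mem measurableSet_Ioo] with y hy
      have hn := K.limit_nonneg hh hw (hδ.1.trans hy.1)
      rw [Real.norm_of_nonneg (mul_nonneg (K.nonneg _) hn)]
      exact mul_le_mul_of_nonneg_left ((hC' y hy.1.le).trans
        (mul_le_mul_of_nonneg_left (by linarith [hy.2]) hC.le)) (K.nonneg _)
    · filter_upwards [ae_restrict_mem measurableSet_Ioo] with y hy
      exact mul_nonneg (K.nonneg _) (K.limit_nonneg hh hw (hδ.1.trans hy.1))
  have hreal : Tendsto (fun δ => ∫ y in Ioo δ x, F (x - y) * w y) (𝓝[>] 0) (𝓝 1) := by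
    have t2 : Tendsto (fun δ : ℝ => 2 * δ) (𝓝[>] 0) (𝓝[>] 0) := by
      refine tendsto_nhdsWithin_iff.2 ⟨?_, ?_⟩
      · have : Tendsto (fun δ : ℝ => 2 * δ) (𝓝 0) (𝓝 (2 * 0)) := (continuous_const_mul 2).tendsto 0
        rw [mul_zero] at this
        exact this.mono_left nhdsWithin_le_nhds
      · filter_upwards [self_mem_nhdsWithin] with δ hδ
        have : (0 : ℝ) < δ := hδ
        exact mem_Ioi.2 (by positivity)
    have t3 : Tendsto (fun δ => 1 - F (x - δ) / F (2 * δ)) (𝓝[>] 0) (𝓝 1) := by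
      have a1 : Tendsto (fun δ => F (x - δ)) (𝓝[>] 0) (𝓝 (F x)) := by
        have : Tendsto (fun δ : ℝ => x - δ) (𝓝 0) (𝓝 (x - 0)) :=
          (continuous_const.sub continuous_id).tendsto 0
        rw [sub_zero] at this
        exact ((K.cont.continuousAt (Ioi_mem_nhds hx)).tendsto.comp this).mono_left
          nhdsWithin_le_nhds
      have := (a1.div_atTop (K.tendsto.comp t2)).const_sub 1
      simpa using this
    refine tendsto_of_tendsto_of_tendsto_of_le_of_le' t3 tendsto_const_nhds ?_ ?_
    · filter_upwards [eventually_pos_lt hx, (K.tendsto.comp t2).eventually_gt_atTop 0]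
        with δ hδ hF using (K.middle_bounds hh hw hδ.1 hδ.2 hF).2
    · filter_upwards [eventually_pos_lt hx, (K.tendsto.comp t2).eventually_gt_atTop 0]
        with δ hδ hF using (K.middle_bounds hh hw hδ.1 hδ.2 hF).1
  have h1 := (ENNReal.tendsto_ofReal hreal).congr' (heq.mono fun δ h => h.symm)
  rw [ENNReal.ofReal_one] at h1
  exact tendsto_nhds_unique hlim h1

end Limit

end SonineKernel

/-- `w` is a density on `(0, ∞)` whose convolution with `F` is the Heaviside function. -/
structure SonineDual (F w : ℝ → ℝ) : Prop where
  nonneg : ∀ x, 0 ≤ w x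
  eq_zero : ∀ x ≤ 0, w x = 0
  measurable : Measurable w
  cont : ContinuousOn w (Ioi 0)
  integrable : ∀ M, IntegrableOn w (Ioc 0 M)
  le_linear : ∃ C, 0 < C ∧ ∀ x, 1 ≤ x → w x ≤ C * (1 + x)
  lintegral_eq : ∀ x, ∫⁻ y, ENNReal.ofReal (F (x - y)) * ENNReal.ofReal (w y)
    = (Ioi 0).indicator 1 x

theorem SonineKernel.exists_dual {F : ℝ → ℝ} (K : SonineKernel F) : ∃ w, SonineDual F w := by
  classical
  obtain ⟨h, v, hh, hv⟩ := K.exists_tendsto_gridDensity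
  have hcv := K.limit_continuousOn hh hv
  have hpos : ∀ {x}, 0 < x → (Ioi (0 : ℝ)).indicator v x = v x := fun hx =>
    indicator_of_mem (mem_Ioi.2 hx) v
  have hw0 : ∀ x, 0 ≤ (Ioi (0 : ℝ)).indicator v x :=
    indicator_nonneg fun x hx => K.limit_nonneg hh hv hx
  have hmeas : Measurable ((Ioi (0 : ℝ)).indicator v) := by
    rw [← piecewise_eq_indicator]
    exact hcv.measurable_piecewise continuousOn_const measurableSet_Ioi
  refine ⟨(Ioi 0).indicator v, hw0, fun x hx => indicator_of_notMem (by simpa using hx) v, hmeas,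
    hcv.congr fun x hx => hpos hx, fun M => ?_, ?_, fun x => ?_⟩
  · obtain ⟨c, hc1, hc0⟩ := ((K.tendsto.eventually_ge_atTop 1).and self_mem_nhdsWithin).exists
    have hc0 : 0 < c := hc0
    have h1 : IntegrableOn ((Ioi (0 : ℝ)).indicator v) (Ioo 0 c) := by
      refine ⟨hmeas.aestronglyMeasurable, ?_⟩
      rw [hasFiniteIntegral_iff_ofReal (Eventually.of_forall hw0)]
      refine lt_of_le_of_lt ?_ ENNReal.one_lt_top
      rw [← K.lintegral_eq_one hh hv hc0]
      refine setLIntegral_mono' measurableSet_Ioo fun y hy => ENNReal.ofReal_le_ofReal ?_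
      rw [hpos hy.1]
      have : F c ≤ F (c - y) :=
        K.anti (mem_Ioi.2 (sub_pos.2 hy.2)) (mem_Ioi.2 hc0) (by linarith [hy.1])
      exact le_mul_of_one_le_left (K.limit_nonneg hh hv hy.1) (hc1.trans this)
    have h2 : IntegrableOn ((Ioi (0 : ℝ)).indicator v) (Icc c M) :=
      ((hcv.congr fun x hx => hpos hx).mono fun y hy => hc0.trans_le hy.1).integrableOn_Icc
    refine (h1.union h2).mono_set fun y hy => ?_
    rcases lt_or_ge y c with h | h
    · exact Or.inl ⟨hy.1, h⟩
    · exact Or.inr ⟨h, hy.2⟩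
  · obtain ⟨C, hC, hC'⟩ := K.limit_le hh hv one_pos
    refine ⟨C, hC, fun x hx => ?_⟩
    rw [hpos (one_pos.trans_le hx)]
    exact hC' x hx
  · have hz : ∀ y, y ∉ Ioo 0 x →
        ENNReal.ofReal (F (x - y)) * ENNReal.ofReal ((Ioi (0 : ℝ)).indicator v y) = 0 := by
      intro y hy
      rcases le_or_gt y 0 with h | h
      · rw [indicator_of_notMem (by simpa using h), ENNReal.ofReal_zero, mul_zero]
      · have : x ≤ y := not_lt.1 fun h' => hy ⟨h, h'⟩
        rw [K.eq_zero _ (by linarith), ENNReal.ofReal_zero, zero_mul]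
    rw [← setLIntegral_eq_of_support_subset (s := Ioo 0 x) (fun y hy => by
      by_contra h
      exact hy (hz y h))]
    rcases le_or_gt x 0 with hx | hx
    · rw [Ioo_eq_empty (by simpa using hx), indicator_of_notMem (by simpa using hx)]
      simp
    · rw [indicator_of_mem (mem_Ioi.2 hx), Pi.one_apply, ← K.lintegral_eq_one hh hv hx]
      refine setLIntegral_congr_fun measurableSet_Ioo fun y hy => ?_
      rw [hpos hy.1, ENNReal.ofReal_mul (K.nonneg _)]

namespace H0

variable {φ : Measure ℝ} (H : H0 φ)
include H

theorem ae_pos : ∀ᵐ z ∂φ, 0 < z := by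
  rw [ae_iff]
  convert H.1 using 2
  ext z
  simp

theorem lintegral_min_lt_top : ∫⁻ z, ENNReal.ofReal (min (z ^ 2) z) ∂φ < ⊤ := by
  rw [← Measure.restrict_eq_self_of_ae_mem (s := Ioi 0) H.ae_pos]
  exact H.2.1

theorem meas_Ioi_lt_top {y : ℝ} (hy : 0 < y) : φ (Ioi y) < ⊤ := by
  have hm : 0 < min (y ^ 2) y := by positivity
  have h1 : ENNReal.ofReal (min (y ^ 2) y) * φ (Ioi y) < ⊤ := by
    refine lt_of_le_of_lt ?_ H.lintegral_min_lt_top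
    rw [← setLIntegral_const]
    refine (setLIntegral_mono' measurableSet_Ioi fun z hz => ?_).trans
      (setLIntegral_le_lintegral _ _)
    have hz : y < z := hz
    exact ENNReal.ofReal_le_ofReal (min_le_min (pow_le_pow_left₀ hy.le hz.le 2) hz.le)
  rcases ENNReal.mul_lt_top_iff.1 h1 with h | h | h
  · exact h.2
  · rw [ENNReal.ofReal_eq_zero] at h
    exact absurd hm (not_lt.2 h)
  · rw [h]; exact ENNReal.zero_lt_top

omit H in
theorem _root_.antitone_meas_Ioi (φ : Measure ℝ) : Antitone fun y => φ (Ioi y) :=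
  fun _ _ h => measure_mono (Ioi_subset_Ioi h)

omit H in
theorem _root_.levyTail_nonneg (φ : Measure ℝ) (y : ℝ) : 0 ≤ levyTail φ y := ENNReal.toReal_nonneg

omit H in
theorem _root_.measurable_levyTail (φ : Measure ℝ) : Measurable (levyTail φ) :=
  (antitone_meas_Ioi φ).measurable.ennreal_toReal

theorem ofReal_levyTail {y : ℝ} (hy : 0 < y) : ENNReal.ofReal (levyTail φ y) = φ (Ioi y) :=
  ENNReal.ofReal_toReal (H.meas_Ioi_lt_top hy).ne

theorem levyTail_antitoneOn : AntitoneOn (levyTail φ) (Ioi 0) := fun _ hx _ _ h =>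
  ENNReal.toReal_mono (H.meas_Ioi_lt_top hx).ne (antitone_meas_Ioi φ h)

theorem lintegral_tail_mul_min_lt_top :
    ∫⁻ y in Ioi 0, φ (Ioi y) * ENNReal.ofReal (min y 1) < ⊤ := by
  have h := lintegral_comp_eq_lintegral_meas_lt_mul φ (f := id) (g := fun t => min t 1)
    (H.ae_pos.mono fun z hz => hz.le) aemeasurable_id
    (fun t _ => (continuous_id.min continuous_const).intervalIntegrable _ _)
    (by filter_upwards [ae_restrict_mem measurableSet_Ioi] with t ht
        exact le_min (le_of_lt ht) zero_le_one)
  refine lt_of_le_of_lt (h.symm.le.trans ?_) H.lintegral_min_lt_top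
  refine lintegral_mono_ae (H.ae_pos.mono fun z hz => ENNReal.ofReal_le_ofReal ?_)
  have hi := (continuous_id.min continuous_const : Continuous fun t : ℝ => min t 1
    ).intervalIntegrable (μ := volume) 0 z
  refine le_min ?_ ?_
  · refine (intervalIntegral.integral_mono_on hz.le hi (intervalIntegrable_const (c := z))
      fun t ht => (min_le_left _ _).trans ht.2).trans ?_
    simp [pow_two]
  · refine (intervalIntegral.integral_mono_on hz.le hi (intervalIntegrable_const (c := (1 : ℝ)))
      fun t ht => min_le_right _ _).trans ?_
    simp

theorem lintegral_tail_eq_top : ∫⁻ y in Ioi 0, φ (Ioi y) = ⊤ := by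
  have h := lintegral_eq_lintegral_meas_lt φ (f := id) (H.ae_pos.mono fun z hz => hz.le)
    aemeasurable_id
  refine top_le_iff.1 (le_trans ?_ h.le)
  rw [← H.2.2]
  exact setLIntegral_le_lintegral _ _

theorem lintegral_tail_lt_top {x : ℝ} (hx : 0 < x) : ∫⁻ y in Ioi x, φ (Ioi y) < ⊤ := by
  have hm : 0 < min x 1 := by positivity
  have h1 : (∫⁻ y in Ioi x, φ (Ioi y)) * ENNReal.ofReal (min x 1) < ⊤ := by
    refine lt_of_le_of_lt ?_ H.lintegral_tail_mul_min_lt_top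
    rw [← lintegral_mul_const _ (antitone_meas_Ioi φ).measurable]
    refine (setLIntegral_mono' measurableSet_Ioi fun z hz => ?_).trans
      (lintegral_mono_set (Ioi_subset_Ioi hx.le))
    exact mul_le_mul_right (ENNReal.ofReal_le_ofReal (min_le_min_right 1 (le_of_lt hz))) _
  rcases ENNReal.mul_lt_top_iff.1 h1 with h | h | h
  · exact h.1
  · rw [h]; exact ENNReal.zero_lt_top
  · rw [ENNReal.ofReal_eq_zero] at h
    exact absurd hm (not_lt.2 h)

theorem lintegral_levyTail {x : ℝ} (hx : 0 < x) :
    ∫⁻ y in Ioi x, ENNReal.ofReal (levyTail φ y) = ∫⁻ y in Ioi x, φ (Ioi y) :=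
  setLIntegral_congr_fun measurableSet_Ioi fun _ hy => H.ofReal_levyTail (hx.trans hy)

theorem integrableOn_levyTail {x : ℝ} (hx : 0 < x) : IntegrableOn (levyTail φ) (Ioi x) := by
  refine ⟨(measurable_levyTail φ).aestronglyMeasurable, ?_⟩
  rw [hasFiniteIntegral_iff_ofReal (Eventually.of_forall (levyTail_nonneg φ)),
    H.lintegral_levyTail hx]
  exact H.lintegral_tail_lt_top hx

omit H in
theorem _root_.PhiFn_of_pos (φ : Measure ℝ) {x : ℝ} (hx : 0 < x) :
    PhiFn φ x = ∫ y in Ioi x, levyTail φ y := if_pos hx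

theorem ofReal_PhiFn {x : ℝ} (hx : 0 < x) :
    ENNReal.ofReal (PhiFn φ x) = ∫⁻ y in Ioi x, φ (Ioi y) := by
  rw [PhiFn_of_pos φ hx, ofReal_integral_eq_lintegral_ofReal (H.integrableOn_levyTail hx)
    (Eventually.of_forall (levyTail_nonneg φ)), H.lintegral_levyTail hx]

omit H in
theorem _root_.PhiFn_nonneg (φ : Measure ℝ) (x : ℝ) : 0 ≤ PhiFn φ x := by
  rw [PhiFn]
  split_ifs
  · exact setIntegral_nonneg measurableSet_Ioi fun y _ => levyTail_nonneg φ y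
  · exact le_rfl

theorem continuousOn_PhiFn : ContinuousOn (PhiFn φ) (Ioi 0) := by
  intro x hx
  have hx : 0 < x := hx
  have hx2 : 0 < x / 2 := by positivity
  have h1 := (H.integrableOn_levyTail hx2).continuousOn_Ici_primitive_Ioi.continuousAt
    (Ici_mem_nhds (half_lt_self hx))
  refine (h1.congr ?_).continuousWithinAt
  filter_upwards [Ioi_mem_nhds hx] with y hy using (PhiFn_of_pos φ hy).symm

theorem PhiFn_sub {x y : ℝ} (hx : 0 < x) (hxy : x ≤ y) :
    PhiFn φ x - PhiFn φ y = ∫ t in x..y, levyTail φ t := by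
  rw [PhiFn_of_pos φ hx, PhiFn_of_pos φ (hx.trans_le hxy),
    intervalIntegral.integral_Ioi_sub_Ioi (H.integrableOn_levyTail hx) hxy]

theorem integrableOn_PhiFn_Ioc_one : IntegrableOn (PhiFn φ) (Ioc 0 1) := by
  refine ⟨(H.continuousOn_PhiFn.mono fun x hx => hx.1).aestronglyMeasurable measurableSet_Ioc, ?_⟩
  rw [hasFiniteIntegral_iff_ofReal (Eventually.of_forall (PhiFn_nonneg φ))]
  have hT : Measurable fun y => φ (Ioi y) := (antitone_meas_Ioi φ).measurable
  have hS : MeasurableSet {p : ℝ × ℝ | p.1 < p.2} := measurableSet_lt measurable_fst measurable_snd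
  calc ∫⁻ x in Ioc 0 1, ENNReal.ofReal (PhiFn φ x)
      = ∫⁻ x in Ioc 0 1, ∫⁻ y in Ioi 0, {p : ℝ × ℝ | p.1 < p.2}.indicator
          (fun p => φ (Ioi p.2)) (x, y) := by
        refine setLIntegral_congr_fun measurableSet_Ioc fun x hx => ?_
        rw [H.ofReal_PhiFn hx.1, ← lintegral_indicator measurableSet_Ioi,
          ← lintegral_indicator measurableSet_Ioi]
        refine lintegral_congr fun y => ?_
        by_cases hy : x < y
        · simp [indicator, hy, hx.1.trans hy]
        · simp [indicator, hy]
    _ = ∫⁻ y in Ioi 0, ∫⁻ x in Ioc 0 1, {p : ℝ × ℝ | p.1 < p.2}.indicator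
          (fun p => φ (Ioi p.2)) (x, y) :=
        lintegral_lintegral_swap ((hT.comp measurable_snd).indicator hS).aemeasurable
    _ ≤ ∫⁻ y in Ioi 0, φ (Ioi y) * ENNReal.ofReal (min y 1) := by
        refine setLIntegral_mono' measurableSet_Ioi fun y hy => ?_
        have : ∀ x, {p : ℝ × ℝ | p.1 < p.2}.indicator (fun p => φ (Ioi p.2)) (x, y)
            = (Iio y).indicator (fun _ => φ (Ioi y)) x := fun x => by simp [indicator]
        simp_rw [this]
        rw [lintegral_indicator measurableSet_Iio, setLIntegral_const,
          Measure.restrict_apply measurableSet_Iio]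
        refine mul_le_mul_right ?_ _
        refine (measure_mono (t := Ioc 0 (min y 1)) fun x hx =>
          ⟨hx.2.1, le_min (le_of_lt hx.1) hx.2.2⟩).trans ?_
        rw [Real.volume_Ioc, sub_zero]
    _ < ⊤ := H.lintegral_tail_mul_min_lt_top

theorem sonineKernel : SonineKernel (PhiFn φ) where
  nonneg := PhiFn_nonneg φ
  eq_zero x hx := if_neg (not_lt.2 hx)
  anti x hx y _ hxy := by
    have h1 := H.PhiFn_sub hx hxy
    have h2 := intervalIntegral.integral_nonneg hxy (μ := volume)
      fun t _ => levyTail_nonneg φ t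
    linarith
  cont := H.continuousOn_PhiFn
  integrable M := by
    refine (H.integrableOn_PhiFn_Ioc_one.union
      ((H.continuousOn_PhiFn.mono fun y hy => one_pos.trans_le hy.1 :
        ContinuousOn (PhiFn φ) (Icc 1 M)).integrableOn_Icc)).mono_set fun y hy => ?_
    rcases le_or_gt y 1 with h | h
    · exact Or.inl ⟨hy.1, h⟩
    · exact Or.inr ⟨h.le, hy.2⟩
  convex x h hx hh := by
    have hint : ∀ a b, 0 < a → a ≤ b → IntervalIntegrable (levyTail φ) volume a b :=
      fun a b ha hab => (intervalIntegrable_iff_integrableOn_Ioc_of_le hab).2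
        ((H.integrableOn_levyTail ha).mono_set Ioc_subset_Ioi_self)
    rw [H.PhiFn_sub hx (by linarith), H.PhiFn_sub (by positivity) (by linarith),
      show x + 2 * h = x + h + h by ring,
      ← intervalIntegral.integral_comp_add_right (a := x) (b := x + h)]
    refine intervalIntegral.integral_mono_on (by linarith) ?_ (hint _ _ hx (by linarith))
      fun t ht => H.levyTail_antitoneOn (mem_Ioi.2 (by linarith [ht.1]))
        (mem_Ioi.2 (by linarith [ht.1])) (by linarith)
    simpa using (hint (x + h) (x + h + h) (by linarith) (by linarith)).comp_add_right h
  tendsto := by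
    have hcover : AECover (volume.restrict (Ioi 0)) (𝓝[>] (0 : ℝ)) fun δ => Ioi δ :=
      aecover_Ioi_of_Ioi (tendsto_id.mono_right nhdsWithin_le_nhds)
    have h1 := hcover.lintegral_tendsto_of_countably_generated
      (antitone_meas_Ioi φ).measurable.aemeasurable
    rw [H.lintegral_tail_eq_top] at h1
    refine ENNReal.tendsto_ofReal_nhds_top.1 (h1.congr' ?_)
    filter_upwards [self_mem_nhdsWithin] with δ hδ
    have hδ : 0 < δ := hδ
    rw [H.ofReal_PhiFn hδ, Measure.restrict_restrict measurableSet_Ioi,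
      inter_eq_left.2 (Ioi_subset_Ioi hδ.le)]

end H0

section Laplace

variable {f : ℝ → ℝ}

theorem integrable_cexp_mul (hm : Measurable f) (hz : ∀ x ≤ 0, f x = 0)
    (hnn : ∀ x, 0 ≤ f x) (hi : IntegrableOn f (Ioc 0 1)) {C : ℝ}
    (hC : ∀ x, 1 ≤ x → f x ≤ C * (1 + x)) {ξ : ℂ} (hξ : 0 < ξ.re) :
    Integrable fun x : ℝ => Complex.exp (-ξ * x) * (f x : ℂ) := by
  have hmeas : Measurable fun x : ℝ => Complex.exp (-ξ * x) * (f x : ℂ) := by fun_prop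
  have hnorm : ∀ x : ℝ, ‖Complex.exp (-ξ * x) * (f x : ℂ)‖ = Real.exp (-ξ.re * x) * f x := by
    intro x
    rw [norm_mul, Complex.norm_exp, Complex.norm_of_nonneg (hnn x)]
    simp
  have h0 : IntegrableOn (fun x : ℝ => Complex.exp (-ξ * x) * (f x : ℂ)) (Iic 0) := by
    refine (integrableOn_zero (s := Iic (0 : ℝ))).congr_fun (fun x hx => ?_) measurableSet_Iic
    simp [hz x hx]
  have h1 : IntegrableOn (fun x : ℝ => Complex.exp (-ξ * x) * (f x : ℂ)) (Ioc 0 1) := by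
    refine hi.mono' hmeas.aestronglyMeasurable ?_
    filter_upwards [ae_restrict_mem measurableSet_Ioc] with x hx
    rw [hnorm]
    refine mul_le_of_le_one_left (hnn x) (Real.exp_le_one_iff.2 ?_)
    have := mul_pos hξ hx.1
    linarith
  have h2 : IntegrableOn (fun x : ℝ => Complex.exp (-ξ * x) * (f x : ℂ)) (Ioi 1) := by
    have e1 := (integrableOn_rpow_mul_exp_neg_mul_rpow (s := 1) (p := 1) (b := ξ.re)
      (by norm_num) one_pos hξ).mono_set (Ioi_subset_Ioi zero_le_one)
    simp only [Real.rpow_one] at e1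
    have e2 := (exp_neg_integrableOn_Ioi 1 hξ).add e1
    refine (e2.const_mul C).mono' hmeas.aestronglyMeasurable ?_
    filter_upwards [ae_restrict_mem measurableSet_Ioi] with x hx
    rw [hnorm]
    refine (mul_le_mul_of_nonneg_left (hC x (le_of_lt hx)) (Real.exp_pos _).le).trans_eq ?_
    simp only [Pi.add_apply]
    ring
  have h3 := (h0.union h1).union h2
  rwa [Iic_union_Ioc_eq_Iic zero_le_one, Iic_union_Ioi, integrableOn_univ] at h3

theorem SonineKernel.integrable_cexp_mul {F : ℝ → ℝ} (K : SonineKernel F) {ξ : ℂ}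
    (hξ : 0 < ξ.re) : Integrable fun x : ℝ => Complex.exp (-ξ * x) * (F x : ℂ) := by
  refine _root_.integrable_cexp_mul K.measurable K.eq_zero K.nonneg (K.integrable 1) (C := F 1)
    (fun x hx => ?_) hξ
  have h1 := K.anti (mem_Ioi.2 one_pos) (mem_Ioi.2 (one_pos.trans_le hx)) hx
  nlinarith [K.nonneg 1]

namespace SonineDual

variable {F w : ℝ → ℝ} (W : SonineDual F w)
include W

theorem integrable_cexp_mul {ξ : ℂ} (hξ : 0 < ξ.re) :
    Integrable fun x : ℝ => Complex.exp (-ξ * x) * (w x : ℂ) := by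
  obtain ⟨C, -, hC⟩ := W.le_linear
  exact _root_.integrable_cexp_mul W.measurable W.eq_zero W.nonneg (W.integrable 1) hC hξ

theorem integral_mul_eq (K : SonineKernel F) (x : ℝ) :
    ∫ y, F (x - y) * w y = (Ioi (0 : ℝ)).indicator 1 x := by
  have hF : Measurable fun y => F (x - y) := K.measurable.comp (measurable_const.sub measurable_id)
  rw [integral_eq_lintegral_of_nonneg_ae
    (Eventually.of_forall fun y => mul_nonneg (K.nonneg _) (W.nonneg y))
    (hF.mul W.measurable).aestronglyMeasurable]
  simp_rw [ENNReal.ofReal_mul (K.nonneg _)]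
  rw [W.lintegral_eq]
  by_cases hx : 0 < x <;> simp [indicator, hx]

theorem laplace_mul (K : SonineKernel F) {ξ : ℂ} (hξ : 0 < ξ.re) :
    (∫ x : ℝ, Complex.exp (-ξ * x) * (w x : ℂ)) * ∫ x : ℝ, Complex.exp (-ξ * x) * (F x : ℂ)
      = 1 / ξ := by
  have h := integral_convolution (ContinuousLinearMap.mul ℝ ℂ)
    (W.integrable_cexp_mul hξ) (K.integrable_cexp_mul hξ)
  rw [ContinuousLinearMap.mul_apply'] at h
  rw [← h]
  have hconv : ∀ x : ℝ, (convolution (fun x : ℝ => Complex.exp (-ξ * x) * (w x : ℂ))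
      (fun x : ℝ => Complex.exp (-ξ * x) * (F x : ℂ)) (ContinuousLinearMap.mul ℝ ℂ) volume) x
      = (Ioi (0 : ℝ)).indicator (fun x : ℝ => Complex.exp (-ξ * x)) x := by
    intro x
    have e1 : ∀ t : ℝ, Complex.exp (-ξ * t) * (w t : ℂ)
        * (Complex.exp (-ξ * ((x - t : ℝ) : ℂ)) * (F (x - t) : ℂ))
        = Complex.exp (-ξ * x) * ((F (x - t) * w t : ℝ) : ℂ) := by
      intro t
      rw [show -ξ * (x : ℂ) = -ξ * t + -ξ * ((x - t : ℝ) : ℂ) by push_cast; ring, Complex.exp_add]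
      push_cast
      ring
    rw [convolution_def]
    simp_rw [ContinuousLinearMap.mul_apply', e1]
    rw [integral_const_mul, integral_complex_ofReal, W.integral_mul_eq K]
    by_cases hx : 0 < x <;> simp [indicator, hx]
  simp_rw [hconv]
  rw [integral_indicator measurableSet_Ioi, integral_exp_mul_complex_Ioi (by simpa using hξ)]
  simp

theorem laplace_eq (K : SonineKernel F) {ξ : ℂ} (hξ : 0 < ξ.re) :
    ∫ x in Ioi (0 : ℝ), Complex.exp (-ξ * x) * (w x : ℂ)
      = ξ / (ξ ^ 2 * ∫ x in Ioi (0 : ℝ), Complex.exp (-ξ * x) * (F x : ℂ)) := by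
  have hz : ∀ {f : ℝ → ℝ}, (∀ x ≤ 0, f x = 0) →
      ∫ x in Ioi (0 : ℝ), Complex.exp (-ξ * x) * (f x : ℂ)
      = ∫ x : ℝ, Complex.exp (-ξ * x) * (f x : ℂ) := fun hf =>
    setIntegral_eq_integral_of_forall_compl_eq_zero fun x hx => by
      simp [hf x (by simpa using hx)]
  rw [hz W.eq_zero, hz K.eq_zero]
  have h := W.laplace_mul K hξ
  have hξ0 : ξ ≠ 0 := by
    rintro rfl
    simp at hξ
  have hne : ∫ x : ℝ, Complex.exp (-ξ * x) * (F x : ℂ) ≠ 0 := by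
    intro h0
    rw [h0, mul_zero] at h
    exact one_div_ne_zero hξ0 h.symm
  rw [eq_div_iff (mul_ne_zero (pow_ne_zero 2 hξ0) hne)]
  calc _ = ξ ^ 2 * ((∫ x : ℝ, Complex.exp (-ξ * x) * (w x : ℂ)) *
        ∫ x : ℝ, Complex.exp (-ξ * x) * (F x : ℂ)) := by ring
    _ = ξ := by
      rw [h]
      field_simp

theorem tendsto_exp_mul {ε : ℝ} (hε : 0 < ε) :
    Tendsto (fun x => Real.exp (-ε * x) * w (x + 1)) atTop (𝓝 0) := by
  obtain ⟨C, hC, hC'⟩ := W.le_linear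
  have h1 : Tendsto (fun x : ℝ => Real.exp (-ε * x)) atTop (𝓝 0) :=
    Real.tendsto_exp_atBot.comp (tendsto_id.const_mul_atTop_of_neg (neg_neg_of_pos hε))
  have h2 : Tendsto (fun x : ℝ => x ^ (1 : ℝ) * Real.exp (-ε * x)) atTop (𝓝 0) :=
    tendsto_rpow_mul_exp_neg_mul_atTop_nhds_zero 1 ε hε
  have h3 := ((h1.const_mul 2).add h2).const_mul C
  simp only [mul_zero, add_zero, Real.rpow_one] at h3
  refine squeeze_zero' (Eventually.of_forall fun x =>
    mul_nonneg (Real.exp_pos _).le (W.nonneg _)) ?_ h3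
  filter_upwards [eventually_ge_atTop 0] with x hx
  have := mul_le_mul_of_nonneg_left (hC' (x + 1) (by linarith)) (Real.exp_pos (-ε * x)).le
  linarith

end SonineDual

end Laplace

theorem setLIntegral_Iic_eq_setLIntegral_Ici_sub (g : ℝ → ENNReal) (y : ℝ) :
    ∫⁻ z in Iic y, g z = ∫⁻ t in Ici 0, g (y - t) := by
  rw [← lintegral_indicator measurableSet_Iic, ← lintegral_indicator measurableSet_Ici,
    ← lintegral_sub_left_eq_self _ y]
  refine lintegral_congr fun t => ?_
  simp [indicator]

/-- A nonnegative measurable function vanishing on `(-∞, -1]` and integrable on all `(-∞, x]`. -/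
structure TailIntegrable (g : ℝ → ℝ) : Prop where
  nonneg : ∀ x, 0 ≤ g x
  eq_zero : ∀ x ≤ -1, g x = 0
  measurable : Measurable g
  integrable : ∀ x, IntegrableOn g (Iic x)

namespace TailIntegrable

variable {g : ℝ → ℝ} (H : TailIntegrable g)
include H

theorem primitive : TailIntegrable fun x => ∫ y in Iic x, g y := by
  have hmono : Monotone fun x => ∫ y in Iic x, g y := fun x y h =>
    setIntegral_mono_set (H.integrable y) (Eventually.of_forall H.nonneg)
      (Iic_subset_Iic.2 h).eventuallyLE
  have hz : ∀ x ≤ -1, ∫ y in Iic x, g y = 0 := fun x hx =>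
    setIntegral_eq_zero_of_forall_eq_zero fun y hy => H.eq_zero y (le_trans hy hx)
  refine ⟨fun x => integral_nonneg H.nonneg, hz, hmono.measurable, fun x => ?_⟩
  have h1 : IntegrableOn (fun x => ∫ y in Iic x, g y) (Iic (-1)) :=
    integrableOn_zero.congr_fun (fun y hy => (hz y hy).symm) measurableSet_Iic
  have h2 : IntegrableOn (fun x => ∫ y in Iic x, g y) (Icc (-1) x) :=
    (hmono.locallyIntegrable).integrableOn_isCompact isCompact_Icc
  refine (h1.union h2).mono_set fun y hy => ?_
  rcases le_total y (-1) with h | h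
  · exact Or.inl h
  · exact Or.inr ⟨h, hy⟩

theorem ofReal_primitive (y : ℝ) :
    ENNReal.ofReal (∫ z in Iic y, g z) = ∫⁻ t in Ici 0, ENNReal.ofReal (g (y - t)) := by
  rw [ofReal_integral_eq_lintegral_ofReal (H.integrable y) (Eventually.of_forall H.nonneg),
    setLIntegral_Iic_eq_setLIntegral_Ici_sub]

theorem lintegral_mul_primitive {F : ℝ → ℝ} (hF : Measurable F) (x : ℝ) :
    ∫⁻ y, ENNReal.ofReal (F (x - y)) * ENNReal.ofReal (∫ z in Iic y, g z)
      = ∫⁻ z in Iic x, ∫⁻ y, ENNReal.ofReal (F (z - y)) * ENNReal.ofReal (g y) := by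
  have hg := H.measurable
  rw [setLIntegral_Iic_eq_setLIntegral_Ici_sub]
  calc _ = ∫⁻ y, ∫⁻ t in Ici 0, ENNReal.ofReal (F (x - y)) * ENNReal.ofReal (g (y - t)) := by
        refine lintegral_congr fun y => ?_
        rw [H.ofReal_primitive, lintegral_const_mul _ (by fun_prop)]
    _ = ∫⁻ t in Ici 0, ∫⁻ y, ENNReal.ofReal (F (x - y)) * ENNReal.ofReal (g (y - t)) :=
        lintegral_lintegral_swap (by fun_prop)
    _ = _ := by
        refine lintegral_congr fun t => ?_
        rw [← lintegral_sub_right_eq_self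
          (fun y => ENNReal.ofReal (F (x - t - y)) * ENNReal.ofReal (g y)) t]
        simp only [sub_sub_sub_cancel_right]

end TailIntegrable

theorem TailIntegrable.kIter {k : ℝ → ℝ} (H : TailIntegrable k) (m : ℕ) :
    TailIntegrable (kIter k m) := by
  induction m with
  | zero => exact H
  | succ m ih => exact ih.primitive

theorem lintegral_Iic_pow_div_factorial (m : ℕ) (x : ℝ) :
    ∫⁻ z in Iic x, ENNReal.ofReal (if -1 < z then (1 + z) ^ m / (m.factorial : ℝ) else 0)
      = ENNReal.ofReal (if -1 < x then (1 + x) ^ (m + 1) / ((m + 1).factorial : ℝ) else 0) := by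
  have hnn : ∀ z ∈ Ioc (-1) x, 0 ≤ (1 + z) ^ m / (m.factorial : ℝ) := fun z hz => by
    have : 0 ≤ 1 + z := by linarith [hz.1]
    positivity
  have h1 : ∫⁻ z in Iic x, ENNReal.ofReal (if -1 < z then (1 + z) ^ m / (m.factorial : ℝ) else 0)
      = ∫⁻ z in Ioc (-1) x, ENNReal.ofReal ((1 + z) ^ m / (m.factorial : ℝ)) := by
    rw [← lintegral_indicator measurableSet_Iic, ← lintegral_indicator measurableSet_Ioc]
    refine lintegral_congr fun z => ?_
    by_cases hz : -1 < z <;> simp [indicator, hz]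
  rw [h1]
  split_ifs with hx
  · have hc : Continuous fun z : ℝ => (1 + z) ^ m / (m.factorial : ℝ) := by fun_prop
    rw [← ofReal_integral_eq_lintegral_ofReal
      ((hc.integrableOn_Icc (a := -1) (b := x)).mono_set Ioc_subset_Icc_self)
      ((ae_restrict_mem measurableSet_Ioc).mono hnn), ← intervalIntegral.integral_of_le hx.le,
      intervalIntegral.integral_div, intervalIntegral.integral_comp_add_left (fun z => z ^ m) 1,
      integral_pow, Nat.factorial_succ]
    congr 1
    push_cast
    have : (m.factorial : ℝ) ≠ 0 := by positivity
    field_simp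
    simp
  · rw [Ioc_eq_empty hx]
    simp

namespace SonineDual

variable {F w : ℝ → ℝ} (W : SonineDual F w)
include W

theorem tailIntegrable : TailIntegrable fun x => w (x + 1) where
  nonneg x := W.nonneg _
  eq_zero x hx := W.eq_zero _ (by linarith)
  measurable := W.measurable.comp (measurable_id.add_const 1)
  integrable x := by
    have h1 : IntegrableOn w (Iic 0) :=
      integrableOn_zero.congr_fun (fun y hy => (W.eq_zero y hy).symm) measurableSet_Iic
    have h2 : IntegrableOn w (Iic (x + 1)) := by
      refine (h1.union (W.integrable (x + 1))).mono_set fun y hy => ?_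
      rcases le_or_gt y 0 with h | h
      · exact Or.inl h
      · exact Or.inr ⟨h, hy⟩
    have h3 := ((integrable_indicator_iff measurableSet_Iic).2 h2).comp_add_right 1
    refine (integrable_indicator_iff measurableSet_Iic).1 (h3.congr ?_)
    exact Eventually.of_forall fun y => by simp [indicator]

theorem lintegral_mul_kIter (hF : Measurable F) (m : ℕ) (x : ℝ) :
    ∫⁻ y, ENNReal.ofReal (F (x - y)) * ENNReal.ofReal (kIter (fun x => w (x + 1)) m y)
      = ENNReal.ofReal (if -1 < x then (1 + x) ^ m / (m.factorial : ℝ) else 0) := by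
  induction m generalizing x with
  | zero =>
    have h := lintegral_add_right_eq_self (μ := volume)
      (fun y => ENNReal.ofReal (F (x + 1 - y)) * ENNReal.ofReal (w y)) 1
    simp only [add_sub_add_right_eq_sub, W.lintegral_eq] at h
    refine h.trans ?_
    have : 0 < x + 1 ↔ -1 < x := by constructor <;> intro h <;> linarith
    by_cases hx : -1 < x <;> simp [indicator, this, hx]
  | succ m ih =>
    rw [← lintegral_Iic_pow_div_factorial]
    exact ((W.tailIntegrable.kIter m).lintegral_mul_primitive hF x).trans (lintegral_congr ih)

theorem integral_mul_kIter (K : SonineKernel F) (m : ℕ) (x : ℝ) :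
    ∫ y, F (x - y) * kIter (fun x => w (x + 1)) m y
      = if -1 < x then (1 + x) ^ m / (m.factorial : ℝ) else 0 := by
  have H := W.tailIntegrable.kIter m
  have hF : Measurable fun y => F (x - y) := K.measurable.comp (measurable_const.sub measurable_id)
  rw [integral_eq_lintegral_of_nonneg_ae
    (Eventually.of_forall fun y => mul_nonneg (K.nonneg _) (H.nonneg y))
    (hF.mul H.measurable).aestronglyMeasurable]
  simp_rw [ENNReal.ofReal_mul (K.nonneg _)]
  rw [W.lintegral_mul_kIter K.measurable, ENNReal.toReal_ofReal]
  split_ifs with hx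
  · have : 0 ≤ 1 + x := by linarith
    positivity
  · exact le_rfl

end SonineDual

/-- existence of the scale kernel `k₋₁` and the convolution identities
`(Φ ⋆ kₙ⁺)(x) = (1+x)^{n+1}/(n+1)! · 1_{x > -1}` for all `n ≥ -1`. -/
theorem scale_kernel_exists (φ : Measure ℝ) (hH0 : H0 φ) :
    ∃ k : ℝ → ℝ,
      (∀ x : ℝ, x < -1 → k x = 0) ∧
      (∀ x : ℝ, -1 ≤ x → 0 ≤ k x) ∧
      ContinuousOn k (Ioi (-1)) ∧
      LocallyIntegrableOn k (Ici (-1)) ∧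
      (∀ ε : ℝ, 0 < ε →
        Tendsto (fun x : ℝ => Real.exp (-ε * x) * k x) atTop (nhds 0)) ∧
      (∀ ξ : ℂ, 0 < ξ.re →
        IntegrableOn (fun y : ℝ => Complex.exp (-ξ * (y : ℂ)) * (k (y - 1) : ℂ)) (Ioi 0) ∧
        (∫ y in Ioi (0 : ℝ), Complex.exp (-ξ * (y : ℂ)) * (k (y - 1) : ℂ)) =
          ξ / psiFn φ ξ) ∧
      (∀ m : ℕ, ∀ x : ℝ,
        (∫ y : ℝ, PhiFn φ (x - y) * kIter k m y) =
          if -1 < x then (1 + x) ^ m / (Nat.factorial m : ℝ) else 0) := by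
  have K := hH0.sonineKernel
  obtain ⟨w, W⟩ := K.exists_dual
  have H := W.tailIntegrable
  refine ⟨fun x => w (x + 1), fun x hx => H.eq_zero x hx.le, fun x _ => H.nonneg x,
    W.cont.comp (by fun_prop) fun x hx => by simpa using neg_lt_iff_pos_add.1 hx, ?_,
    fun ε hε => W.tendsto_exp_mul hε, fun ξ hξ => ?_, W.integral_mul_kIter K⟩
  · have hloc : LocallyIntegrable fun x => w (x + 1) := fun x =>
      ⟨Iic (x + 1), Iic_mem_nhds (lt_add_one x), H.integrable _⟩
    exact hloc.locallyIntegrableOn _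
  · simp only [sub_add_cancel]
    exact ⟨(W.integrable_cexp_mul hξ).integrableOn, W.laplace_eq K hξ⟩
end
end

section
/- Under (H0), assume in addition that the tail x ↦ φ((x,∞)) is completely monotone on (0,∞). Then there exists a function k₋₂, continuous on (−1,∞), such that y ↦ y² k₋₂(y−1) is integrable on (0,1) and of sub-exponential growth on [1,∞), and ∫_0^∞ e^{−ξy} y² k₋₂(y−1) dy = (d²/dξ²)(ξ²/ψ(ξ)) for every complex ξ with Re ξ > 0. -/
open MeasureTheory Set Filter Topology

noncomputable section

theorem sum_choose_mul_of_eq_add (D : ℕ → ℕ → ℝ)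
    (hD : ∀ j n, D j n = D j (n + 1) + D (j + 1) n) (N : ℕ) :
    ∀ m n, ∑ k ∈ Finset.range (N + 1), (N.choose k : ℝ) * D (m + (N - k)) (n + k) = D m n := by
  suffices H : ∀ m n, ∑ ij ∈ Finset.HasAntidiagonal.antidiagonal N,
      (N.choose ij.1 : ℝ) * D (m + ij.2) (n + ij.1) = D m n by
    intro m n
    rw [← H m n, Finset.Nat.sum_antidiagonal_eq_sum_range_succ_mk]
  induction N with
  | zero => simp
  | succ N ih =>
    intro m n
    rw [Finset.sum_antidiagonal_choose_succ_mul (fun i j => D (m + j) (n + i)) N, hD m n,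
      ← ih m (n + 1), ← ih (m + 1) n, add_comm]
    congr 1
    · refine Finset.sum_congr rfl fun ij hij => ?_
      rw [Nat.choose_symm_of_eq_add (Finset.HasAntidiagonal.mem_antidiagonal.1 hij).symm]
      congr 2; ring
    · refine Finset.sum_congr rfl fun ij _ => ?_
      congr 2; ring

theorem sum_choose_mul_choose_of_eq_add (D : ℕ → ℕ → ℝ)
    (hD : ∀ j n, D j n = D j (n + 1) + D (j + 1) n) {n N : ℕ} (hn : n ≤ N) :
    ∑ k ∈ Finset.range (N + 1),
      (N.choose k * D (N - k) k) * ((k.choose n : ℝ) / N.choose n) = D 0 n := by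
  obtain ⟨M, rfl⟩ := Nat.exists_eq_add_of_le hn
  rw [add_assoc, Finset.sum_range_add, Finset.sum_eq_zero, zero_add,
    ← sum_choose_mul_of_eq_add D hD M 0 n]
  · refine Finset.sum_congr rfl fun k hk => ?_
    have hk' : k ≤ M := Nat.lt_succ_iff.1 (Finset.mem_range.1 hk)
    have h1 := Nat.choose_mul (n := n + M) (k := n + k) (s := n) (by omega)
    have h2 : ((n + M).choose n : ℝ) ≠ 0 := by
      exact_mod_cast (Nat.choose_pos hn).ne'
    have h3 : n + M - n = M := by omega
    have h4 : n + k - n = k := by omega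
    have h5 : n + M - (n + k) = 0 + (M - k) := by omega
    rw [h3, h4] at h1
    have h1' : ((n + M).choose (n + k) : ℝ) * (n + k).choose n = (n + M).choose n * M.choose k := by
      exact_mod_cast h1
    rw [h5]
    field_simp
    linear_combination D (0 + (M - k)) (n + k) * h1'
  · intro k hk
    simp [Nat.choose_eq_zero_of_lt (Finset.mem_range.1 hk)]

theorem abs_div_pow_sub_choose_div_choose_le {k N : ℕ} (hk : k ≤ N) (hN : 0 < N) :
    ∀ n ≤ N, |((k : ℝ) / N) ^ n - (k.choose n : ℝ) / N.choose n| ≤ (n : ℝ) ^ 2 / N := by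
  have hN' : (0 : ℝ) < N := by exact_mod_cast hN
  have he : ∀ n ≤ N, 0 ≤ (k.choose n : ℝ) / N.choose n ∧ (k.choose n : ℝ) / N.choose n ≤ 1 := by
    intro n hn
    refine ⟨by positivity, ?_⟩
    rw [div_le_one (by exact_mod_cast Nat.choose_pos hn)]
    exact_mod_cast Nat.choose_le_choose n hk
  intro n
  induction n with
  | zero => simp
  | succ n ih =>
    intro hn
    have ih := ih (by omega)
    have key : ((N : ℝ) - n) * ((k.choose (n + 1) : ℝ) / N.choose (n + 1)) =
        ((k : ℝ) - n) * ((k.choose n : ℝ) / N.choose n) := by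
      have h (M : ℕ) : (M.choose (n + 1) : ℝ) * (n + 1) = M.choose n * ((M : ℝ) - n) := by
        rcases le_or_gt n M with h | h
        · have := Nat.choose_succ_right_eq M n
          rw [← Nat.cast_sub h]
          exact_mod_cast this
        · simp [Nat.choose_eq_zero_of_lt h, Nat.choose_eq_zero_of_lt (h.trans (Nat.lt_succ_self n))]
      have h1 := h k
      have h2 := h N
      have h3 : (N.choose n : ℝ) ≠ 0 := by
        exact_mod_cast (Nat.choose_pos (by omega : n ≤ N)).ne'
      have h4 : (N.choose (n + 1) : ℝ) ≠ 0 := by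
        exact_mod_cast (Nat.choose_pos hn).ne'
      have h5 : (n + 1 : ℝ) ≠ 0 := by positivity
      field_simp
      apply mul_left_cancel₀ h5
      linear_combination ((N : ℝ) - n) * N.choose n * h1 - ((k : ℝ) - n) * k.choose n * h2
    set e := (k.choose n : ℝ) / N.choose n
    set e' := (k.choose (n + 1) : ℝ) / N.choose (n + 1)
    have hdec : ((k : ℝ) / N) ^ (n + 1) - e' =
        (k : ℝ) / N * (((k : ℝ) / N) ^ n - e) + n / N * (e - e') := by
      have hq : (k : ℝ) / N * e - e' = n / N * (e - e') := by
        field_simp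
        linear_combination (-1 : ℝ) * key
      linear_combination hq
    have hk1 : |(k : ℝ) / N| ≤ 1 := by
      rw [abs_of_nonneg (by positivity), div_le_one hN']
      exact_mod_cast hk
    have hee : |e - e'| ≤ 1 := by
      have h1 := he n (by omega)
      have h2 := he (n + 1) hn
      rw [abs_le]
      constructor <;> linarith [h1.1, h1.2, h2.1, h2.2]
    rw [hdec]
    calc _ ≤ |(k : ℝ) / N * (((k : ℝ) / N) ^ n - e)| + |n / N * (e - e')| := abs_add_le _ _
      _ ≤ 1 * ((n : ℝ) ^ 2 / N) + n / N * 1 := by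
        rw [abs_mul, abs_mul, abs_of_nonneg (by positivity : (0 : ℝ) ≤ n / N)]
        gcongr
      _ ≤ _ := by
        push_cast
        rw [one_mul, mul_one, ← add_div]
        gcongr
        nlinarith [(Nat.cast_nonneg n : (0 : ℝ) ≤ n)]

/-- The **Hausdorff moment theorem**: a completely monotone sequence, given together with the
array of its iterated differences, is the moment sequence of a finite measure on `[0, 1]`. -/
theorem exists_measure_forall_integral_pow_eq (D : ℕ → ℕ → ℝ) (h0 : ∀ j n, 0 ≤ D j n)
    (hD : ∀ j n, D j n = D j (n + 1) + D (j + 1) n) :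
    ∃ μ : Measure unitInterval, IsFiniteMeasure μ ∧ ∀ n, D 0 n = ∫ s, (s : ℝ) ^ n ∂μ := by
  let w : ℕ → ℕ → ℝ := fun N k => N.choose k * D (N - k) k
  have hw : ∀ N k, 0 ≤ w N k := fun N k => mul_nonneg (Nat.cast_nonneg _) (h0 _ _)
  have hwsum : ∀ N, ∑ k ∈ Finset.range (N + 1), w N k = D 0 0 := by
    intro N
    simpa [w] using sum_choose_mul_of_eq_add D hD N 0 0
  let pt : ℕ → ℕ → unitInterval := fun N k => Set.projIcc 0 1 zero_le_one ((k : ℝ) / N)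
  let ν : ℕ → Measure unitInterval := fun N =>
    ∑ k ∈ Finset.range (N + 1), ENNReal.ofReal (w N k) • Measure.dirac (pt N k)
  have hν_univ : ∀ N, ν N univ = ENNReal.ofReal (D 0 0) := by
    intro N
    simp only [ν, Measure.coe_finsetSum, Finset.sum_apply, Measure.smul_apply, measure_univ,
      smul_eq_mul, mul_one]
    rw [← ENNReal.ofReal_sum_of_nonneg fun k _ => hw N k, hwsum]
  have hνfin : ∀ N, IsFiniteMeasure (ν N) := fun N =>
    ⟨by rw [hν_univ]; exact ENNReal.ofReal_lt_top⟩
  let νf : ℕ → FiniteMeasure unitInterval := fun N => ⟨ν N, hνfin N⟩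
  have hνint : ∀ N n, ∫ s, (s : ℝ) ^ n ∂(ν N) =
      ∑ k ∈ Finset.range (N + 1), w N k * ((pt N k : ℝ)) ^ n := by
    intro N n
    rw [integral_finsetSum_measure]
    · refine Finset.sum_congr rfl fun k _ => ?_
      rw [integral_smul_measure, integral_dirac, ENNReal.toReal_ofReal (hw N k), smul_eq_mul]
    · intro k _
      refine Integrable.smul_measure ?_ ENNReal.ofReal_ne_top
      exact (by fun_prop : Continuous fun s : unitInterval => (s : ℝ) ^ n
        ).integrable_of_hasCompactSupport
        (HasCompactSupport.of_compactSpace _)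
  have hlim : ∀ n, Tendsto (fun N => ∫ s, (s : ℝ) ^ n ∂(ν N)) atTop (𝓝 (D 0 n)) := by
    intro n
    rw [tendsto_iff_norm_sub_tendsto_zero]
    have hb : Tendsto (fun N : ℕ => D 0 0 * ((n : ℝ) ^ 2 / N)) atTop (𝓝 0) := by
      simpa using (tendsto_const_div_atTop_nhds_zero_nat ((n : ℝ) ^ 2)).const_mul (D 0 0)
    refine squeeze_zero' (Eventually.of_forall fun _ => norm_nonneg _) ?_ hb
    filter_upwards [eventually_ge_atTop (max n 1)] with N hN
    have hN1 : 0 < N := by omega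
    have hnN : n ≤ N := by omega
    rw [hνint, ← sum_choose_mul_choose_of_eq_add D hD hnN, ← Finset.sum_sub_distrib, ← hwsum N,
      Finset.sum_mul]
    refine (norm_sum_le _ _).trans (Finset.sum_le_sum fun k hk => ?_)
    have hkN : k ≤ N := Nat.lt_succ_iff.1 (Finset.mem_range.1 hk)
    have hpt : (pt N k : ℝ) = (k : ℝ) / N := by
      have : ((k : ℝ) / N) ∈ Icc (0 : ℝ) 1 :=
        ⟨by positivity, div_le_one_of_le₀ (by exact_mod_cast hkN) (by positivity)⟩
      simp only [pt, projIcc_of_mem zero_le_one this]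
    rw [hpt, ← mul_sub, norm_mul, Real.norm_of_nonneg (hw N k)]
    exact mul_le_mul_of_nonneg_left (abs_div_pow_sub_choose_div_choose_le hkN hN1 n hnN) (hw N k)
  let U : Ultrafilter ℕ := hyperfilter ℕ
  have hU : (U : Filter ℕ) ≤ atTop := Nat.hyperfilter_le_atTop
  have hmass : ∀ N, (νf N).mass = (ENNReal.ofReal (D 0 0)).toNNReal := by
    intro N
    rw [← hν_univ N]; rfl
  obtain ⟨μ, -, hμ⟩ := (isCompact_setOfPred_finiteMeasure_eq_of_compactSpace unitInterval
    (ENNReal.ofReal (D 0 0)).toNNReal).ultrafilter_le_nhds (U.map νf) (by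
      rw [le_principal_iff]
      exact Filter.mem_map.2 (Filter.Eventually.of_forall hmass))
  refine ⟨μ, inferInstance, fun n => ?_⟩
  have h1 := (FiniteMeasure.tendsto_iff_forall_integral_tendsto (F := (U : Filter ℕ)) (μs := νf)
    (μ := μ)).1 hμ (BoundedContinuousFunction.mkOfCompact
      ⟨fun s : unitInterval => (s : ℝ) ^ n, by fun_prop⟩)
  exact tendsto_nhds_unique ((hlim n).mono_left hU) h1

theorem bilin_pow_mul_one_sub_pow_nonneg {V : Type*} [AddCommGroup V] [Module ℝ V]
    (B : V →ₗ[ℝ] V →ₗ[ℝ] ℝ) (T : Module.End ℝ V) (hsymm : ∀ x y, B (T x) y = B x (T y))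
    (hT : ∀ x, 0 ≤ B x (T x)) (hT' : ∀ x, B x (T x) ≤ B x x) (n j : ℕ) (b : V) :
    0 ≤ B b ((T ^ n * (1 - T) ^ j) b) := by
  set S : Module.End ℝ V := 1 - T with hS
  have hcomm : Commute T S := (Commute.one_right T).sub_right (Commute.refl T)
  have hSsymm : ∀ x y, B (S x) y = B x (S y) := fun x y => by simp [hS, hsymm]
  have hSnn : ∀ x, 0 ≤ B x (S x) := fun x => by simpa [hS] using hT' x
  have hTSnn : ∀ x, 0 ≤ B x ((T * S) x) := fun x => by
    have h : T * S = T * S * T + S * T * S := by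
      have h1 : T + S = 1 := by simp [hS]
      calc T * S = T * S * (T + S) := by rw [h1, mul_one]
        _ = _ := by rw [mul_add, hcomm.eq]
    rw [h]
    have h2 := hSnn (T x)
    have h3 := hT (S x)
    rw [hsymm] at h2
    rw [hSsymm] at h3
    simpa using add_nonneg h2 h3
  have hpow : ∀ (R : Module.End ℝ V), (∀ x y, B (R x) y = B x (R y)) → ∀ (p : ℕ) (x y),
      B ((R ^ p) x) y = B x ((R ^ p) y) := by
    intro R hR p
    induction p with
    | zero => simp
    | succ p ih =>
      intro x y
      rw [pow_succ, Module.End.mul_apply, ih, hR, ← Module.End.mul_apply, ← pow_succ', pow_succ]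
  have hQ : ∀ (p q : ℕ) (R : Module.End ℝ V), Commute T R → Commute S R →
      (∀ x, 0 ≤ B x (R x)) → 0 ≤ B b ((T ^ (2 * p) * S ^ (2 * q) * R) b) := by
    intro p q R hTR hSR hR
    have hc : Commute (T ^ p) (S ^ q) := hcomm.pow_pow p q
    have h : T ^ (2 * p) * S ^ (2 * q) * R = T ^ p * (S ^ q * (R * (S ^ q * T ^ p))) := by
      have h1 : Commute (S ^ q * T ^ p) R := (hSR.pow_left q).mul_left (hTR.pow_left p)
      have h2 : T ^ p * (S ^ q * S ^ q) = S ^ q * S ^ q * T ^ p := (hc.mul_right hc).eq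
      calc T ^ (2 * p) * S ^ (2 * q) * R = T ^ p * (T ^ p * (S ^ q * S ^ q)) * R := by
            rw [two_mul, two_mul, pow_add, pow_add, mul_assoc (T ^ p)]
        _ = T ^ p * (S ^ q * (S ^ q * T ^ p * R)) := by rw [h2]; simp only [mul_assoc]
        _ = _ := by rw [h1.eq]
    rw [h, Module.End.mul_apply, ← hpow T hsymm, Module.End.mul_apply, ← hpow S hSsymm]
    have := hR (((S ^ q) * (T ^ p)) b)
    simpa only [Module.End.mul_apply] using this
  obtain ⟨p, rfl | rfl⟩ := Nat.even_or_odd' n <;> obtain ⟨q, rfl | rfl⟩ := Nat.even_or_odd' j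
  · have h0 : ∀ x, 0 ≤ B x ((1 : Module.End ℝ V) x) := fun x => (hT x).trans (hT' x)
    simpa using hQ p q 1 (Commute.one_right _) (Commute.one_right _) h0
  · rw [pow_succ, ← mul_assoc]
    exact hQ p q S hcomm (Commute.refl _) hSnn
  · rw [pow_succ, mul_assoc, (hcomm.pow_right _).eq, ← mul_assoc]
    exact hQ p q T (Commute.refl _) hcomm.symm hT
  · rw [pow_succ, pow_succ, mul_assoc, ← mul_assoc T, (hcomm.pow_right _).eq, mul_assoc,
      ← mul_assoc]
    exact hQ p q (T * S) ((Commute.refl _).mul_right hcomm)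
      (hcomm.symm.mul_right (Commute.refl _)) hTSnn

/-- The reciprocal of the generating function of a Hausdorff moment sequence is again governed by
a completely monotone sequence: the moments of the compression of the multiplication operator to
the orthogonal complement of the constants. -/
theorem exists_completelyMonotone_reciprocal (μ : Measure unitInterval) [IsFiniteMeasure μ]
    (c : ℕ → ℝ) (hc : ∀ n, c n = ∫ s, (s : ℝ) ^ n ∂μ) (hc0 : 0 < c 0) :
    ∃ D : ℕ → ℕ → ℝ, (∀ j n, 0 ≤ D j n) ∧ (∀ j n, D j n = D j (n + 1) + D (j + 1) n) ∧
      ∀ n, c (n + 2) = c 1 / c 0 * c (n + 1) +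
        (∑ ij ∈ Finset.HasAntidiagonal.antidiagonal n, c ij.1 * D 0 ij.2) / c 0 := by
  have h_int : ∀ f : C(unitInterval, ℝ), Integrable f μ := fun f =>
    f.continuous.integrable_of_hasCompactSupport (HasCompactSupport.of_compactSpace _)
  let E : C(unitInterval, ℝ) →ₗ[ℝ] ℝ :=
    { toFun := fun f => ∫ s, f s ∂μ
      map_add' := fun f g => integral_add (h_int f) (h_int g)
      map_smul' := fun a f => integral_const_mul a f }
  have hEmono : ∀ f g : C(unitInterval, ℝ), (∀ s, f s ≤ g s) → E f ≤ E g := fun f g h =>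
    integral_mono (h_int f) (h_int g) h
  let X : C(unitInterval, ℝ) := ⟨fun s => (s : ℝ), continuous_subtype_val⟩
  have hX : ∀ n, E (X ^ n) = c n := fun n => by
    rw [hc]; rfl
  have hE1 : E 1 = c 0 := by rw [← hX 0, pow_zero]
  let B : C(unitInterval, ℝ) →ₗ[ℝ] C(unitInterval, ℝ) →ₗ[ℝ] ℝ :=
    LinearMap.mk₂ ℝ (fun f g => E (f * g)) (fun f f' g => by rw [add_mul, map_add])
      (fun a f g => by rw [smul_mul_assoc, map_smul]) (fun f g g' => by rw [mul_add, map_add])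
      (fun a f g => by rw [mul_smul_comm, map_smul])
  have hB : ∀ f g, B f g = E (f * g) := fun f g => rfl
  let P : Module.End ℝ C(unitInterval, ℝ) :=
    { toFun := fun f => f - (E f / c 0) • 1
      map_add' := fun f g => by rw [map_add, add_div, add_smul]; abel
      map_smul' := fun a f => by
        rw [map_smul, smul_eq_mul, mul_div_assoc, mul_smul, ← smul_sub]; rfl }
  have hP : ∀ f, P f = f - (E f / c 0) • 1 := fun f => rfl
  have hEP : ∀ f, E (P f) = 0 := fun f => by
    rw [hP, map_sub, map_smul, hE1, smul_eq_mul]; field_simp; ring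
  have hPP : ∀ f, P (P f) = P f := fun f => by
    rw [hP (P f), hEP]; simp
  have hEPmul : ∀ f g, E (P f * g) = E (f * g) - E f * E g / c 0 := fun f g => by
    rw [hP, sub_mul, map_sub, smul_mul_assoc, one_mul, map_smul, smul_eq_mul]; ring
  let A : Module.End ℝ C(unitInterval, ℝ) := P * LinearMap.mulLeft ℝ X * P
  have hA : ∀ f, A f = P (X * P f) := fun f => rfl
  have hPs : ∀ f g, E (P f * g) = E (f * P g) := fun f g => by
    rw [mul_comm f, hEPmul, hEPmul, mul_comm g, mul_comm (E g)]
  have hBA : ∀ f g, B f (A g) = E (X * (P f * P g)) := fun f g => by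
    rw [hB, hA, ← hPs]; congr 1; ring
  have hAs : ∀ f g, B (A f) g = B f (A g) := fun f g => by
    rw [hBA, hB, hA, hPs]; congr 1; ring
  have hAnn : ∀ f, 0 ≤ B f (A f) := fun f => by
    rw [hBA, ← map_zero E]
    exact hEmono _ _ fun s => mul_nonneg s.2.1 (mul_self_nonneg _)
  have hAle : ∀ f, B f (A f) ≤ B f f := fun f => by
    rw [hBA]
    have h1 : E (X * (P f * P f)) ≤ E (P f * P f) :=
      hEmono _ _ fun s => mul_le_of_le_one_left (mul_self_nonneg _) s.2.2
    have h2 : E (P f * P f) = E (f * f) - E f * E f / c 0 := by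
      rw [← hPs, hPP, hEPmul]
    have h3 : 0 ≤ E f * E f / c 0 := div_nonneg (mul_self_nonneg _) hc0.le
    rw [hB]; linarith
  let b := P X
  refine ⟨fun j n => B b ((A ^ n * (1 - A) ^ j) b),
    fun j n => bilin_pow_mul_one_sub_pow_nonneg B A hAs hAnn hAle n j b, fun j n => ?_, fun n => ?_⟩
  · rw [← map_add, ← LinearMap.add_apply]
    have hcomm : Commute A (1 - A) := (Commute.one_right A).sub_right (Commute.refl A)
    rw [pow_succ, pow_succ' (1 - A), mul_assoc, ← mul_add, ← add_mul]
    simp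
  · have hw : ∀ n, P (X ^ (n + 1)) = (c n / c 0) • b + A (P (X ^ n)) := fun n => by
      have h : X ^ n = (c n / c 0) • 1 + P (X ^ n) := by rw [hP, hX]; simp
      rw [hA, hPP, ← map_smul, ← map_add, pow_succ']
      congr 1
      conv_lhs => rw [h]
      rw [mul_add, mul_smul_comm, mul_one]
    have hws : ∀ n, P (X ^ (n + 1)) =
        ∑ ij ∈ Finset.HasAntidiagonal.antidiagonal n, (c ij.1 / c 0) • (A ^ ij.2) b := by
      intro n
      induction n with
      | zero =>
        have h1 : P 1 = 0 := by rw [hP, hE1, div_self hc0.ne']; simp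
        rw [hw]; simp [h1]
      | succ n ih =>
        rw [hw, ih, Finset.Nat.sum_antidiagonal_succ', map_sum]
        simp [pow_succ']
    have h : X ^ (n + 1) = (c (n + 1) / c 0) • 1 + P (X ^ (n + 1)) := by rw [hP, hX]; simp
    have hXP : E (X * P (X ^ (n + 1))) = E (b * P (X ^ (n + 1))) := by
      rw [hPs, hPP]
    rw [← hX (n + 2), pow_succ', h, mul_add, map_add, mul_smul_comm, mul_one, map_smul, hXP, hws,
      Finset.mul_sum, map_sum, Finset.sum_div]
    have hX1 : E X = c 1 := by rw [← hX 1, pow_one]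
    rw [hX1, smul_eq_mul]
    congr 1
    · ring
    · refine Finset.sum_congr rfl fun ij _ => ?_
      simp only [pow_zero, mul_one, mul_smul_comm, map_smul, hB, smul_eq_mul]
      ring

/-- The Gamma density `e^{-x} xⁿ / n!`. -/
def gammaWeight (n : ℕ) (x : ℝ) : ℝ := Real.exp (-x) * x ^ n / n.factorial

theorem gammaWeight_nonneg (n : ℕ) {x : ℝ} (hx : 0 ≤ x) : 0 ≤ gammaWeight n x := by
  unfold gammaWeight; positivity

theorem continuous_gammaWeight (n : ℕ) : Continuous (gammaWeight n) := by
  unfold gammaWeight; fun_prop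

theorem hasDerivAt_gammaWeight_succ (n : ℕ) (x : ℝ) :
    HasDerivAt (gammaWeight (n + 1)) (gammaWeight n x - gammaWeight (n + 1) x) x := by
  have h1 : HasDerivAt (fun x : ℝ => Real.exp (-x)) (-Real.exp (-x)) x := by
    simpa using (hasDerivAt_neg x).exp
  have h2 := (h1.mul (hasDerivAt_pow (n + 1) x)).div_const ((n + 1).factorial : ℝ)
  refine h2.congr_deriv ?_
  unfold gammaWeight
  rw [Nat.factorial_succ]
  have : (n.factorial : ℝ) ≠ 0 := by positivity
  push_cast
  field_simp
  ring

theorem setLIntegral_gammaWeight_eq_add (n : ℕ) {y : ℝ} (hy : 0 < y) :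
    ∫⁻ x in Ioo 0 y, ENNReal.ofReal (gammaWeight n x) =
      (∫⁻ x in Ioo 0 y, ENNReal.ofReal (gammaWeight (n + 1) x)) +
        ENNReal.ofReal (gammaWeight (n + 1) y) := by
  have hI : ∀ m, ∫⁻ x in Ioo 0 y, ENNReal.ofReal (gammaWeight m x) =
      ENNReal.ofReal (∫ x in (0 : ℝ)..y, gammaWeight m x) := by
    intro m
    rw [intervalIntegral.integral_of_le hy.le, integral_Ioc_eq_integral_Ioo,
      ofReal_integral_eq_lintegral_ofReal]
    · exact ((continuous_gammaWeight m).integrableOn_Icc (a := 0) (b := y)).mono_set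
        Ioo_subset_Icc_self
    · exact (ae_restrict_mem measurableSet_Ioo).mono fun x hx => gammaWeight_nonneg m hx.1.le
  have h_int : ∀ m, IntervalIntegrable (gammaWeight m) volume 0 y := fun m =>
    (continuous_gammaWeight m).intervalIntegrable 0 y
  have hFTC : (∫ x in (0 : ℝ)..y, gammaWeight n x) =
      (∫ x in (0 : ℝ)..y, gammaWeight (n + 1) x) + gammaWeight (n + 1) y := by
    have h := intervalIntegral.integral_eq_sub_of_hasDerivAt
      (fun x _ => hasDerivAt_gammaWeight_succ n x) ((h_int n).sub (h_int (n + 1)))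
    rw [intervalIntegral.integral_sub (h_int n) (h_int (n + 1))] at h
    have h0 : gammaWeight (n + 1) 0 = 0 := by simp [gammaWeight]
    rw [h0] at h
    linarith
  rw [hI, hI, hFTC, ENNReal.ofReal_add _ (gammaWeight_nonneg _ hy.le)]
  exact intervalIntegral.integral_nonneg hy.le fun x hx => gammaWeight_nonneg _ hx.1

theorem lintegral_mul_lintegral_Ioi {p H : ℝ → ENNReal} (hp : Measurable p) (hH : Measurable H) :
    ∫⁻ x in Ioi 0, p x * ∫⁻ y in Ioi x, H y = ∫⁻ y in Ioi 0, (∫⁻ x in Ioo 0 y, p x) * H y := by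
  have hS : MeasurableSet {z : ℝ × ℝ | z.1 < z.2} := measurableSet_lt measurable_fst measurable_snd
  let K : ℝ → ℝ → ENNReal := fun x y =>
    {z : ℝ × ℝ | z.1 < z.2}.indicator (fun z => p z.1 * H z.2) (x, y)
  have hK : Measurable (Function.uncurry K) :=
    ((hp.comp measurable_fst).mul (hH.comp measurable_snd)).indicator hS
  calc ∫⁻ x in Ioi 0, p x * ∫⁻ y in Ioi x, H y
      = ∫⁻ x in Ioi 0, ∫⁻ y in Ioi 0, K x y := by
        refine setLIntegral_congr_fun measurableSet_Ioi fun x hx => ?_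
        have h1 : ∀ y, K x y = (Ioi x).indicator (fun y => p x * H y) y := fun y => by
          simp [K, indicator_apply]
        simp_rw [h1]
        rw [setLIntegral_indicator measurableSet_Ioi,
          inter_eq_left.2 (Ioi_subset_Ioi (le_of_lt hx)),
          lintegral_const_mul _ hH]
    _ = ∫⁻ y in Ioi 0, ∫⁻ x in Ioi 0, K x y := lintegral_lintegral_swap hK.aemeasurable
    _ = _ := by
        refine setLIntegral_congr_fun measurableSet_Ioi fun y _ => ?_
        have h1 : ∀ x, K x y = (Iio y).indicator (fun x => p x * H y) x := fun x => by
          simp [K, indicator_apply]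
        simp_rw [h1]
        rw [setLIntegral_indicator measurableSet_Iio, inter_comm, Ioi_inter_Iio,
          lintegral_mul_const _ hp]

/-- The integral of `G` against the Gamma density of index `n`. -/
def gammaLIntegral (n : ℕ) (G : ℝ → ENNReal) : ENNReal :=
  ∫⁻ x in Ioi 0, ENNReal.ofReal (gammaWeight n x) * G x

theorem lintegral_gammaWeight (n : ℕ) :
    ∫⁻ x in Ioi 0, ENNReal.ofReal (gammaWeight n x) = 1 := by
  have h := Real.GammaIntegral_convergent (s := n + 1) (by positivity)
  have h2 : (fun x : ℝ => gammaWeight n x) =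
      fun x => (Real.exp (-x) * x ^ (n + 1 - 1 : ℝ)) / n.factorial := by
    ext x; simp [gammaWeight]
  rw [← ofReal_integral_eq_lintegral_ofReal]
  · rw [h2, integral_div, ← Real.Gamma_eq_integral (by positivity), Real.Gamma_nat_eq_factorial,
      div_self (by positivity), ENNReal.ofReal_one]
  · exact (h.div_const _).congr (ae_of_all _ fun x => (congrFun h2 x).symm)
  · exact (ae_restrict_mem measurableSet_Ioi).mono fun x hx => gammaWeight_nonneg n (le_of_lt hx)

theorem gammaLIntegral_eq_add {G H : ℝ → ENNReal} {l : ENNReal} (hH : Measurable H)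
    (hG : ∀ x, 0 < x → G x = l + ∫⁻ y in Ioi x, H y) (n : ℕ) :
    gammaLIntegral n G = gammaLIntegral (n + 1) G + gammaLIntegral (n + 1) H := by
  have hp : ∀ m, Measurable fun x => ENNReal.ofReal (gammaWeight m x) := fun m =>
    (continuous_gammaWeight m).measurable.ennreal_ofReal
  have key : ∀ m, gammaLIntegral m G =
      l + ∫⁻ y in Ioi 0, (∫⁻ x in Ioo 0 y, ENNReal.ofReal (gammaWeight m x)) * H y := by
    intro m
    rw [← lintegral_mul_lintegral_Ioi (hp m) hH]
    calc gammaLIntegral m G = ∫⁻ x in Ioi 0, (ENNReal.ofReal (gammaWeight m x) * l +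
          ENNReal.ofReal (gammaWeight m x) * ∫⁻ y in Ioi x, H y) := by
          refine setLIntegral_congr_fun measurableSet_Ioi fun x hx => ?_
          rw [hG x hx, mul_add]
      _ = _ := by
          rw [lintegral_add_left ((hp m).mul_const l), lintegral_mul_const _ (hp m),
            lintegral_gammaWeight, one_mul]
  rw [key n, key (n + 1), add_assoc, gammaLIntegral,
    ← lintegral_add_right (μ := volume.restrict (Ioi 0))
    (g := fun y => ENNReal.ofReal (gammaWeight (n + 1) y) * H y) _ ((hp _).mul hH)]
  congr 1
  refine setLIntegral_congr_fun measurableSet_Ioi fun y hy => ?_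
  rw [setLIntegral_gammaWeight_eq_add n hy, add_mul]

theorem exists_ofReal_eq_add_lintegral_Ioi {g h : ℝ → ℝ} (hd : ∀ x, 0 < x → HasDerivAt g (-h x) x)
    (hg : ∀ x, 0 < x → 0 ≤ g x) (hh : ∀ x, 0 < x → 0 ≤ h x) :
    ∃ l : ENNReal, ∀ x, 0 < x →
      ENNReal.ofReal (g x) = l + ∫⁻ y in Ioi x, ENNReal.ofReal (h y) := by
  have hanti : AntitoneOn g (Ioi 0) := by
    refine antitoneOn_of_deriv_nonpos (convex_Ioi 0)
      (fun x hx => (hd x hx).continuousAt.continuousWithinAt)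
      (fun x hx => (hd x (interior_subset hx)).differentiableAt.differentiableWithinAt) ?_
    intro x hx
    rw [(hd x (interior_subset hx)).deriv]
    linarith [hh x (interior_subset hx)]
  obtain ⟨l, hl⟩ : ∃ l, Tendsto g atTop (𝓝 l) := by
    have h1 : Antitone fun x => g (max x 1) := fun x y hxy =>
      hanti (mem_Ioi.2 (lt_max_of_lt_right one_pos)) (mem_Ioi.2 (lt_max_of_lt_right one_pos))
        (max_le_max_right 1 hxy)
    refine ⟨_, (tendsto_atTop_ciInf h1 ⟨0, ?_⟩).congr' ?_⟩
    · rintro _ ⟨x, rfl⟩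
      exact hg _ (lt_max_of_lt_right one_pos)
    · filter_upwards [eventually_ge_atTop 1] with x hx
      simp [max_eq_left hx]
  have hl0 : 0 ≤ l := ge_of_tendsto hl ((eventually_gt_atTop 0).mono fun x hx => hg x hx)
  refine ⟨ENNReal.ofReal l, fun x hx => ?_⟩
  have hd' : ∀ y ∈ Ici x, HasDerivAt g (-h y) y := fun y hy => hd y (lt_of_lt_of_le hx hy)
  have hneg : ∀ y ∈ Ioi x, -h y ≤ 0 := fun y hy => neg_nonpos.2 (hh y (hx.trans hy))
  have hi := integrableOn_Ioi_deriv_of_nonpos' hd' hneg hl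
  have hi2 := integral_Ioi_of_hasDerivAt_of_nonpos' hd' hneg hl
  have hi' : IntegrableOn h (Ioi x) := by simpa using hi.neg
  rw [integral_neg] at hi2
  have hnn : 0 ≤ᵐ[volume.restrict (Ioi x)] h :=
    (ae_restrict_mem measurableSet_Ioi).mono fun y hy => hh y (hx.trans hy)
  rw [← ofReal_integral_eq_lintegral_ofReal hi' hnn,
    ← ENNReal.ofReal_add hl0 (integral_nonneg_of_ae hnn)]
  congr 1
  linarith

theorem integral_one_sub_exp_neg (z : ℝ) :
    ∫ t in (0 : ℝ)..z, (1 - Real.exp (-t)) = z - 1 + Real.exp (-z) := by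
  have hd : ∀ t ∈ uIcc 0 z, HasDerivAt (fun t : ℝ => t + Real.exp (-t)) (1 - Real.exp (-t)) t := by
    intro t _
    have h1 : HasDerivAt (fun x : ℝ => Real.exp (-x)) (-Real.exp (-t)) t := by
      simpa using (hasDerivAt_neg t).exp
    exact (hasDerivAt_id t).add h1
  rw [intervalIntegral.integral_eq_sub_of_hasDerivAt hd
    ((by fun_prop : Continuous fun t : ℝ => 1 - Real.exp (-t)).intervalIntegrable 0 z)]
  simp
  ring

theorem sub_one_add_exp_neg_le {z : ℝ} (hz : 0 ≤ z) : z - 1 + Real.exp (-z) ≤ min (z ^ 2) z := by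
  refine le_min ?_ ?_
  · have h1 : Real.exp (-z) ≤ 1 / (1 + z) := by
      rw [Real.exp_neg, ← one_div]
      exact one_div_le_one_div_of_le (by linarith) (by linarith [Real.add_one_le_exp z])
    have h2 : 1 / (1 + z) ≤ 1 - z + z ^ 2 := by
      rw [div_le_iff₀ (by linarith)]
      nlinarith [pow_nonneg hz 3]
    linarith
  · have : Real.exp (-z) ≤ 1 := Real.exp_le_one_iff.2 (by linarith)
    linarith

theorem lintegral_measure_Ioi_mul {φ : Measure ℝ} (hφ : φ (Iic 0) = 0) :
    ∫⁻ t in Ioi 0, φ (Ioi t) * ENNReal.ofReal (1 - Real.exp (-t)) =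
      ∫⁻ z, ENNReal.ofReal (z - 1 + Real.exp (-z)) ∂φ := by
  have hnn : 0 ≤ᵐ[φ] (id : ℝ → ℝ) := by
    rw [Filter.EventuallyLE, ae_iff]
    refine measure_mono_null (fun x hx => ?_) hφ
    simpa using le_of_lt (not_le.1 hx)
  have h := lintegral_comp_eq_lintegral_meas_lt_mul φ hnn aemeasurable_id
    (g := fun t => 1 - Real.exp (-t))
    (fun t _ => (by fun_prop : Continuous fun t : ℝ => 1 - Real.exp (-t)).intervalIntegrable 0 t)
    ((ae_restrict_mem measurableSet_Ioi).mono fun t ht => by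
      have : Real.exp (-t) ≤ 1 := Real.exp_le_one_iff.2 (by linarith [mem_Ioi.1 ht])
      simpa using this)
  simp_rw [integral_one_sub_exp_neg] at h
  exact h.symm

theorem ae_pos_of_measure_Iic {φ : Measure ℝ} (hφ : φ (Iic 0) = 0) : ∀ᵐ z ∂φ, 0 < z := by
  rw [ae_iff]
  simpa [← Iic_def] using hφ

theorem H0.lintegral_ne_top {φ : Measure ℝ} (h : H0 φ) :
    ∫⁻ t in Ioi 0, φ (Ioi t) * ENNReal.ofReal (1 - Real.exp (-t)) ≠ ⊤ := by
  rw [lintegral_measure_Ioi_mul h.1]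
  refine ne_top_of_le_ne_top h.2.1.ne ?_
  rw [← Measure.restrict_eq_self_of_ae_mem (s := Ioi 0) (ae_pos_of_measure_Iic h.1),
    Measure.restrict_restrict measurableSet_Ioi, inter_self]
  exact setLIntegral_mono' measurableSet_Ioi fun z hz =>
    ENNReal.ofReal_le_ofReal (sub_one_add_exp_neg_le (le_of_lt hz))

theorem H0.lintegral_ne_zero {φ : Measure ℝ} (h : H0 φ) :
    ∫⁻ t in Ioi 0, φ (Ioi t) * ENNReal.ofReal (1 - Real.exp (-t)) ≠ 0 := by
  rw [lintegral_measure_Ioi_mul h.1]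
  intro h0
  rw [lintegral_eq_zero_iff (by fun_prop)] at h0
  have hφ : φ = 0 := by
    rw [← ae_eq_bot, ← Filter.eventually_false_iff_eq_bot]
    filter_upwards [h0, ae_pos_of_measure_Iic h.1] with z hz hz0
    have h1 := Real.add_one_lt_exp (neg_ne_zero.2 hz0.ne')
    have h2 := ENNReal.ofReal_eq_zero.1 hz
    linarith
  have h3 := h.2.2
  simp [hφ] at h3

theorem H0.measure_Ioi_ne_top {φ : Measure ℝ} (h : H0 φ) {t : ℝ} (ht : 0 < t) : φ (Ioi t) ≠ ⊤ := by
  have hm : 0 < min (t ^ 2) t := lt_min (by positivity) ht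
  have h1 : ENNReal.ofReal (min (t ^ 2) t) * φ (Ioi t) ≤
      ∫⁻ z in Ioi (0 : ℝ), ENNReal.ofReal (min (z ^ 2) z) ∂φ := by
    rw [← setLIntegral_const]
    refine (setLIntegral_mono' measurableSet_Ioi fun z hz => ?_).trans
      (lintegral_mono_set (Ioi_subset_Ioi ht.le))
    have hz' : t ≤ z := le_of_lt hz
    gcongr
  intro htop
  rw [htop, ENNReal.mul_top (ENNReal.ofReal_pos.2 hm).ne'] at h1
  exact absurd (h1.trans_lt h.2.1) (lt_irrefl _)

theorem H0.ofReal_levyTail_s1 {φ : Measure ℝ} (h : H0 φ) {t : ℝ} (ht : 0 < t) :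
    ENNReal.ofReal (levyTail φ t) = φ (Ioi t) :=
  ENNReal.ofReal_toReal (h.measure_Ioi_ne_top ht)

theorem measurable_measure_Ioi (φ : Measure ℝ) : Measurable fun t => φ (Ioi t) :=
  Antitone.measurable fun _ _ hst => measure_mono (Ioi_subset_Ioi hst)

theorem measurable_levyTail_s1 (φ : Measure ℝ) : Measurable (levyTail φ) :=
  (measurable_measure_Ioi φ).ennreal_toReal

theorem H0.lintegral_Ioi_ne_top {φ : Measure ℝ} (h : H0 φ) {x : ℝ} (hx : 0 < x) :
    ∫⁻ y in Ioi x, φ (Ioi y) ≠ ⊤ := by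
  have hc : 0 < 1 - Real.exp (-x) := by
    have := Real.exp_lt_one_iff.2 (neg_lt_zero.2 hx)
    linarith
  have h1 : (∫⁻ y in Ioi x, φ (Ioi y)) * ENNReal.ofReal (1 - Real.exp (-x)) ≤
      ∫⁻ t in Ioi 0, φ (Ioi t) * ENNReal.ofReal (1 - Real.exp (-t)) := by
    rw [← lintegral_mul_const _ (measurable_measure_Ioi φ)]
    refine (setLIntegral_mono' measurableSet_Ioi fun z hz => ?_).trans
      (lintegral_mono_set (Ioi_subset_Ioi hx.le))
    have hz' : x ≤ z := le_of_lt hz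
    gcongr
  intro htop
  rw [htop, ENNReal.top_mul (by simpa using hc)] at h1
  exact h.lintegral_ne_top (top_le_iff.1 h1)

theorem H0.ofReal_PhiFn_s1 {φ : Measure ℝ} (h : H0 φ) {x : ℝ} (hx : 0 < x) :
    ENNReal.ofReal (PhiFn φ x) = ∫⁻ y in Ioi x, φ (Ioi y) := by
  have hlint : ∫⁻ y in Ioi x, ENNReal.ofReal (levyTail φ y) = ∫⁻ y in Ioi x, φ (Ioi y) :=
    setLIntegral_congr_fun measurableSet_Ioi fun y hy => h.ofReal_levyTail_s1 (hx.trans hy)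
  have hnn : ∀ y, 0 ≤ levyTail φ y := fun y => ENNReal.toReal_nonneg
  rw [PhiFn, if_pos hx, ofReal_integral_eq_lintegral_ofReal _ (ae_of_all _ hnn), hlint]
  refine ⟨(measurable_levyTail_s1 φ).aestronglyMeasurable, ?_⟩
  rw [hasFiniteIntegral_iff_ofReal (ae_of_all _ hnn), hlint]
  exact (h.lintegral_Ioi_ne_top hx).lt_top

theorem PhiFn_nonneg_s1 (φ : Measure ℝ) (x : ℝ) : 0 ≤ PhiFn φ x := by
  unfold PhiFn
  split_ifs
  · exact integral_nonneg fun y => ENNReal.toReal_nonneg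
  · exact le_rfl

theorem H0.PhiFn_eq_toReal {φ : Measure ℝ} (h : H0 φ) {x : ℝ} (hx : 0 < x) :
    PhiFn φ x = (∫⁻ y in Ioi x, φ (Ioi y)).toReal := by
  rw [← h.ofReal_PhiFn_s1 hx, ENNReal.toReal_ofReal (PhiFn_nonneg_s1 φ x)]

theorem H0.measurable_PhiFn {φ : Measure ℝ} (h : H0 φ) : Measurable (PhiFn φ) := by
  have h1 : Measurable fun x : ℝ => ∫⁻ y in Ioi x, φ (Ioi y) :=
    Antitone.measurable fun _ _ hst => lintegral_mono_set (Ioi_subset_Ioi hst)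
  have h2 : PhiFn φ = fun x => if 0 < x then (∫⁻ y in Ioi x, φ (Ioi y)).toReal else 0 := by
    ext x
    split_ifs with hx
    · exact h.PhiFn_eq_toReal hx
    · simp [PhiFn, hx]
  rw [h2]
  exact Measurable.ite measurableSet_Ioi h1.ennreal_toReal measurable_const

theorem H0.PhiFn_antitoneOn {φ : Measure ℝ} (h : H0 φ) : AntitoneOn (PhiFn φ) (Ioi 0) := by
  intro x hx y hy hxy
  rw [h.PhiFn_eq_toReal hx, h.PhiFn_eq_toReal hy]
  exact ENNReal.toReal_mono (h.lintegral_Ioi_ne_top hx) (lintegral_mono_set (Ioi_subset_Ioi hxy))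

theorem setLIntegral_gammaWeight_zero {y : ℝ} (hy : 0 < y) :
    ∫⁻ x in Ioo 0 y, ENNReal.ofReal (gammaWeight 0 x) = ENNReal.ofReal (1 - Real.exp (-y)) := by
  rw [← ofReal_integral_eq_lintegral_ofReal, ← integral_Ioc_eq_integral_Ioo,
    ← intervalIntegral.integral_of_le hy.le]
  · congr 1
    have hd : ∀ t ∈ uIcc 0 y, HasDerivAt (fun t : ℝ => -Real.exp (-t)) (gammaWeight 0 t) t := by
      intro t _
      exact (hasDerivAt_neg t).exp.neg.congr_deriv (by simp [gammaWeight])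
    rw [intervalIntegral.integral_eq_sub_of_hasDerivAt hd
      ((continuous_gammaWeight 0).intervalIntegrable 0 y)]
    simp
    ring
  · exact ((continuous_gammaWeight 0).integrableOn_Icc (a := 0) (b := y)).mono_set
        Ioo_subset_Icc_self
  · exact (ae_restrict_mem measurableSet_Ioo).mono fun x hx => gammaWeight_nonneg 0 hx.1.le

theorem H0.gammaLIntegral_PhiFn_zero {φ : Measure ℝ} (h : H0 φ) :
    gammaLIntegral 0 (fun x => ENNReal.ofReal (PhiFn φ x)) =
      ∫⁻ t in Ioi 0, φ (Ioi t) * ENNReal.ofReal (1 - Real.exp (-t)) := by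
  calc gammaLIntegral 0 (fun x => ENNReal.ofReal (PhiFn φ x))
      = ∫⁻ x in Ioi 0, ENNReal.ofReal (gammaWeight 0 x) * ∫⁻ y in Ioi x, φ (Ioi y) :=
        setLIntegral_congr_fun measurableSet_Ioi fun x hx =>
          congrArg _ (h.ofReal_PhiFn_s1 hx)
    _ = _ := by
        rw [lintegral_mul_lintegral_Ioi (continuous_gammaWeight 0).measurable.ennreal_ofReal
          (measurable_measure_Ioi φ)]
        refine setLIntegral_congr_fun measurableSet_Ioi fun y hy => ?_
        rw [setLIntegral_gammaWeight_zero hy, mul_comm]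

/-- The successive derivatives of `Φ`, with alternating signs. -/
def PhiDeriv (φ : Measure ℝ) : ℕ → ℝ → ℝ
  | 0 => PhiFn φ
  | j + 1 => (Ioi 0).indicator fun x => (-1) ^ j * iteratedDerivWithin j (levyTail φ) (Ioi 0) x

theorem exists_PhiDeriv_eq_add {φ : Measure ℝ} (h : H0 φ)
    (hsmooth : ContDiffOn ℝ (⊤ : ℕ∞) (levyTail φ) (Ioi 0))
    (hsign : ∀ n : ℕ, ∀ x : ℝ, 0 < x →
      0 ≤ (-1 : ℝ) ^ n * iteratedDerivWithin n (levyTail φ) (Ioi 0) x) (j : ℕ) :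
    ∃ l : ENNReal, ∀ x, 0 < x → ENNReal.ofReal (PhiDeriv φ j x) =
      l + ∫⁻ y in Ioi x, ENNReal.ofReal (PhiDeriv φ (j + 1) y) := by
  have hpos : ∀ j x, 0 < x → PhiDeriv φ (j + 1) x =
      (-1) ^ j * iteratedDerivWithin j (levyTail φ) (Ioi 0) x := fun j x hx =>
    by rw [PhiDeriv, indicator_of_mem (mem_Ioi.2 hx)]
  cases j with
  | zero =>
    refine ⟨0, fun x hx => ?_⟩
    rw [zero_add, PhiDeriv, h.ofReal_PhiFn_s1 hx]
    refine setLIntegral_congr_fun measurableSet_Ioi fun y hy => ?_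
    rw [hpos 0 y (hx.trans hy), pow_zero, one_mul, iteratedDerivWithin_zero,
      h.ofReal_levyTail_s1 (hx.trans hy)]
  | succ j =>
    refine exists_ofReal_eq_add_lintegral_Ioi (fun x hx => ?_)
      (fun x hx => by rw [hpos j x hx]; exact hsign j x hx)
      (fun x hx => by rw [hpos _ x hx]; exact hsign _ x hx)
    have h1 : DifferentiableOn ℝ (iteratedDerivWithin j (levyTail φ) (Ioi 0)) (Ioi 0) :=
      hsmooth.differentiableOn_iteratedDerivWithin (by exact_mod_cast WithTop.coe_lt_top _)
        (uniqueDiffOn_Ioi 0)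
    have h2 := (h1.differentiableAt (Ioi_mem_nhds hx)).hasDerivAt.const_mul ((-1 : ℝ) ^ j)
    have h3 : -PhiDeriv φ (j + 1 + 1) x =
        (-1) ^ j * deriv (iteratedDerivWithin j (levyTail φ) (Ioi 0)) x := by
      rw [hpos _ x hx, iteratedDerivWithin_succ, derivWithin_of_isOpen isOpen_Ioi hx, pow_succ]
      ring
    rw [h3]
    refine h2.congr_of_eventuallyEq ?_
    filter_upwards [Ioi_mem_nhds hx] with y hy
    exact hpos j y hy

theorem measurable_PhiDeriv {φ : Measure ℝ} (h : H0 φ)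
    (hsmooth : ContDiffOn ℝ (⊤ : ℕ∞) (levyTail φ) (Ioi 0)) (j : ℕ) : Measurable (PhiDeriv φ j) := by
  cases j with
  | zero => exact h.measurable_PhiFn
  | succ j =>
    have h1 : ContinuousOn (iteratedDerivWithin j (levyTail φ) (Ioi 0)) (Ioi 0) :=
      hsmooth.continuousOn_iteratedDerivWithin (by exact_mod_cast le_top) (uniqueDiffOn_Ioi 0)
    exact ((continuousOn_const.mul h1).measurable_piecewise continuousOn_const measurableSet_Ioi)

theorem exists_differences_gammaIntegral_PhiFn {φ : Measure ℝ} (h : H0 φ)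
    (hsmooth : ContDiffOn ℝ (⊤ : ℕ∞) (levyTail φ) (Ioi 0))
    (hsign : ∀ n : ℕ, ∀ x : ℝ, 0 < x →
      0 ≤ (-1 : ℝ) ^ n * iteratedDerivWithin n (levyTail φ) (Ioi 0) x) :
    ∃ D : ℕ → ℕ → ℝ, (∀ j n, 0 ≤ D j n) ∧ (∀ j n, D j n = D j (n + 1) + D (j + 1) n) ∧
      0 < D 0 0 ∧ ∀ n, D 0 n = ∫ x in Ioi 0, gammaWeight n x * PhiFn φ x := by
  let T : ℕ → ℕ → ENNReal := fun j n =>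
    gammaLIntegral (n + j) fun x => ENNReal.ofReal (PhiDeriv φ j x)
  have hT : ∀ j n, T j n = T j (n + 1) + T (j + 1) n := by
    intro j n
    obtain ⟨l, hl⟩ := exists_PhiDeriv_eq_add h hsmooth hsign j
    have := gammaLIntegral_eq_add (measurable_PhiDeriv h hsmooth (j + 1)).ennreal_ofReal hl (n + j)
    simp only [T]
    rwa [add_right_comm, ← add_assoc n j 1]
  have hT00 : T 0 0 = ∫⁻ t in Ioi 0, φ (Ioi t) * ENNReal.ofReal (1 - Real.exp (-t)) :=
    h.gammaLIntegral_PhiFn_zero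
  have hfin0 : ∀ n, T 0 n ≠ ⊤ := by
    intro n
    induction n with
    | zero => rw [hT00]; exact h.lintegral_ne_top
    | succ n ih =>
      rw [hT 0 n] at ih
      exact (ENNReal.add_ne_top.1 ih).1
  have hfin : ∀ j n, T j n ≠ ⊤ := by
    intro j
    induction j with
    | zero => exact hfin0
    | succ j ih =>
      intro n
      have := ih n
      rw [hT j n] at this
      exact (ENNReal.add_ne_top.1 this).2
  refine ⟨fun j n => (T j n).toReal, fun j n => ENNReal.toReal_nonneg, fun j n => ?_, ?_,
    fun n => ?_⟩
  · rw [← ENNReal.toReal_add (hfin _ _) (hfin _ _), ← hT]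
  · refine ENNReal.toReal_pos ?_ (hfin 0 0)
    rw [hT00]
    exact h.lintegral_ne_zero
  · rw [integral_eq_lintegral_of_nonneg_ae]
    · simp only [T, gammaLIntegral, PhiDeriv, add_zero]
      congr 1
      refine setLIntegral_congr_fun measurableSet_Ioi fun x hx => ?_
      rw [ENNReal.ofReal_mul (gammaWeight_nonneg n (le_of_lt hx))]
    · exact (ae_restrict_mem measurableSet_Ioi).mono fun x hx =>
        mul_nonneg (gammaWeight_nonneg n (le_of_lt hx)) (PhiFn_nonneg_s1 φ x)
    · exact ((continuous_gammaWeight n).measurable.mul h.measurable_PhiFn).aestronglyMeasurable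

theorem H0.integrableOn_exp_neg_mul_PhiFn {φ : Measure ℝ} (h : H0 φ) {r : ℝ} (hr : 0 < r) :
    IntegrableOn (fun x => Real.exp (-r * x) * PhiFn φ x) (Ioi 0) := by
  have h1 : IntegrableOn (fun x => gammaWeight 0 x * PhiFn φ x) (Ioi 0) := by
    refine ⟨((continuous_gammaWeight 0).measurable.mul h.measurable_PhiFn).aestronglyMeasurable, ?_⟩
    rw [hasFiniteIntegral_iff_ofReal ((ae_restrict_mem measurableSet_Ioi).mono fun x hx =>
        mul_nonneg (gammaWeight_nonneg 0 (le_of_lt hx)) (PhiFn_nonneg_s1 φ x))]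
    refine lt_of_eq_of_lt ?_ (h.lintegral_ne_top.lt_top)
    rw [← h.gammaLIntegral_PhiFn_zero]
    refine setLIntegral_congr_fun measurableSet_Ioi fun x hx => ?_
    rw [ENNReal.ofReal_mul (gammaWeight_nonneg 0 (le_of_lt hx))]
  have h2 : IntegrableOn (fun x => PhiFn φ 1 * Real.exp (-r * x)) (Ioi 0) :=
    (integrableOn_exp_mul_Ioi (neg_lt_zero.2 hr) 0).const_mul _
  refine ((h1.const_mul (Real.exp 1)).add h2).mono' ?_ ?_
  · exact ((by fun_prop : Measurable fun x : ℝ => Real.exp (-r * x)).mul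
      h.measurable_PhiFn).aestronglyMeasurable
  · refine (ae_restrict_mem measurableSet_Ioi).mono fun x hx => ?_
    have hx0 : 0 < x := hx
    have hΦ := PhiFn_nonneg_s1 φ x
    rw [Real.norm_of_nonneg (by positivity)]
    simp only [Pi.add_apply]
    rcases le_total x 1 with hx1 | hx1
    · have : Real.exp (-r * x) ≤ Real.exp 1 * gammaWeight 0 x := by
        simp only [gammaWeight, pow_zero, Nat.factorial_zero, Nat.cast_one, mul_one, div_one]
        rw [← Real.exp_add, Real.exp_le_exp]
        nlinarith
      calc _ ≤ Real.exp 1 * gammaWeight 0 x * PhiFn φ x := by gcongr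
        _ ≤ _ := by
          rw [mul_assoc]
          exact le_add_of_nonneg_right (mul_nonneg (PhiFn_nonneg_s1 φ 1) (Real.exp_nonneg _))
    · calc _ ≤ PhiFn φ 1 * Real.exp (-r * x) := by
            rw [mul_comm]
            gcongr
            exact h.PhiFn_antitoneOn (mem_Ioi.2 one_pos) hx hx1
        _ ≤ _ := le_add_of_nonneg_left (mul_nonneg (Real.exp_nonneg _)
          (mul_nonneg (gammaWeight_nonneg 0 hx0.le) hΦ))

theorem differentiableOn_laplace {f : ℝ → ℝ} (hf : Measurable f) (hf0 : ∀ x, 0 ≤ f x)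
    (h_int : ∀ r : ℝ, 0 < r → IntegrableOn (fun x => Real.exp (-r * x) * f x) (Ioi 0)) :
    DifferentiableOn ℂ (fun ξ : ℂ => ∫ x in Ioi (0 : ℝ), Complex.exp (-ξ * (x : ℂ)) * (f x : ℂ))
      {ξ | 0 < ξ.re} := by
  have hm : Measurable fun x => ENNReal.ofReal (f x) := hf.ennreal_ofReal
  have hfin : ∀ᵐ x ∂(volume.restrict (Ioi (0 : ℝ))), ENNReal.ofReal (f x) < ⊤ :=
    .of_forall fun x => ENNReal.ofReal_lt_top
  set ν := (volume.restrict (Ioi (0 : ℝ))).withDensity fun x => ENNReal.ofReal (f x)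
  have hsub : Ioi (0 : ℝ) ⊆ ProbabilityTheory.integrableExpSet (fun x : ℝ => -x) ν := by
    intro r hr
    refine (integrable_withDensity_iff_integrable_smul' hm hfin).2 ((h_int r hr).congr ?_)
    refine .of_forall fun x => ?_
    simp only [ENNReal.toReal_ofReal (hf0 x), smul_eq_mul]
    rw [mul_comm, mul_neg, neg_mul]
  have heq : (fun ξ : ℂ => ∫ x in Ioi (0 : ℝ), Complex.exp (-ξ * (x : ℂ)) * (f x : ℂ)) =
      ProbabilityTheory.complexMGF (fun x : ℝ => -x) ν := by
    ext ξ
    rw [ProbabilityTheory.complexMGF, integral_withDensity_eq_integral_toReal_smul hm hfin]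
    refine integral_congr_ae (.of_forall fun x => ?_)
    simp only [ENNReal.toReal_ofReal (hf0 x), Complex.real_smul, Complex.ofReal_neg]
    rw [mul_comm, mul_neg, neg_mul]
  rw [heq]
  exact ProbabilityTheory.differentiableOn_complexMGF.mono fun ξ hξ =>
    interior_maximal hsub isOpen_Ioi hξ

theorem integrableOn_gammaWeight_mul {f : ℝ → ℝ} (hf : Measurable f) (hf0 : ∀ x, 0 ≤ f x)
    (h_int : ∀ r : ℝ, 0 < r → IntegrableOn (fun x => Real.exp (-r * x) * f x) (Ioi 0)) (n : ℕ) :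
    IntegrableOn (fun x => gammaWeight n x * f x) (Ioi 0) := by
  refine ((h_int (1 / 2) (by norm_num)).const_mul (2 ^ n)).mono'
    (((continuous_gammaWeight n).measurable.mul hf).aestronglyMeasurable) ?_
  filter_upwards [ae_restrict_mem measurableSet_Ioi] with x hx
  have hx : (0 : ℝ) < x := hx
  rw [Real.norm_of_nonneg (mul_nonneg (gammaWeight_nonneg n hx.le) (hf0 x)), ← mul_assoc]
  refine mul_le_mul_of_nonneg_right ?_ (hf0 x)
  have h := Real.pow_div_factorial_le_exp (x / 2) (by positivity) n
  calc gammaWeight n x = 2 ^ n * (Real.exp (-x) * ((x / 2) ^ n / n.factorial)) := by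
        rw [gammaWeight, div_pow]; field_simp
    _ ≤ 2 ^ n * (Real.exp (-x) * Real.exp (x / 2)) := by gcongr
    _ = _ := by rw [← Real.exp_add]; ring_nf

theorem hasSum_pow_mul_integral_gammaWeight {f : ℝ → ℝ} (hf : Measurable f) (hf0 : ∀ x, 0 ≤ f x)
    (h_int : ∀ r : ℝ, 0 < r → IntegrableOn (fun x => Real.exp (-r * x) * f x) (Ioi 0))
    {c : ℕ → ℝ} (hc : ∀ n, c n = ∫ x in Ioi 0, gammaWeight n x * f x) {z : ℂ}
    (hz : Summable fun n => ‖z‖ ^ n * c n) :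
    HasSum (fun n => z ^ n * (c n : ℂ))
      (∫ x in Ioi (0 : ℝ), Complex.exp (-(1 - z) * (x : ℂ)) * (f x : ℂ)) := by
  have hi := integrableOn_gammaWeight_mul hf hf0 h_int
  have hn : ∀ n, ∫ x in Ioi (0 : ℝ), ‖z ^ n * ((gammaWeight n x * f x : ℝ) : ℂ)‖ =
      ‖z‖ ^ n * c n := by
    intro n
    rw [hc, ← integral_const_mul]
    refine setIntegral_congr_fun measurableSet_Ioi fun x hx => ?_
    have hx : (0 : ℝ) < x := hx
    simp only [norm_mul, norm_pow, Complex.norm_real]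
    rw [Real.norm_of_nonneg (gammaWeight_nonneg n hx.le), Real.norm_of_nonneg (hf0 x)]
  have key := hasSum_integral_of_summable_integral_norm (μ := volume.restrict (Ioi (0 : ℝ)))
    (F := fun n x => z ^ n * ((gammaWeight n x * f x : ℝ) : ℂ))
    (fun n => (hi n).ofReal.const_mul _) (by simpa only [hn] using hz)
  convert! key using 1
  · ext n
    rw [integral_const_mul, integral_complex_ofReal, hc]
  · refine integral_congr_ae (.of_forall fun x => ?_)
    have h := (NormedSpace.expSeries_div_hasSum_exp (z * (x : ℂ))).mul_left
      (Complex.exp (-(x : ℂ)) * f x)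
    rw [← Complex.exp_eq_exp_ℂ] at h
    beta_reduce
    rw [show (fun n => z ^ n * ((gammaWeight n x * f x : ℝ) : ℂ)) = fun n : ℕ =>
      (Complex.exp (-(x : ℂ)) * f x) * ((z * x) ^ n / n.factorial) from ?_, h.tsum_eq]
    · rw [mul_right_comm, ← Complex.exp_add]
      ring_nf
    · ext n
      rw [gammaWeight, mul_pow]
      push_cast
      ring

theorem hasSum_pow_mul_integral_pow (τ : Measure unitInterval) [IsFiniteMeasure τ] {d : ℕ → ℝ}
    (hd : ∀ n, d n = ∫ s, (s : ℝ) ^ n ∂τ) {z : ℂ} (hz : ‖z‖ < 1) :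
    HasSum (fun n => z ^ n * (d n : ℂ)) (∫ s, (1 - z * ((s : ℝ) : ℂ))⁻¹ ∂τ) := by
  have hi : ∀ n : ℕ, Integrable (fun s : unitInterval => (s : ℝ) ^ n) τ := fun n =>
    (by fun_prop : Continuous fun s : unitInterval => (s : ℝ) ^ n
        ).integrable_of_hasCompactSupport
      (HasCompactSupport.of_compactSpace _)
  have hd0 : ∀ n, d n ≤ d 0 := by
    intro n
    rw [hd, hd]
    refine integral_mono (hi n) (hi 0) fun s => ?_
    simpa using pow_le_one₀ s.2.1 s.2.2
  have hdn : ∀ n, 0 ≤ d n := fun n => by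
    rw [hd]; exact integral_nonneg fun s => pow_nonneg s.2.1 n
  have hn : ∀ n, ∫ s : unitInterval, ‖z ^ n * (((s : ℝ) ^ n : ℝ) : ℂ)‖ ∂τ = ‖z‖ ^ n * d n := by
    intro n
    rw [hd, ← integral_const_mul]
    refine integral_congr_ae (.of_forall fun s => ?_)
    simp only [norm_mul, norm_pow, Complex.norm_real]
    rw [Real.norm_of_nonneg s.2.1]
  have key := hasSum_integral_of_summable_integral_norm (μ := τ)
    (F := fun n (s : unitInterval) => z ^ n * (((s : ℝ) ^ n : ℝ) : ℂ))
    (fun n => (hi n).ofReal.const_mul _) (by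
      simp only [hn]
      exact Summable.of_nonneg_of_le (fun n => mul_nonneg (by positivity) (hdn n))
        (fun n => mul_le_mul_of_nonneg_left (hd0 n) (by positivity))
        ((summable_geometric_of_lt_one (norm_nonneg z) hz).mul_right _))
  convert! key using 1
  · ext n
    rw [integral_const_mul, integral_complex_ofReal, hd]
  · refine integral_congr_ae (.of_forall fun s => ?_)
    have hs : ‖z * ((s : ℝ) : ℂ)‖ < 1 := by
      rw [norm_mul, Complex.norm_real, Real.norm_of_nonneg s.2.1]
      nlinarith [s.2.1, s.2.2, norm_nonneg z]
    have h := hasSum_geometric_of_norm_lt_one hs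
    simp only [← h.tsum_eq, mul_pow, Complex.ofReal_pow]

theorem hasSum_mul_eq_of_renewal {c d : ℕ → ℂ} {z A J : ℂ} (hc0 : c 0 ≠ 0)
    (hc : HasSum (fun n => z ^ n * c n) A) (hcn : Summable fun n => ‖z ^ n * c n‖)
    (hd : HasSum (fun n => z ^ n * d n) J) (hdn : Summable fun n => ‖z ^ n * d n‖)
    (h : ∀ n, c (n + 2) = c 1 / c 0 * c (n + 1) +
      (∑ ij ∈ Finset.HasAntidiagonal.antidiagonal n, c ij.1 * d ij.2) / c 0) :
    A * (1 - c 1 / c 0 * z - z ^ 2 * J / c 0) = c 0 := by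
  have hprod : HasSum (fun n => z ^ n *
      ∑ ij ∈ Finset.HasAntidiagonal.antidiagonal n, c ij.1 * d ij.2) (A * J) := by
    have h1 : (fun n => z ^ n *
        ∑ ij ∈ Finset.HasAntidiagonal.antidiagonal n, c ij.1 * d ij.2) = fun n =>
        ∑ kl ∈ Finset.HasAntidiagonal.antidiagonal n, z ^ kl.1 * c kl.1 * (z ^ kl.2 * d kl.2) := by
      ext n
      rw [Finset.mul_sum]
      refine Finset.sum_congr rfl fun ij hij => ?_
      rw [← Finset.HasAntidiagonal.mem_antidiagonal.1 hij, pow_add]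
      ring
    have h2 := (summable_norm_sum_mul_antidiagonal_of_summable_norm hcn hdn).of_norm
    rw [h1, ← hc.tsum_eq, ← hd.tsum_eq,
      tsum_mul_tsum_eq_tsum_sum_antidiagonal_of_summable_norm hcn hdn]
    exact h2.hasSum
  have hA1 : HasSum (fun n => z ^ (n + 1) * c (n + 1)) (A - c 0) := by
    have := (hasSum_nat_add_iff' (f := fun n => z ^ n * c n) 1).2 hc
    simpa using this
  have hA2 : HasSum (fun n => z ^ (n + 2) * c (n + 2)) (A - (c 0 + z * c 1)) := by
    have := (hasSum_nat_add_iff' (f := fun n => z ^ n * c n) 2).2 hc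
    simpa [Finset.sum_range_succ] using this
  have hB := (hA1.mul_left (c 1 / c 0 * z)).add (hprod.mul_left (z ^ 2 / c 0))
  have heq : (fun n => z ^ (n + 2) * c (n + 2)) = fun n =>
      c 1 / c 0 * z * (z ^ (n + 1) * c (n + 1)) + z ^ 2 / c 0 * (z ^ n *
        ∑ ij ∈ Finset.HasAntidiagonal.antidiagonal n, c ij.1 * d ij.2) := by
    ext n
    rw [h]
    ring
  rw [heq] at hA2
  have := hA2.unique hB
  have h1 : c 1 / c 0 * c 0 = c 1 := div_mul_cancel₀ _ hc0
  linear_combination this - z * h1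

theorem min_one_re_le_re_convex_one (ξ : ℂ) (s : unitInterval) :
    min 1 ξ.re ≤ (1 - ((s : ℝ) : ℂ) + ξ * ((s : ℝ) : ℂ)).re := by
  have h0 := s.2.1
  have h1 := s.2.2
  simp only [Complex.add_re, Complex.sub_re, Complex.one_re, Complex.ofReal_re, Complex.mul_re,
    Complex.ofReal_im, mul_zero, sub_zero]
  nlinarith [min_le_left 1 ξ.re, min_le_right 1 ξ.re,
    mul_nonneg h0 (sub_nonneg.2 (min_le_right 1 ξ.re)),
    mul_nonneg (sub_nonneg.2 h1) (sub_nonneg.2 (min_le_left 1 ξ.re))]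

theorem convex_one_ne_zero {ξ : ℂ} (hξ : 0 < ξ.re) (s : unitInterval) :
    1 - ((s : ℝ) : ℂ) + ξ * ((s : ℝ) : ℂ) ≠ 0 := fun h => by
  have := min_one_re_le_re_convex_one ξ s
  rw [h, Complex.zero_re] at this
  exact absurd this (not_le.2 (lt_min one_pos hξ))

theorem hasDerivAt_integral_of_continuousOn {α : Type*} [TopologicalSpace α] [CompactSpace α]
    [MeasurableSpace α] [BorelSpace α] [SecondCountableTopology α]
    (τ : Measure α) [IsFiniteMeasure τ] {F F' : ℂ → α → ℂ} {U : Set ℂ}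
    (hU : IsOpen U) (hF : ∀ ξ ∈ U, Continuous (F ξ))
    (hF' : ContinuousOn (fun p : ℂ × α => F' p.1 p.2) (U ×ˢ univ))
    (hd : ∀ ξ ∈ U, ∀ s, HasDerivAt (fun ξ => F ξ s) (F' ξ s) ξ) {ξ : ℂ} (hξ : ξ ∈ U) :
    HasDerivAt (fun ξ => ∫ s, F ξ s ∂τ) (∫ s, F' ξ s ∂τ) ξ := by
  obtain ⟨r, hr, hrU⟩ := Metric.nhds_basis_closedBall.mem_iff.1 (hU.mem_nhds hξ)
  have hK : IsCompact (Metric.closedBall ξ r ×ˢ (univ : Set α)) :=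
    (isCompact_closedBall ξ r).prod isCompact_univ
  obtain ⟨C, hC⟩ := hK.exists_bound_of_continuousOn
    (hF'.mono (prod_mono hrU subset_rfl))
  have hc' : Continuous (F' ξ) := by
    rw [← continuousOn_univ]
    exact hF'.comp (f := fun s => (ξ, s)) (by fun_prop) fun s _ => ⟨hξ, trivial⟩
  refine (hasDerivAt_integral_of_dominated_loc_of_deriv_le (bound := fun _ => C)
    (Metric.closedBall_mem_nhds ξ hr) ?_ ?_ hc'.aestronglyMeasurable ?_ (integrable_const C) ?_).2
  · filter_upwards [hU.mem_nhds hξ] with x hx using (hF x hx).aestronglyMeasurable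
  · exact (hF ξ hξ).integrable_of_hasCompactSupport (HasCompactSupport.of_compactSpace _)
  · exact .of_forall fun s x hx => hC (x, s) ⟨hx, trivial⟩
  · exact .of_forall fun s x hx => hd x (hrU hx) s

theorem hasDerivAt_integral_sq_div (τ : Measure unitInterval) [IsFiniteMeasure τ] {ξ : ℂ}
    (hξ : 0 < ξ.re) :
    HasDerivAt (fun ξ : ℂ => ∫ s : unitInterval,
      (1 - ξ) ^ 2 / (1 - ((s : ℝ) : ℂ) + ξ * ((s : ℝ) : ℂ)) ∂τ)
      (∫ s : unitInterval, (-2 * (1 - ξ) / (1 - ((s : ℝ) : ℂ) + ξ * ((s : ℝ) : ℂ)) -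
        (1 - ξ) ^ 2 * ((s : ℝ) : ℂ) / (1 - ((s : ℝ) : ℂ) + ξ * ((s : ℝ) : ℂ)) ^ 2) ∂τ) ξ := by
  refine hasDerivAt_integral_of_continuousOn τ (U := {ξ : ℂ | 0 < ξ.re})
    (F := fun ξ s => (1 - ξ) ^ 2 / (1 - ((s : ℝ) : ℂ) + ξ * ((s : ℝ) : ℂ)))
    (F' := fun ξ s => -2 * (1 - ξ) / (1 - ((s : ℝ) : ℂ) + ξ * ((s : ℝ) : ℂ)) -
      (1 - ξ) ^ 2 * ((s : ℝ) : ℂ) / (1 - ((s : ℝ) : ℂ) + ξ * ((s : ℝ) : ℂ)) ^ 2)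
    (isOpen_lt continuous_const Complex.continuous_re) ?_ ?_ ?_ hξ
  · intro ξ hξ
    have := convex_one_ne_zero hξ
    fun_prop (disch := assumption)
  · have : ∀ p ∈ {ξ : ℂ | 0 < ξ.re} ×ˢ (univ : Set unitInterval),
        1 - ((p.2 : ℝ) : ℂ) + p.1 * ((p.2 : ℝ) : ℂ) ≠ 0 := fun p hp => convex_one_ne_zero hp.1 _
    refine ContinuousOn.sub (ContinuousOn.div (by fun_prop) (by fun_prop) this)
      (ContinuousOn.div (by fun_prop) (by fun_prop) fun p hp => pow_ne_zero 2 (this p hp))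
  · intro ξ hξ s
    have hw := convex_one_ne_zero hξ s
    have h1 : HasDerivAt (fun ξ : ℂ => (1 - ξ) ^ 2) (2 * (1 - ξ) ^ 1 * (-1)) ξ := by
      simpa using ((hasDerivAt_id ξ).const_sub 1).fun_pow 2
    have h2 : HasDerivAt (fun ξ : ℂ => 1 - ((s : ℝ) : ℂ) + ξ * ((s : ℝ) : ℂ)) ((s : ℝ) : ℂ) ξ := by
      simpa using ((hasDerivAt_id ξ).mul_const ((s : ℝ) : ℂ)).const_add (1 - ((s : ℝ) : ℂ))
    convert! h1.div h2 hw using 1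
    field_simp

theorem hasDerivAt_integral_deriv_sq_div (τ : Measure unitInterval) [IsFiniteMeasure τ] {ξ : ℂ}
    (hξ : 0 < ξ.re) :
    HasDerivAt (fun ξ : ℂ => ∫ s : unitInterval,
      (-2 * (1 - ξ) / (1 - ((s : ℝ) : ℂ) + ξ * ((s : ℝ) : ℂ)) -
        (1 - ξ) ^ 2 * ((s : ℝ) : ℂ) / (1 - ((s : ℝ) : ℂ) + ξ * ((s : ℝ) : ℂ)) ^ 2) ∂τ)
      (∫ s : unitInterval, 2 / (1 - ((s : ℝ) : ℂ) + ξ * ((s : ℝ) : ℂ)) ^ 3 ∂τ) ξ := by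
  refine hasDerivAt_integral_of_continuousOn τ (U := {ξ : ℂ | 0 < ξ.re})
    (F := fun ξ s => -2 * (1 - ξ) / (1 - ((s : ℝ) : ℂ) + ξ * ((s : ℝ) : ℂ)) -
      (1 - ξ) ^ 2 * ((s : ℝ) : ℂ) / (1 - ((s : ℝ) : ℂ) + ξ * ((s : ℝ) : ℂ)) ^ 2)
    (F' := fun ξ s => 2 / (1 - ((s : ℝ) : ℂ) + ξ * ((s : ℝ) : ℂ)) ^ 3)
    (isOpen_lt continuous_const Complex.continuous_re) ?_ ?_ ?_ hξ
  · intro ξ hξ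
    have := convex_one_ne_zero hξ
    refine Continuous.sub (Continuous.div (by fun_prop) (by fun_prop) this)
      (Continuous.div (by fun_prop) (by fun_prop) fun s => pow_ne_zero 2 (this s))
  · exact ContinuousOn.div (by fun_prop) (by fun_prop)
      fun p hp => pow_ne_zero 3 (convex_one_ne_zero hp.1 _)
  · intro ξ hξ s
    have hw := convex_one_ne_zero hξ s
    have h0 : HasDerivAt (fun ξ : ℂ => -2 * (1 - ξ)) (-2 * (-1)) ξ := by
      simpa using ((hasDerivAt_id ξ).const_sub 1).const_mul (-2)
    have h1 : HasDerivAt (fun ξ : ℂ => (1 - ξ) ^ 2) (2 * (1 - ξ) ^ 1 * (-1)) ξ := by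
      simpa using ((hasDerivAt_id ξ).const_sub 1).fun_pow 2
    have h2 : HasDerivAt (fun ξ : ℂ => 1 - ((s : ℝ) : ℂ) + ξ * ((s : ℝ) : ℂ)) ((s : ℝ) : ℂ) ξ := by
      simpa using ((hasDerivAt_id ξ).mul_const ((s : ℝ) : ℂ)).const_add (1 - ((s : ℝ) : ℂ))
    convert! (h0.div h2 hw).sub
      ((h1.mul_const ((s : ℝ) : ℂ)).div (h2.fun_pow 2) (pow_ne_zero 2 hw)) using 1
    have hwt : 1 - ((s : ℝ) : ℂ) + ξ * ((s : ℝ) : ℂ) + (1 - ξ) * ((s : ℝ) : ℂ) = 1 := by ring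
    generalize 1 - ((s : ℝ) : ℂ) + ξ * ((s : ℝ) : ℂ) = w at hw hwt ⊢
    calc 2 / w ^ 3 = 2 * (w + (1 - ξ) * ((s : ℝ) : ℂ)) ^ 2 / w ^ 3 := by rw [hwt]; norm_num
      _ = _ := by
        field_simp
        ring

theorem laplace_mul_eq {f : ℝ → ℝ} (hf : Measurable f) (hf0 : ∀ x, 0 ≤ f x)
    (h_int : ∀ r : ℝ, 0 < r → IntegrableOn (fun x => Real.exp (-r * x) * f x) (Ioi 0))
    {c d : ℕ → ℝ} (hc : ∀ n, c n = ∫ x in Ioi 0, gammaWeight n x * f x) (hc0 : 0 < c 0)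
    (hcn : ∀ n, 0 ≤ c n ∧ c n ≤ c 0)
    (τ : Measure unitInterval) [IsFiniteMeasure τ] (hd : ∀ n, d n = ∫ s, (s : ℝ) ^ n ∂τ)
    (hrec : ∀ n, c (n + 2) = c 1 / c 0 * c (n + 1) +
      (∑ ij ∈ Finset.HasAntidiagonal.antidiagonal n, c ij.1 * d ij.2) / c 0)
    {ξ : ℂ} (hξ : 0 < ξ.re) :
    (∫ x in Ioi (0 : ℝ), Complex.exp (-ξ * (x : ℂ)) * (f x : ℂ)) *
      (1 - (c 1 : ℂ) / c 0 * (1 - ξ) -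
        (∫ s : unitInterval, (1 - ξ) ^ 2 / (1 - ((s : ℝ) : ℂ) + ξ * ((s : ℝ) : ℂ)) ∂τ) / c 0) =
      c 0 := by
  have hopen : IsOpen {ξ : ℂ | 0 < ξ.re} := isOpen_lt continuous_const Complex.continuous_re
  have hL := differentiableOn_laplace hf hf0 h_int
  have hK : DifferentiableOn ℂ (fun ξ : ℂ => ∫ s : unitInterval,
      (1 - ξ) ^ 2 / (1 - ((s : ℝ) : ℂ) + ξ * ((s : ℝ) : ℂ)) ∂τ) {ξ | 0 < ξ.re} := fun ξ hξ =>
    (hasDerivAt_integral_sq_div τ hξ).differentiableAt.differentiableWithinAt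
  have hdiff := hL.mul (((differentiableOn_const (1 : ℂ)).sub ((differentiableOn_const
    ((c 1 : ℂ) / c 0)).mul (differentiableOn_id.const_sub 1))).sub (hK.div_const (c 0 : ℂ)))
  refine (hdiff.analyticOnNhd hopen).eqOn_of_preconnected_of_eventuallyEq
    (analyticOnNhd_const (v := (c 0 : ℂ))) (convex_halfSpace_re_gt 0).isPreconnected
    (z₀ := 1) (by simp) ?_ hξ
  filter_upwards [Metric.ball_mem_nhds (1 : ℂ) one_pos] with x hx
  have hz : ‖1 - x‖ < 1 := by rwa [Metric.mem_ball', dist_eq_norm] at hx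
  have hgeo := summable_geometric_of_lt_one (norm_nonneg (1 - x)) hz
  have hsc : Summable fun n => ‖1 - x‖ ^ n * c n :=
    Summable.of_nonneg_of_le (fun n => mul_nonneg (by positivity) (hcn n).1)
      (fun n => mul_le_mul_of_nonneg_left (hcn n).2 (by positivity)) (hgeo.mul_right (c 0))
  have hsum1 := hasSum_pow_mul_integral_gammaWeight hf hf0 h_int hc hsc
  have hsum2 := hasSum_pow_mul_integral_pow τ hd hz
  have key := hasSum_mul_eq_of_renewal (c := fun n => (c n : ℂ)) (d := fun n => (d n : ℂ))
    (by exact_mod_cast hc0.ne') hsum1 hsum1.summable.norm hsum2 hsum2.summable.norm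
    (fun n => by rw [hrec]; push_cast; rfl)
  simp only [sub_sub_cancel] at key
  have hker : ∫ s : unitInterval, (1 - x) ^ 2 / (1 - ((s : ℝ) : ℂ) + x * ((s : ℝ) : ℂ)) ∂τ =
      (1 - x) ^ 2 * ∫ s : unitInterval, (1 - (1 - x) * ((s : ℝ) : ℂ))⁻¹ ∂τ := by
    rw [← integral_const_mul]
    refine integral_congr_ae (.of_forall fun s => ?_)
    simp only [div_eq_mul_inv]
    ring_nf
  rw [← hker] at key
  exact key

theorem iteratedDeriv_two_inv_eq {L : ℂ → ℂ} {a b : ℂ} (hb : b ≠ 0)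
    (τ : Measure unitInterval) [IsFiniteMeasure τ]
    (h : ∀ ξ : ℂ, 0 < ξ.re → L ξ * (1 - a * (1 - ξ) -
        (∫ s : unitInterval, (1 - ξ) ^ 2 / (1 - ((s : ℝ) : ℂ) + ξ * ((s : ℝ) : ℂ)) ∂τ) / b) = b)
    {ξ : ℂ} (hξ : 0 < ξ.re) :
    iteratedDeriv 2 (fun z => z ^ 2 / (z ^ 2 * L z)) ξ = -(1 / b ^ 2) *
      ∫ s : unitInterval, 2 / (1 - ((s : ℝ) : ℂ) + ξ * ((s : ℝ) : ℂ)) ^ 3 ∂τ := by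
  have hopen : IsOpen {ξ : ℂ | 0 < ξ.re} := isOpen_lt continuous_const Complex.continuous_re
  have hG : EqOn (fun z : ℂ => z ^ 2 / (z ^ 2 * L z)) (fun z => (1 - a * (1 - z) -
      (∫ s : unitInterval, (1 - z) ^ 2 / (1 - ((s : ℝ) : ℂ) + z * ((s : ℝ) : ℂ)) ∂τ) / b) / b)
      {ξ | 0 < ξ.re} := by
    intro z hz
    have hz0 : z ≠ 0 := by rintro rfl; simp at hz
    have h1 := h z hz
    have hLz : L z ≠ 0 := fun h0 => hb (by rw [← h1, h0, zero_mul])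
    dsimp only
    rw [eq_div_iff hb]
    nth_rewrite 1 [← h1]
    field_simp
  have hd1 : EqOn (deriv fun z : ℂ => z ^ 2 / (z ^ 2 * L z)) (fun z => (a -
      (∫ s : unitInterval, (-2 * (1 - z) / (1 - ((s : ℝ) : ℂ) + z * ((s : ℝ) : ℂ)) -
        (1 - z) ^ 2 * ((s : ℝ) : ℂ) / (1 - ((s : ℝ) : ℂ) + z * ((s : ℝ) : ℂ)) ^ 2) ∂τ) / b) / b)
      {ξ | 0 < ξ.re} := by
    intro z hz
    rw [(hG.eventuallyEq_of_mem (hopen.mem_nhds hz)).deriv_eq]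
    have h1 : HasDerivAt (fun z : ℂ => 1 - a * (1 - z)) a z := by
      simpa using (((hasDerivAt_id z).const_sub 1).const_mul a).const_sub 1
    exact ((h1.sub ((hasDerivAt_integral_sq_div τ hz).div_const b)).div_const b).deriv
  rw [iteratedDeriv_succ, iteratedDeriv_one,
    (hd1.eventuallyEq_of_mem (hopen.mem_nhds hξ)).deriv_eq]
  refine ((((hasDerivAt_integral_deriv_sq_div τ hξ).div_const b).const_sub a).div_const
    b).deriv.trans ?_
  ring

theorem measure_singleton_zero_of_laplace_mul_eq {f : ℝ → ℝ} (hf0 : ∀ x, 0 ≤ f x) {a b : ℝ}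
    (ha : 0 ≤ a) (hb : 0 < b) (τ : Measure unitInterval) [IsFiniteMeasure τ]
    (h : ∀ ξ : ℂ, 0 < ξ.re → (∫ x in Ioi (0 : ℝ), Complex.exp (-ξ * (x : ℂ)) * (f x : ℂ)) *
      (1 - (a : ℂ) * (1 - ξ) -
        (∫ s : unitInterval, (1 - ξ) ^ 2 / (1 - ((s : ℝ) : ℂ) + ξ * ((s : ℝ) : ℂ)) ∂τ) / b) = b) :
    τ {0} = 0 := by
  have key : ∀ u : ℝ, 0 < u → u ^ 2 * τ.real {0} ≤ b * (1 + a * u) := by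
    intro u hu
    have h1 := h (1 + u) (by simp; positivity)
    have hL : ∫ x in Ioi (0 : ℝ), Complex.exp (-(1 + u) * (x : ℂ)) * (f x : ℂ) =
        ((∫ x in Ioi (0 : ℝ), Real.exp (-(1 + u) * x) * f x : ℝ) : ℂ) := by
      rw [← integral_complex_ofReal]
      push_cast
      rfl
    have hK : ∫ s : unitInterval, (1 - (1 + (u : ℂ))) ^ 2 /
        (1 - ((s : ℝ) : ℂ) + (1 + u) * ((s : ℝ) : ℂ)) ∂τ =
        ((∫ s : unitInterval, u ^ 2 / (1 + u * (s : ℝ)) ∂τ : ℝ) : ℂ) := by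
      rw [← integral_complex_ofReal]
      refine integral_congr_ae (.of_forall fun s => ?_)
      push_cast
      ring_nf
    rw [hL, hK] at h1
    have h2 : (∫ x in Ioi (0 : ℝ), Real.exp (-(1 + u) * x) * f x) *
        (1 + a * u - (∫ s : unitInterval, u ^ 2 / (1 + u * (s : ℝ)) ∂τ) / b) = b := by
      have : (1 : ℂ) - a * (1 - (1 + u)) = 1 + a * u := by ring
      rw [this] at h1
      exact_mod_cast h1
    have hℓ : 0 ≤ ∫ x in Ioi (0 : ℝ), Real.exp (-(1 + u) * x) * f x :=
      integral_nonneg fun x => mul_nonneg (Real.exp_pos _).le (hf0 x)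
    have h3 := pos_of_mul_pos_right (h2.symm ▸ hb) hℓ
    rw [sub_pos, div_lt_iff₀ hb] at h3
    have hpos : ∀ s : unitInterval, 0 < 1 + u * (s : ℝ) := fun s => by
      have := mul_nonneg hu.le s.2.1; linarith
    have h4 : u ^ 2 * τ.real {0} ≤ ∫ s : unitInterval, u ^ 2 / (1 + u * (s : ℝ)) ∂τ := by
      have : ∫ s, ({0} : Set unitInterval).indicator (fun _ => u ^ 2) s ∂τ =
          u ^ 2 * τ.real {0} := by
        rw [integral_indicator_const _ (measurableSet_singleton _), smul_eq_mul, mul_comm]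
      rw [← this]
      refine integral_mono ((integrable_const _).indicator (measurableSet_singleton _)) ?_ ?_
      · exact (Continuous.div (by fun_prop) (by fun_prop)
          fun s => (hpos s).ne').integrable_of_hasCompactSupport
            (HasCompactSupport.of_compactSpace _)
      · intro s
        by_cases hs : s = 0
        · simp [hs]
        · simp only [indicator, mem_singleton_iff, hs, if_false]
          have := hpos s
          positivity
    linarith
  by_contra hne
  have ht : 0 < τ.real {0} := ENNReal.toReal_pos hne (measure_ne_top _ _)
  set t := τ.real {0}
  have hu : 1 ≤ b * (1 + a) / t + 1 := by
    have : 0 ≤ b * (1 + a) / t := by positivity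
    linarith
  have h1 := key (b * (1 + a) / t + 1) (by linarith)
  have h2 : (b * (1 + a) / t + 1) * t = b * (1 + a) + t := by field_simp
  set u := b * (1 + a) / t + 1
  have h3 : b * (1 + a * u) ≤ b * (1 + a) * u := by nlinarith
  nlinarith

theorem tendsto_pow_mul_cexp_neg_mul {a : ℂ} (ha : 0 < a.re) (n : ℕ) :
    Tendsto (fun y : ℝ => (y : ℂ) ^ n * Complex.exp (-a * y)) atTop (𝓝 0) := by
  rw [tendsto_zero_iff_norm_tendsto_zero]
  refine (tendsto_rpow_mul_exp_neg_mul_atTop_nhds_zero n a.re ha).congr' ?_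
  filter_upwards [eventually_ge_atTop 0] with y hy
  rw [norm_mul, norm_pow, Complex.norm_real, Real.norm_of_nonneg hy, Complex.norm_exp,
    Real.rpow_natCast]
  simp

theorem integrableOn_sq_mul_cexp_neg_mul {a : ℂ} (ha : 0 < a.re) :
    IntegrableOn (fun y : ℝ => (y : ℂ) ^ 2 * Complex.exp (-a * y)) (Ioi 0) := by
  have h := integrableOn_rpow_mul_exp_neg_mul_rpow (s := 2) (p := 1) (b := a.re) (by norm_num)
    one_pos ha
  refine Integrable.mono' h (by fun_prop) ?_
  filter_upwards [ae_restrict_mem measurableSet_Ioi] with y hy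
  have hy : (0 : ℝ) < y := hy
  rw [norm_mul, norm_pow, Complex.norm_real, Real.norm_of_nonneg hy.le, Complex.norm_exp]
  simp

theorem integral_sq_mul_cexp_neg_mul {a : ℂ} (ha : 0 < a.re) :
    ∫ y : ℝ in Ioi 0, (y : ℂ) ^ 2 * Complex.exp (-a * y) = 2 / a ^ 3 := by
  have ha0 : a ≠ 0 := by rintro rfl; simp at ha
  have hderiv : ∀ y : ℝ, HasDerivAt (fun y : ℝ => -(1 / a * ((y : ℂ) ^ 2 * Complex.exp (-a * y)) +
      2 / a ^ 2 * ((y : ℂ) ^ 1 * Complex.exp (-a * y)) +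
      2 / a ^ 3 * ((y : ℂ) ^ 0 * Complex.exp (-a * y))))
      ((y : ℂ) ^ 2 * Complex.exp (-a * y)) y := by
    intro y
    have hy : HasDerivAt (fun y : ℝ => (y : ℂ)) 1 y := Complex.ofRealCLM.hasDerivAt
    have he : HasDerivAt (fun y : ℝ => Complex.exp (-a * y)) (Complex.exp (-a * y) * (-a * 1)) y :=
      (hy.const_mul (-a)).cexp
    have hp : ∀ n : ℕ, HasDerivAt (fun y : ℝ => (y : ℂ) ^ n * Complex.exp (-a * y))
        ((n * (y : ℂ) ^ (n - 1) * 1) * Complex.exp (-a * y) +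
          (y : ℂ) ^ n * (Complex.exp (-a * y) * (-a * 1))) y := fun n => (hy.fun_pow n).mul he
    convert! ((((hp 2).const_mul (1 / a)).add ((hp 1).const_mul (2 / a ^ 2))).add
      ((hp 0).const_mul (2 / a ^ 3))).neg using 1
    push_cast
    field_simp
    ring
  have ht := ((((tendsto_pow_mul_cexp_neg_mul ha 2).const_mul (1 / a)).add
    ((tendsto_pow_mul_cexp_neg_mul ha 1).const_mul (2 / a ^ 2))).add
    ((tendsto_pow_mul_cexp_neg_mul ha 0).const_mul (2 / a ^ 3))).neg
  rw [integral_Ioi_of_hasDerivAt_of_tendsto (hderiv 0).continuousAt.continuousWithinAt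
    (fun y _ => hderiv y) (integrableOn_sq_mul_cexp_neg_mul ha) ht]
  simp

/-- The kernel `s⁻³ e^{-y (1/s - 1)}`, whose product with `y²` has Laplace transform
`2 / (1 - s + ξ s)³`; it vanishes at `s = 0`. -/
def renewalKernel (y : ℝ) (s : unitInterval) : ℝ :=
  ((s : ℝ)⁻¹) ^ 3 * Real.exp (-(y * ((s : ℝ)⁻¹ - 1)))

theorem renewalKernel_nonneg (y : ℝ) (s : unitInterval) : 0 ≤ renewalKernel y s :=
  mul_nonneg (pow_nonneg (inv_nonneg.2 s.2.1) 3) (Real.exp_pos _).le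

theorem renewalKernel_zero (y : ℝ) : renewalKernel y 0 = 0 := by
  simp [renewalKernel]

theorem measurable_renewalKernel :
    Measurable fun p : ℝ × unitInterval => renewalKernel p.1 p.2 := by
  unfold renewalKernel
  fun_prop

theorem renewalKernel_le {δ y : ℝ} (hδ : 0 < δ) (hy : δ ≤ y) (s : unitInterval) :
    renewalKernel y s ≤ 6 * Real.exp δ / δ ^ 3 := by
  rcases eq_or_ne s 0 with rfl | hs
  · rw [renewalKernel_zero]
    positivity
  have hs0 : (0 : ℝ) < s := lt_of_le_of_ne s.2.1 fun h => hs (Subtype.ext h.symm)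
  have hu : 1 ≤ (s : ℝ)⁻¹ := (one_le_inv₀ hs0).2 s.2.2
  unfold renewalKernel
  generalize (s : ℝ)⁻¹ = u at hu
  have h6 : (δ * u) ^ 3 / 6 ≤ Real.exp (δ * u) := by
    simpa [Nat.factorial] using Real.pow_div_factorial_le_exp (δ * u) (by positivity) 3
  rw [le_div_iff₀ (by positivity)]
  calc u ^ 3 * Real.exp (-(y * (u - 1))) * δ ^ 3
      = 6 * ((δ * u) ^ 3 / 6 * Real.exp (-(y * (u - 1)))) := by ring
    _ ≤ 6 * (Real.exp (δ * u) * Real.exp (-(δ * (u - 1)))) := by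
        gcongr
    _ = 6 * Real.exp δ := by rw [← Real.exp_add]; ring_nf

theorem continuousAt_integral_renewalKernel (τ : Measure unitInterval) [IsFiniteMeasure τ] {y : ℝ}
    (hy : 0 < y) : ContinuousAt (fun y => ∫ s, renewalKernel y s ∂τ) y := by
  refine continuousAt_of_dominated (bound := fun _ => 6 * Real.exp (y / 2) / (y / 2) ^ 3)
    (.of_forall fun x => (measurable_renewalKernel.comp
      (measurable_const.prodMk measurable_id)).aestronglyMeasurable) ?_ (integrable_const _) ?_
  · filter_upwards [lt_mem_nhds (half_lt_self hy)] with x hx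
    refine .of_forall fun s => ?_
    rw [Real.norm_of_nonneg (renewalKernel_nonneg x s)]
    exact renewalKernel_le (half_pos hy) hx.le s
  · refine .of_forall fun s => ?_
    unfold renewalKernel
    fun_prop

theorem integral_renewalKernel_nonneg (τ : Measure unitInterval) (y : ℝ) :
    0 ≤ ∫ s, renewalKernel y s ∂τ := integral_nonneg fun s => renewalKernel_nonneg y s

theorem tendsto_exp_mul_integral_renewalKernel (τ : Measure unitInterval) [IsFiniteMeasure τ]
    {ε : ℝ} (hε : 0 < ε) :
    Tendsto (fun y : ℝ => Real.exp (-ε * y) * (y ^ 2 * ∫ s, renewalKernel y s ∂τ)) atTop (𝓝 0) := by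
  have h0 := (tendsto_rpow_mul_exp_neg_mul_atTop_nhds_zero 2 ε hε).mul_const
    (6 * Real.exp 1 / 1 ^ 3 * τ.real univ)
  rw [zero_mul] at h0
  refine squeeze_zero' (.of_forall fun y => ?_) ?_ h0
  · have := integral_renewalKernel_nonneg τ y
    positivity
  · filter_upwards [eventually_ge_atTop 1] with y hy
    have h1 : ∫ s, renewalKernel y s ∂τ ≤ 6 * Real.exp 1 / 1 ^ 3 * τ.real univ := by
      refine (Real.le_norm_self _).trans
        (norm_integral_le_of_norm_le_const (.of_forall fun s => ?_))
      rw [Real.norm_of_nonneg (renewalKernel_nonneg y s)]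
      exact renewalKernel_le one_pos hy s
    rw [Real.rpow_ofNat, ← mul_assoc, mul_comm (Real.exp _)]
    gcongr

theorem cexp_mul_sq_mul_renewalKernel (ξ : ℂ) (y : ℝ) (s : unitInterval) :
    Complex.exp (-ξ * y) * ((y ^ 2 * renewalKernel y s : ℝ) : ℂ) =
      (((s : ℝ) : ℂ)⁻¹) ^ 3 *
        ((y : ℂ) ^ 2 * Complex.exp (-(ξ + (((s : ℝ) : ℂ)⁻¹ - 1)) * y)) := by
  rw [renewalKernel]
  push_cast
  rw [show -(ξ + (((s : ℝ) : ℂ)⁻¹ - 1)) * y = -ξ * y + -(y * (((s : ℝ) : ℂ)⁻¹ - 1)) by ring,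
    Complex.exp_add]
  ring

theorem re_add_inv_sub_one_pos {ξ : ℂ} (hξ : 0 < ξ.re) {s : unitInterval} (hs : s ≠ 0) :
    0 < (ξ + (((s : ℝ) : ℂ)⁻¹ - 1)).re := by
  have hs0 : (0 : ℝ) < s := lt_of_le_of_ne s.2.1 fun h => hs (Subtype.ext h.symm)
  have hu : 1 ≤ (s : ℝ)⁻¹ := (one_le_inv₀ hs0).2 s.2.2
  rw [← Complex.ofReal_inv]
  simp only [Complex.add_re, Complex.sub_re, Complex.one_re, Complex.ofReal_re]
  linarith

theorem integrableOn_cexp_mul_sq_mul_renewalKernel {ξ : ℂ} (hξ : 0 < ξ.re) (s : unitInterval) :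
    IntegrableOn (fun y : ℝ => Complex.exp (-ξ * y) * ((y ^ 2 * renewalKernel y s : ℝ) : ℂ))
      (Ioi 0) := by
  simp only [cexp_mul_sq_mul_renewalKernel]
  rcases eq_or_ne s 0 with rfl | hs
  · simp
  · exact (integrableOn_sq_mul_cexp_neg_mul (re_add_inv_sub_one_pos hξ hs)).const_mul _

theorem integral_cexp_mul_sq_mul_renewalKernel {ξ : ℂ} (hξ : 0 < ξ.re) {s : unitInterval}
    (hs : s ≠ 0) :
    ∫ y : ℝ in Ioi 0, Complex.exp (-ξ * y) * ((y ^ 2 * renewalKernel y s : ℝ) : ℂ) =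
      2 / (1 - ((s : ℝ) : ℂ) + ξ * ((s : ℝ) : ℂ)) ^ 3 := by
  simp only [cexp_mul_sq_mul_renewalKernel]
  have hs0 : ((s : ℝ) : ℂ) ≠ 0 := by simpa using hs
  have hw := convex_one_ne_zero hξ s
  rw [integral_const_mul, integral_sq_mul_cexp_neg_mul (re_add_inv_sub_one_pos hξ hs)]
  have : ξ + (((s : ℝ) : ℂ)⁻¹ - 1) = (1 - ((s : ℝ) : ℂ) + ξ * ((s : ℝ) : ℂ)) * ((s : ℝ) : ℂ)⁻¹ := by
    field_simp
    ring
  rw [this]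
  field_simp

theorem integral_norm_cexp_mul_sq_mul_renewalKernel_le {ξ : ℂ} (hξ : 0 < ξ.re) (s : unitInterval) :
    ∫ y : ℝ in Ioi 0, ‖Complex.exp (-ξ * y) * ((y ^ 2 * renewalKernel y s : ℝ) : ℂ)‖ ≤
      2 / min 1 ξ.re ^ 3 := by
  have hmin : 0 < min 1 ξ.re := lt_min one_pos hξ
  rcases eq_or_ne s 0 with rfl | hs
  · simp only [renewalKernel_zero]
    simp
    positivity
  have hr : 0 < ((ξ.re : ℝ) : ℂ).re := by simpa
  have h := integral_cexp_mul_sq_mul_renewalKernel hr hs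
  have h2 : ((∫ y : ℝ in Ioi 0, ‖Complex.exp (-ξ * y) *
      ((y ^ 2 * renewalKernel y s : ℝ) : ℂ)‖ : ℝ) : ℂ) =
      ((2 / (1 - (s : ℝ) + ξ.re * (s : ℝ)) ^ 3 : ℝ) : ℂ) := by
    rw [← integral_complex_ofReal]
    rw [show ((2 / (1 - (s : ℝ) + ξ.re * (s : ℝ)) ^ 3 : ℝ) : ℂ) =
      2 / (1 - ((s : ℝ) : ℂ) + (ξ.re : ℂ) * ((s : ℝ) : ℂ)) ^ 3 by push_cast; rfl, ← h]
    refine integral_congr_ae (.of_forall fun y => ?_)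
    beta_reduce
    rw [norm_mul (Complex.exp _), Complex.norm_exp, Complex.norm_real,
      Real.norm_of_nonneg (mul_nonneg (sq_nonneg y) (renewalKernel_nonneg y s))]
    simp
  rw [Complex.ofReal_injective h2]
  have h3 := min_one_re_le_re_convex_one ξ s
  simp only [Complex.add_re, Complex.sub_re, Complex.one_re, Complex.ofReal_re, Complex.mul_re,
    Complex.ofReal_im, mul_zero, sub_zero] at h3
  gcongr

theorem integrable_prod_cexp_mul_sq_mul_renewalKernel (τ : Measure unitInterval) [IsFiniteMeasure τ]
    {ξ : ℂ} (hξ : 0 < ξ.re) :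
    Integrable (Function.uncurry fun (y : ℝ) (s : unitInterval) =>
      Complex.exp (-ξ * y) * ((y ^ 2 * renewalKernel y s : ℝ) : ℂ))
      ((volume.restrict (Ioi 0)).prod τ) := by
  have hm : Measurable (Function.uncurry fun (y : ℝ) (s : unitInterval) =>
      Complex.exp (-ξ * y) * ((y ^ 2 * renewalKernel y s : ℝ) : ℂ)) := by
    have := measurable_renewalKernel
    unfold Function.uncurry
    fun_prop
  refine (integrable_prod_iff' hm.aestronglyMeasurable).2
    ⟨.of_forall fun s => integrableOn_cexp_mul_sq_mul_renewalKernel hξ s, ?_⟩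
  refine Integrable.mono' (integrable_const (2 / min 1 ξ.re ^ 3))
    hm.norm.stronglyMeasurable.integral_prod_left.aestronglyMeasurable (.of_forall fun s => ?_)
  rw [Real.norm_of_nonneg (integral_nonneg fun y => norm_nonneg _)]
  exact integral_norm_cexp_mul_sq_mul_renewalKernel_le hξ s

theorem integral_cexp_mul_sq_mul_renewalKernel_right (τ : Measure unitInterval) (ξ : ℂ) (y : ℝ) :
    ∫ s, Complex.exp (-ξ * y) * ((y ^ 2 * renewalKernel y s : ℝ) : ℂ) ∂τ =
      Complex.exp (-ξ * y) * ((y ^ 2 * ∫ s, renewalKernel y s ∂τ : ℝ) : ℂ) := by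
  rw [integral_const_mul, integral_complex_ofReal, integral_const_mul]

theorem integrableOn_laplace_integral_renewalKernel (τ : Measure unitInterval) [IsFiniteMeasure τ]
    {ξ : ℂ} (hξ : 0 < ξ.re) :
    IntegrableOn (fun y : ℝ => Complex.exp (-ξ * y) *
      ((y ^ 2 * ∫ s, renewalKernel y s ∂τ : ℝ) : ℂ)) (Ioi 0) := by
  simp only [← integral_cexp_mul_sq_mul_renewalKernel_right]
  exact (integrable_prod_cexp_mul_sq_mul_renewalKernel τ hξ).integral_prod_left

theorem laplace_integral_renewalKernel (τ : Measure unitInterval) [IsFiniteMeasure τ]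
    (hτ : τ {0} = 0) {ξ : ℂ} (hξ : 0 < ξ.re) :
    ∫ y : ℝ in Ioi 0, Complex.exp (-ξ * y) * ((y ^ 2 * ∫ s, renewalKernel y s ∂τ : ℝ) : ℂ) =
      ∫ s : unitInterval, 2 / (1 - ((s : ℝ) : ℂ) + ξ * ((s : ℝ) : ℂ)) ^ 3 ∂τ := by
  simp only [← integral_cexp_mul_sq_mul_renewalKernel_right]
  rw [integral_integral_swap (integrable_prod_cexp_mul_sq_mul_renewalKernel τ hξ)]
  refine integral_congr_ae ?_
  filter_upwards [measure_eq_zero_iff_ae_notMem.1 hτ] with s hs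
  exact integral_cexp_mul_sq_mul_renewalKernel hξ hs

theorem integrableOn_Ioo_sq_mul_integral_renewalKernel (τ : Measure unitInterval)
    [IsFiniteMeasure τ] :
    IntegrableOn (fun y : ℝ => y ^ 2 * ∫ s, renewalKernel y s ∂τ) (Ioo 0 1) := by
  have h := ((integrableOn_laplace_integral_renewalKernel τ (ξ := 1) (by simp)).mono_set
    (Ioo_subset_Ioi_self : Ioo (0 : ℝ) 1 ⊆ Ioi 0)).norm.const_mul (Real.exp 1)
  refine h.mono' ?_ ?_
  · exact ContinuousOn.aestronglyMeasurable (fun y hy => ((continuousAt_id.pow 2).mul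
      (continuousAt_integral_renewalKernel τ hy.1)).continuousWithinAt) measurableSet_Ioo
  · filter_upwards [ae_restrict_mem measurableSet_Ioo] with y hy
    rw [norm_mul (Complex.exp _), Complex.norm_exp, Complex.norm_real, ← mul_assoc, ← Real.exp_add]
    refine le_mul_of_one_le_left (norm_nonneg _) (Real.one_le_exp ?_)
    simpa using hy.2.le

/-- existence of `k₋₂` when the tail of `φ` is completely monotone. -/
theorem k_minus_two_exists (φ : Measure ℝ) (hH0 : H0 φ)
    (hCMsmooth : ContDiffOn ℝ (⊤ : ℕ∞) (levyTail φ) (Ioi 0))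
    (hCMsign : ∀ n : ℕ, ∀ x : ℝ, 0 < x →
      0 ≤ (-1 : ℝ) ^ n * iteratedDerivWithin n (levyTail φ) (Ioi 0) x) :
    ∃ k : ℝ → ℝ,
      ContinuousOn k (Ioi (-1)) ∧
      IntegrableOn (fun y : ℝ => y ^ 2 * k (y - 1)) (Ioo 0 1) ∧
      (∀ ε : ℝ, 0 < ε →
        Tendsto (fun y : ℝ => Real.exp (-ε * y) * (y ^ 2 * k (y - 1))) atTop (nhds 0)) ∧
      ∀ ξ : ℂ, 0 < ξ.re →
        IntegrableOn
          (fun y : ℝ => Complex.exp (-ξ * (y : ℂ)) * ((y ^ 2 * k (y - 1) : ℝ) : ℂ)) (Ioi 0) ∧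
        (∫ y in Ioi (0 : ℝ), Complex.exp (-ξ * (y : ℂ)) * ((y ^ 2 * k (y - 1) : ℝ) : ℂ)) =
          iteratedDeriv 2 (fun z : ℂ => z ^ 2 / psiFn φ z) ξ := by
  obtain ⟨D, hD0, hDadd, hDpos, hDint⟩ :=
    exists_differences_gammaIntegral_PhiFn hH0 hCMsmooth hCMsign
  obtain ⟨μ, _, hμ⟩ := exists_measure_forall_integral_pow_eq D hD0 hDadd
  obtain ⟨E, hE0, hEadd, hrec⟩ := exists_completelyMonotone_reciprocal μ (D 0) hμ hDpos
  obtain ⟨τ, _, hτ⟩ := exists_measure_forall_integral_pow_eq E hE0 hEadd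
  have hDle : ∀ n, D 0 n ≤ D 0 0 := by
    intro n
    induction n with
    | zero => exact le_rfl
    | succ n ih => linarith [hDadd 0 n, hD0 1 n]
  set b := D 0 0
  have hb : (b : ℂ) ≠ 0 := by exact_mod_cast hDpos.ne'
  have hmul : ∀ ξ : ℂ, 0 < ξ.re →
      (∫ x in Ioi (0 : ℝ), Complex.exp (-ξ * (x : ℂ)) * (PhiFn φ x : ℂ)) *
      (1 - ((D 0 1 / b : ℝ) : ℂ) * (1 - ξ) - (∫ s : unitInterval,
        (1 - ξ) ^ 2 / (1 - ((s : ℝ) : ℂ) + ξ * ((s : ℝ) : ℂ)) ∂τ) / b) = b := fun ξ hξ => by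
    rw [Complex.ofReal_div]
    exact laplace_mul_eq hH0.measurable_PhiFn (PhiFn_nonneg_s1 φ)
      (fun r hr => hH0.integrableOn_exp_neg_mul_PhiFn hr) hDint hDpos
      (fun n => ⟨hD0 0 n, hDle n⟩) τ hτ hrec hξ
  have hτ0 : τ {0} = 0 := measure_singleton_zero_of_laplace_mul_eq (PhiFn_nonneg_s1 φ)
    (div_nonneg (hD0 0 1) hDpos.le) hDpos τ hmul
  have hk : ∀ y : ℝ, y ^ 2 * (-(1 / b ^ 2) * ∫ s, renewalKernel (y - 1 + 1) s ∂τ) =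
      -(1 / b ^ 2) * (y ^ 2 * ∫ s, renewalKernel y s ∂τ) := fun y => by
    rw [sub_add_cancel, mul_left_comm]
  have hkξ : ∀ (ξ : ℂ) (y : ℝ), Complex.exp (-ξ * (y : ℂ)) *
      ((-(1 / b ^ 2) * (y ^ 2 * ∫ s, renewalKernel y s ∂τ) : ℝ) : ℂ) = -(1 / (b : ℂ) ^ 2) *
        (Complex.exp (-ξ * (y : ℂ)) * ((y ^ 2 * ∫ s, renewalKernel y s ∂τ : ℝ) : ℂ)) :=
    fun ξ y => by
      rw [Complex.ofReal_mul (-(1 / b ^ 2)), mul_left_comm]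
      push_cast
      rfl
  refine ⟨fun x => -(1 / b ^ 2) * ∫ s, renewalKernel (x + 1) s ∂τ, ?_, ?_, ?_, fun ξ hξ => ⟨?_, ?_⟩⟩
  · intro x hx
    have h1 : ContinuousAt (fun x : ℝ => ∫ s, renewalKernel (x + 1) s ∂τ) x :=
      (continuousAt_integral_renewalKernel τ (y := x + 1) (neg_lt_iff_pos_add.1 hx)).comp
        (f := fun x : ℝ => x + 1) (by fun_prop)
    exact (h1.const_mul _).continuousWithinAt
  · simp only [hk]
    exact (integrableOn_Ioo_sq_mul_integral_renewalKernel τ).const_mul _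
  · intro ε hε
    simp only [hk, mul_left_comm (Real.exp _) (-(1 / b ^ 2))]
    have := (tendsto_exp_mul_integral_renewalKernel τ hε).const_mul (-(1 / b ^ 2))
    rwa [mul_zero] at this
  · simp only [hk, hkξ]
    exact (integrableOn_laplace_integral_renewalKernel τ hξ).const_mul _
  · simp only [hk, hkξ]
    rw [integral_const_mul, laplace_integral_renewalKernel τ hτ0 hξ]
    exact (iteratedDeriv_two_inv_eq hb τ hmul hξ).symm
end
end
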